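/- arXiv:0708.3608 — 6 statements merged into one kernel-verified Lean document; each statement's English description precedes it below -/
import Mathlib

section
/- Let f : [0,1] → {1,2,…} ∪ {ω, 𝔠} satisfy Condition (1), satisfy Condition (**) at every y with f(y) ∈ {ω, 𝔠}, and have {y ∈ [0,1] : f(y) = 𝔠} analytic. Then there exists a continuous function F : [0,1] → [0,1] with F(0) = 0, F(1) = 1 such that |F⁻¹(y)| = f(y) for every y ∈ [0,1]. -/
open Set Cardinal

noncomputable section

/-- The section of `F` over `y`: the set of `x ∈ [0,1]` with `F x = y`. -/
def Sec (F : ℝ → ℝ) (y : ℝ) : Set ℝ := {x | x ∈ Set.Icc (0:ℝ) 1 ∧ F x = y}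

/-- Condition (1) for a cardinal-valued function `f` on `[0,1]`. -/
def Cond1 (f : ℝ → Cardinal) : Prop :=
  (∀ y ∈ Set.Ioo (0:ℝ) 1, f y < ℵ₀ →
    ∃ ε > 0, ∀ y₁ ∈ Set.Icc (0:ℝ) 1, ∀ y₂ ∈ Set.Icc (0:ℝ) 1,
      y - ε < y₁ → y₁ < y → y < y₂ → y₂ < y + ε →
      2 * f y ≤ f y₁ + f y₂ ∧
      (f y₁ + f y₂ = 2 * f y →
        (∃ k : ℕ, f y₁ = k ∧ Odd k) ∧ (∃ k : ℕ, f y₂ = k ∧ Odd k))) ∧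
  (f 0 < ℵ₀ → ∃ ε > 0, ∀ y₂ ∈ Set.Icc (0:ℝ) 1, 0 < y₂ → y₂ < ε →
    2 * f 0 ≤ 1 + f y₂) ∧
  (f 1 < ℵ₀ → ∃ ε > 0, ∀ y₁ ∈ Set.Icc (0:ℝ) 1, 1 - ε < y₁ → y₁ < 1 →
    2 * f 1 ≤ f y₁ + 1)

/-- Condition (**) for a cardinal-valued function `f` at the point `y ∈ [0,1]`,
with the convention that the term `f y₁` is replaced by `1` when `y = 0` and
the term `f y₂` is replaced by `1` when `y = 1`. -/
def CondStar (f : ℝ → Cardinal) (y : ℝ) : Prop :=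
  ∀ n : ℕ, ∃ ε > 0,
    (∀ y₁ ∈ Set.Icc (0:ℝ) 1, ∀ y₂ ∈ Set.Icc (0:ℝ) 1,
      y - ε < y₁ → y₁ < y → y < y₂ → y₂ < y + ε → (n : Cardinal) ≤ f y₁ + f y₂) ∧
    (y = 0 → ∀ y₂ ∈ Set.Icc (0:ℝ) 1, 0 < y₂ → y₂ < ε → (n : Cardinal) ≤ 1 + f y₂) ∧
    (y = 1 → ∀ y₁ ∈ Set.Icc (0:ℝ) 1, 1 - ε < y₁ → y₁ < 1 → (n : Cardinal) ≤ f y₁ + 1)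

/-!
The curve `F` is generated by successive subdivision along a binary tree of subintervals `[lo, hi]`
of the range. It starts as one strand rising over `[0,1]`. Whenever a node is deep enough to leave
room for it, one of the strands rising over the node is replaced by a rise, a fall and a second
rise, so that it spawns a new strand. Besides its strand `0` the curve then has over every node of
level `k` exactly `k` further strands, each with a fall; the level grows along a branch of the tree,
possibly forever. Since a turning point counts only once, the number of preimages of `y` is
`1 + left y + right y`, where `left y` and `right y` are the limits of the levels of the nodes
shrinking to `y` from the left and from the right.

Conditions (1) and (**) say that `f y - 1` can be split as `left y + right y` in such a way that
near `y` there is room for the required number `k` of further strands on each side, that is, `f` is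
at least `2 k + 1` there. Only at countably many `y` do the two sides differ, and the tree is cut at
these.

The choice of the strand that spawns the new one does not affect the number of preimages in
`ℕ ∪ {∞}`, and is used to tell `ω` from `𝔠`. Strands are numbered by the finite sequences of natural
numbers. Let `p` be a continuous parametrization of `{y | f y = 𝔠}` by sequences which takes each of
its values uncountably often. A strand branches off the strand of the next shorter sequence if its
sequence can be continued to some `σ` with `p σ` in the node, and off strand `0` otherwise. The
infinitely nested strands over `y` then correspond to the `σ` with `p σ = y`.
-/

open Filter
open scoped Topology

/-! ### Curves generated by binary subdivision -/

/-- The real number with binary expansion `0.e₀e₁e₂…`. -/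
def binaryValue (e : Stream' Bool) : ℝ :=
  Real.ofDigits fun n => if e.get n then (1 : Fin 2) else 0

/-- A binary expansion ending in `111…`. Discarding these expansions makes `binaryValue` a
bijection onto `[0, 1)`. -/
def EventuallyTrue (e : Stream' Bool) : Prop :=
  ∃ n, e.drop n = Stream'.const true

section BinaryExpansion

variable {e : Stream' Bool}

lemma binaryValue_eq_head_add_tail (e : Stream' Bool) :
    binaryValue e = (e.head.toNat + binaryValue e.tail) / 2 := by
  have hsplit := Real.ofDigits_eq_sum_add_ofDigits
    (fun n => if e.get n then (1 : Fin 2) else 0) 1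
  have htail : binaryValue e.tail
      = Real.ofDigits fun n => if e.get (n + 1) then (1 : Fin 2) else 0 := rfl
  rw [binaryValue, hsplit, htail]
  cases hd : e.head <;> change e.get 0 = _ at hd <;>
    simp [Real.ofDigitsTerm, hd] <;> ring

lemma binaryValue_mem_Icc (e : Stream' Bool) : binaryValue e ∈ Icc (0 : ℝ) 1 :=
  ⟨Real.ofDigits_nonneg _, Real.ofDigits_le_one _⟩

lemma eventuallyTrue_tail_iff : EventuallyTrue e.tail ↔ EventuallyTrue e := by
  constructor
  · rintro ⟨n, hn⟩
    exact ⟨n + 1, hn⟩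
  · rintro ⟨n, hn⟩
    exact ⟨n, by rw [← Stream'.tail_drop, hn, Stream'.tail_const]⟩

lemma eq_const_true_of_binaryValue_eq_one (he : binaryValue e = 1) : e = Stream'.const true := by
  have htail (e : Stream' Bool) (he : binaryValue e = 1) :
      e.head = true ∧ binaryValue e.tail = 1 := by
    have := binaryValue_eq_head_add_tail e
    have := (binaryValue_mem_Icc e.tail).2
    cases hd : e.head <;> simp only [hd, Bool.toNat_false, Bool.toNat_true] at * <;>
      norm_num at * <;> linarith
  refine Stream'.ext fun n => ?_
  induction n generalizing e with
  | zero => exact (htail e he).1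
  | succ _ ih => exact ih (htail e he).2

lemma binaryValue_lt_one (he : ¬ EventuallyTrue e) : binaryValue e < 1 :=
  (binaryValue_mem_Icc e).2.lt_of_ne fun h =>
    he ⟨0, eq_const_true_of_binaryValue_eq_one h⟩

lemma head_eq_decide_half_le (he : ¬ EventuallyTrue e) :
    e.head = decide (1 / 2 ≤ binaryValue e) := by
  have hval := binaryValue_eq_head_add_tail e
  have hlt := binaryValue_lt_one (eventuallyTrue_tail_iff.not.2 he)
  have hnonneg := (binaryValue_mem_Icc e.tail).1
  cases hd : e.head <;> rw [hd] at hval <;> norm_num at hval ⊢ <;> linarith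

lemma injOn_binaryValue : InjOn binaryValue {e | ¬ EventuallyTrue e} := by
  intro e he e' he' heq
  refine Stream'.ext fun n => ?_
  have hhead {e e' : Stream' Bool} (he : ¬ EventuallyTrue e) (he' : ¬ EventuallyTrue e')
      (heq : binaryValue e = binaryValue e') : e.head = e'.head := by
    rw [head_eq_decide_half_le he, head_eq_decide_half_le he', heq]
  induction n generalizing e e' with
  | zero => exact hhead he he' heq
  | succ _ ih =>
    refine ih (eventuallyTrue_tail_iff.not.2 he) (eventuallyTrue_tail_iff.not.2 he') ?_
    have := binaryValue_eq_head_add_tail e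
    rw [heq, binaryValue_eq_head_add_tail e', hhead he he' heq] at this
    linarith

/-- The binary expansion of `t ∈ [0, 1)`, read off the orbit of `t` under the doubling map. -/
def binaryDigits (t : ℝ) : Stream' Bool :=
  fun n => decide (1 / 2 ≤ (fun x : ℝ => Int.fract (2 * x))^[n] t)

lemma fract_two_mul {t : ℝ} (ht : t ∈ Ico (0 : ℝ) 1) :
    Int.fract (2 * t) = 2 * t - ((binaryDigits t).head.toNat : ℝ) := by
  obtain ⟨h0, h1⟩ := ht
  have hhead : (binaryDigits t).head = decide (1 / 2 ≤ t) := rfl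
  rw [hhead, Int.fract_eq_iff]
  by_cases h : 1 / 2 ≤ t
  · simp only [h, decide_true, Bool.toNat_true]
    exact ⟨by push_cast; linarith, by push_cast; linarith, 1, by push_cast; ring⟩
  · simp only [h, decide_false, Bool.toNat_false]
    exact ⟨by push_cast; linarith, by push_cast; linarith, 0, by push_cast; ring⟩

lemma abs_binaryValue_binaryDigits_sub_le {t : ℝ} (ht : t ∈ Ico (0 : ℝ) 1) (n : ℕ) :
    |binaryValue (binaryDigits t) - t| ≤ (1 / 2) ^ n := by
  induction n generalizing t with
  | zero =>
    have := binaryValue_mem_Icc (binaryDigits t)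
    rw [pow_zero, abs_le]
    constructor <;> linarith [this.1, this.2, ht.1, ht.2]
  | succ n ih =>
    have ih := ih (t := Int.fract (2 * t)) ⟨Int.fract_nonneg _, Int.fract_lt_one _⟩
    have htail : (binaryDigits t).tail = binaryDigits (Int.fract (2 * t)) := rfl
    have hhalf : binaryValue (binaryDigits t) - t
        = (binaryValue (binaryDigits (Int.fract (2 * t))) - Int.fract (2 * t)) / 2 := by
      rw [binaryValue_eq_head_add_tail, htail]
      linear_combination (fract_two_mul ht) / 2
    rw [hhalf, abs_div, abs_two, pow_succ]
    linarith

lemma binaryValue_binaryDigits {t : ℝ} (ht : t ∈ Ico (0 : ℝ) 1) :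
    binaryValue (binaryDigits t) = t := by
  have hlim := tendsto_pow_atTop_nhds_zero_of_lt_one (r := (1 / 2 : ℝ)) (by norm_num) (by norm_num)
  have := ge_of_tendsto' hlim (abs_binaryValue_binaryDigits_sub_le ht)
  exact sub_eq_zero.1 (abs_nonpos_iff.1 this)

lemma not_eventuallyTrue_binaryDigits {t : ℝ} (ht : t ∈ Ico (0 : ℝ) 1) :
    ¬ EventuallyTrue (binaryDigits t) := by
  rintro ⟨n, hn⟩
  induction n generalizing t with
  | zero =>
    have hval := binaryValue_binaryDigits ht
    have hone := binaryValue_eq_head_add_tail (Stream'.const true)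
    rw [show (binaryDigits t) = Stream'.const true from hn] at hval
    rw [Stream'.tail_const, hval, show (Stream'.const true).head = true from rfl,
      Bool.toNat_true] at hone
    push_cast at hone
    linarith [ht.2]
  | succ n ih => exact ih (t := Int.fract (2 * t)) ⟨Int.fract_nonneg _, Int.fract_lt_one _⟩ hn

lemma countable_setOf_eventuallyTrue : {e : Stream' Bool | EventuallyTrue e}.Countable := by
  refine (countable_range fun l : List Bool => l ++ₛ Stream'.const true).mono ?_
  rintro e ⟨n, hn⟩
  exact ⟨e.take n, by rw [← hn]; exact Stream'.append_take_drop n e⟩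

end BinaryExpansion

/-- A self-similar recipe for a family of continuous curves on `[0, 1]`: the curve attached to the
state `q` consists of the curves of its two children, traversed one after the other in half the
time each. It runs from `source q` to `target q` inside `[lower q, upper q]`; `depth` measures how
fine the subdivision is. -/
structure CurveSystem (Q : Type*) where
  child : Bool → Q → Q
  source : Q → ℝ
  target : Q → ℝ
  lower : Q → ℝ
  upper : Q → ℝ
  depth : Q → ℕ
  source_child_false : ∀ q, source (child false q) = source q
  target_child_true : ∀ q, target (child true q) = target q
  target_child_false : ∀ q, target (child false q) = source (child true q)
  source_mem : ∀ q, source q ∈ Icc (lower q) (upper q)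
  target_mem : ∀ q, target q ∈ Icc (lower q) (upper q)
  Icc_child_subset : ∀ b q,
    Icc (lower (child b q)) (upper (child b q)) ⊆ Icc (lower q) (upper q)
  depth_lt_depth_child : ∀ b q, depth q < depth (child b q)
  exists_forall_upper_sub_lower_lt :
    ∀ ε > 0, ∃ N, ∀ q, N ≤ depth q → upper q - lower q < ε

namespace CurveSystem

variable {Q : Type*} (C : CurveSystem Q)

/-- The interval containing the whole curve of the state `q`. -/
def hull (q : Q) : Set ℝ := Icc (C.lower q) (C.upper q)

/-- The `n`-th piecewise linear approximation of the curve of the state `q`. -/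
def approx : ℕ → Q → ℝ → ℝ
  | 0, q, t => C.source q + t * (C.target q - C.source q)
  | n + 1, q, t =>
    if t ≤ 1 / 2 then approx n (C.child false q) (2 * t) else approx n (C.child true q) (2 * t - 1)

lemma hull_child_subset (b : Bool) (q : Q) : C.hull (C.child b q) ⊆ C.hull q :=
  C.Icc_child_subset b q

lemma approx_zero (n : ℕ) (q : Q) : C.approx n q 0 = C.source q := by
  induction n generalizing q with
  | zero => simp [approx]
  | succ n ih => simp [approx, ih, C.source_child_false]

lemma approx_one (n : ℕ) (q : Q) : C.approx n q 1 = C.target q := by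
  induction n generalizing q with
  | zero => simp [approx]
  | succ n ih =>
    rw [approx, if_neg (by norm_num), show (2 * 1 - 1 : ℝ) = 1 by norm_num, ih,
      C.target_child_true]

lemma continuous_approx (n : ℕ) (q : Q) : Continuous (C.approx n q) := by
  induction n generalizing q with
  | zero =>
    change Continuous fun t => C.source q + t * (C.target q - C.source q)
    fun_prop
  | succ n ih =>
    refine Continuous.if_le ((ih _).comp (by fun_prop)) ((ih _).comp (by fun_prop))
      continuous_id continuous_const ?_
    rintro t (rfl : t = 1 / 2)
    norm_num [approx_zero, approx_one, C.target_child_false]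

lemma approx_mem_hull (n : ℕ) (q : Q) {t : ℝ} (ht : t ∈ Icc (0 : ℝ) 1) :
    C.approx n q t ∈ C.hull q := by
  induction n generalizing q t with
  | zero =>
    have hconv := (convex_Icc (C.lower q) (C.upper q)).add_smul_sub_mem
      (C.source_mem q) (C.target_mem q) ht
    rwa [smul_eq_mul] at hconv
  | succ n ih =>
    rw [approx]
    split_ifs with h
    · exact C.hull_child_subset _ _ (ih _ ⟨by linarith [ht.1], by linarith⟩)
    · exact C.hull_child_subset _ _ (ih _ ⟨by linarith, by linarith [ht.2]⟩)

lemma abs_sub_lt_of_mem_hull {q : Q} {x y ε : ℝ} (hx : x ∈ C.hull q) (hy : y ∈ C.hull q)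
    (hε : C.upper q - C.lower q < ε) : |x - y| < ε :=
  (abs_sub_le_of_le_of_le hx.1 hx.2 hy.1 hy.2).trans_lt hε

lemma abs_approx_add_sub_approx_lt {ε : ℝ} {N : ℕ}
    (hN : ∀ q, N ≤ C.depth q → C.upper q - C.lower q < ε) (n m : ℕ) (q : Q) {t : ℝ}
    (ht : t ∈ Icc (0 : ℝ) 1) (hn : N ≤ C.depth q + n) :
    |C.approx (n + m) q t - C.approx n q t| < ε := by
  induction n generalizing q t with
  | zero =>
    exact C.abs_sub_lt_of_mem_hull (C.approx_mem_hull _ q ht) (C.approx_mem_hull _ q ht) (hN q hn)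
  | succ n ih =>
    have hfalse := C.depth_lt_depth_child false q
    have htrue := C.depth_lt_depth_child true q
    rw [Nat.add_right_comm, approx, approx]
    split_ifs with h
    · exact ih _ ⟨by linarith [ht.1], by linarith⟩ (by omega)
    · exact ih _ ⟨by linarith, by linarith [ht.2]⟩ (by omega)

/-- The curve of the state `q`, the uniform limit on `[0, 1]` of its approximations. -/
def curve (q : Q) (t : ℝ) : ℝ := limUnder atTop fun n => C.approx n q t

lemma tendsto_approx (q : Q) {t : ℝ} (ht : t ∈ Icc (0 : ℝ) 1) :
    Tendsto (fun n => C.approx n q t) atTop (𝓝 (C.curve q t)) := by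
  refine CauchySeq.tendsto_limUnder (Metric.cauchySeq_iff'.2 fun ε hε => ?_)
  obtain ⟨N, hN⟩ := C.exists_forall_upper_sub_lower_lt ε hε
  refine ⟨N, fun n hn => ?_⟩
  obtain ⟨m, rfl⟩ := Nat.exists_eq_add_of_le hn
  exact C.abs_approx_add_sub_approx_lt hN N m q ht (by omega)

lemma tendstoUniformlyOn_approx (q : Q) :
    TendstoUniformlyOn (fun n => C.approx n q) (C.curve q) atTop (Icc 0 1) := by
  rw [Metric.tendstoUniformlyOn_iff]
  intro ε hε
  obtain ⟨N, hN⟩ := C.exists_forall_upper_sub_lower_lt (ε / 2) (by linarith)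
  filter_upwards [eventually_ge_atTop N] with n hn t ht
  have hlim := (((C.tendsto_approx q ht).comp
    (tendsto_add_atTop_nat n)).sub_const (C.approx n q t)).abs
  have hle := le_of_tendsto' hlim fun m => by
    rw [Function.comp_apply, add_comm m n]
    exact (C.abs_approx_add_sub_approx_lt hN n m q ht (by omega)).le
  rw [Real.dist_eq]
  linarith

lemma continuousOn_curve (q : Q) : ContinuousOn (C.curve q) (Icc 0 1) :=
  (C.tendstoUniformlyOn_approx q).continuousOn
    (Frequently.of_forall fun n => (C.continuous_approx n q).continuousOn)

lemma curve_zero (q : Q) : C.curve q 0 = C.source q :=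
  tendsto_nhds_unique (C.tendsto_approx q (by simp)) (by simp [approx_zero])

lemma curve_one (q : Q) : C.curve q 1 = C.target q :=
  tendsto_nhds_unique (C.tendsto_approx q (by simp)) (by simp [approx_one])

lemma curve_mem_hull (q : Q) {t : ℝ} (ht : t ∈ Icc (0 : ℝ) 1) : C.curve q t ∈ C.hull q :=
  isClosed_Icc.mem_of_tendsto (C.tendsto_approx q ht)
    (Eventually.of_forall fun n => C.approx_mem_hull n q ht)

lemma approx_succ_half_add (b : Bool) (n : ℕ) (q : Q) {t : ℝ} (ht : t ∈ Icc (0 : ℝ) 1) :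
    C.approx (n + 1) q ((b.toNat + t) / 2) = C.approx n (C.child b q) t := by
  cases b
  · have : (((false.toNat : ℕ) : ℝ) + t) / 2 ≤ 1 / 2 := by
      simp only [Bool.toNat_false, Nat.cast_zero]; linarith [ht.2]
    rw [approx, if_pos this, Bool.toNat_false]
    congr 1
    push_cast
    ring
  rcases ht.1.eq_or_lt with rfl | hpos
  · rw [approx, if_pos (by norm_num), approx_zero, ← C.target_child_false]
    norm_num [approx_one]
  · have : ¬ (((true.toNat : ℕ) : ℝ) + t) / 2 ≤ 1 / 2 := by
      simp only [Bool.toNat_true, Nat.cast_one]; linarith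
    rw [approx, if_neg this, Bool.toNat_true]
    congr 1
    push_cast
    ring

lemma curve_half_add (b : Bool) (q : Q) {t : ℝ} (ht : t ∈ Icc (0 : ℝ) 1) :
    C.curve q ((b.toNat + t) / 2) = C.curve (C.child b q) t := by
  have hmem : (b.toNat + t) / 2 ∈ Icc (0 : ℝ) 1 := by
    have : (b.toNat : ℝ) ≤ 1 := mod_cast b.toNat_le
    exact ⟨by linarith [ht.1, Nat.cast_nonneg (α := ℝ) b.toNat], by linarith [ht.2]⟩
  have hlim := (C.tendsto_approx q hmem).comp (tendsto_add_atTop_nat 1)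
  exact tendsto_nhds_unique hlim ((C.tendsto_approx (C.child b q) ht).congr fun n =>
    (C.approx_succ_half_add b n q ht).symm)

/-- The state reached from `q` after the first `n` binary choices of `e`. -/
def state (q : Q) (e : Stream' Bool) : ℕ → Q
  | 0 => q
  | n + 1 => state (C.child e.head q) e.tail n

/-- The binary expansions along which the curve of `q` approaches the value `y`. -/
def itineraries (q : Q) (y : ℝ) : Set (Stream' Bool) :=
  {e | ∀ n, y ∈ C.hull (C.state q e n)}

/-- The itineraries not ending in `111…`; they correspond bijectively to the points of `[0, 1)`
at which the curve of `q` takes the value `y`. -/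
def properItineraries (q : Q) (y : ℝ) : Set (Stream' Bool) :=
  {e | e ∈ C.itineraries q y ∧ ¬ EventuallyTrue e}

variable {q : Q} {y : ℝ} {e : Stream' Bool}

lemma mem_itineraries_iff_tail :
    e ∈ C.itineraries q y ↔ e.tail ∈ C.itineraries (C.child e.head q) y := by
  refine ⟨fun h n => h (n + 1), fun h n => ?_⟩
  cases n with
  | zero => exact C.hull_child_subset _ _ (h 0)
  | succ n => exact h n

lemma mem_properItineraries_iff_tail :
    e ∈ C.properItineraries q y ↔ e.tail ∈ C.properItineraries (C.child e.head q) y :=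
  and_congr C.mem_itineraries_iff_tail eventuallyTrue_tail_iff.symm.not

lemma strictMono_depth_state (q : Q) (e : Stream' Bool) :
    StrictMono fun n => C.depth (C.state q e n) := by
  refine strictMono_nat_of_lt_succ fun n => ?_
  induction n generalizing q e with
  | zero => exact C.depth_lt_depth_child e.head q
  | succ _ ih => exact ih (C.child e.head q) e.tail

lemma curve_binaryValue_mem_hull_state (q : Q) (e : Stream' Bool) (n : ℕ) :
    C.curve q (binaryValue e) ∈ C.hull (C.state q e n) := by
  induction n generalizing q e with
  | zero => exact C.curve_mem_hull q (binaryValue_mem_Icc e)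
  | succ n ih =>
    rw [binaryValue_eq_head_add_tail, C.curve_half_add _ _ (binaryValue_mem_Icc e.tail)]
    exact ih _ _

lemma curve_binaryValue_eq_iff : C.curve q (binaryValue e) = y ↔ e ∈ C.itineraries q y := by
  constructor
  · rintro rfl n
    exact C.curve_binaryValue_mem_hull_state q e n
  · intro he
    refine eq_of_abs_sub_le_all fun ε hε => ?_
    obtain ⟨N, hN⟩ := C.exists_forall_upper_sub_lower_lt ε hε
    exact (C.abs_sub_lt_of_mem_hull (C.curve_binaryValue_mem_hull_state q e N) (he N)
      (hN _ (C.strictMono_depth_state q e).le_apply)).le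

lemma binaryValue_image_properItineraries (q : Q) (y : ℝ) :
    binaryValue '' C.properItineraries q y = {t | t ∈ Ico (0 : ℝ) 1 ∧ C.curve q t = y} := by
  ext t
  constructor
  · rintro ⟨e, ⟨he, hproper⟩, rfl⟩
    exact ⟨⟨(binaryValue_mem_Icc e).1, binaryValue_lt_one hproper⟩,
      C.curve_binaryValue_eq_iff.2 he⟩
  · rintro ⟨ht, hty⟩
    refine ⟨binaryDigits t, ⟨C.curve_binaryValue_eq_iff.1 ?_, not_eventuallyTrue_binaryDigits ht⟩,
      binaryValue_binaryDigits ht⟩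
    rwa [binaryValue_binaryDigits ht]

lemma injOn_binaryValue_properItineraries (q : Q) (y : ℝ) :
    InjOn binaryValue (C.properItineraries q y) :=
  injOn_binaryValue.mono fun _ he => he.2

/-- The number of times `t ∈ [0, 1)` at which the curve of `q` takes the value `y`. -/
def count (q : Q) (y : ℝ) : ℕ∞ := (C.properItineraries q y).encard

lemma encard_setOf_mem_Icc_curve_eq (q : Q) (y : ℝ) :
    {t | t ∈ Icc (0 : ℝ) 1 ∧ C.curve q t = y}.encard
      = C.count q y + if y = C.target q then 1 else 0 := by
  have hcount : C.count q y = {t | t ∈ Ico (0 : ℝ) 1 ∧ C.curve q t = y}.encard := by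
    rw [count, ← C.binaryValue_image_properItineraries,
      (C.injOn_binaryValue_properItineraries q y).encard_image]
  rw [hcount]
  split_ifs with hy
  · rw [← encard_insert_of_notMem (a := 1) (by simp)]
    congr 1
    ext t
    rw [mem_insert_iff, mem_ofPred_eq, mem_ofPred_eq, ← Ico_union_right zero_le_one,
      mem_union, mem_singleton_iff]
    have : C.curve q 1 = y := by rw [C.curve_one, hy]
    grind
  · rw [add_zero]
    congr 1
    ext t
    have : C.curve q 1 ≠ y := by rw [C.curve_one]; exact Ne.symm hy
    rw [mem_ofPred_eq, mem_ofPred_eq, ← Ico_union_right zero_le_one,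
      mem_union, mem_singleton_iff]
    grind

lemma properItineraries_eq_union (q : Q) (y : ℝ) :
    C.properItineraries q y
      = Stream'.cons false '' C.properItineraries (C.child false q) y
        ∪ Stream'.cons true '' C.properItineraries (C.child true q) y := by
  ext e
  constructor
  · intro he
    have htail := C.mem_properItineraries_iff_tail.1 he
    have heta := Stream'.eta e
    cases hd : e.head <;> rw [hd] at htail heta
    exacts [Or.inl ⟨_, htail, heta⟩, Or.inr ⟨_, htail, heta⟩]
  · rintro (⟨e, he, rfl⟩ | ⟨e, he, rfl⟩) <;> exact C.mem_properItineraries_iff_tail.2 he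

lemma count_eq_add (q : Q) (y : ℝ) :
    C.count q y = C.count (C.child false q) y + C.count (C.child true q) y := by
  have hdisj : Disjoint (Stream'.cons false '' C.properItineraries (C.child false q) y)
      (Stream'.cons true '' C.properItineraries (C.child true q) y) := by
    rw [disjoint_left]
    rintro _ ⟨e, -, rfl⟩ ⟨e', -, heq⟩
    exact Bool.noConfusion (congrArg Stream'.head heq)
  rw [count, properItineraries_eq_union, encard_union_eq hdisj,
    (Stream'.cons_injective_right false).encard_image,
    (Stream'.cons_injective_right true).encard_image]
  rfl

lemma count_eq_zero (hy : y ∉ C.hull q) : C.count q y = 0 :=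
  encard_eq_zero.2 (eq_empty_of_forall_notMem fun _ he => hy (he.1 0))

lemma one_le_count (hy : y ∈ uIcc (C.source q) (C.target q)) (hne : y ≠ C.target q) :
    1 ≤ C.count q y := by
  have hivt := intermediate_value_uIcc (a := (0 : ℝ)) (b := 1) (f := C.curve q)
    (by rw [uIcc_of_le zero_le_one]; exact C.continuousOn_curve q)
  rw [C.curve_zero, C.curve_one, uIcc_of_le zero_le_one] at hivt
  obtain ⟨t, ⟨h0, h1⟩, rfl⟩ := hivt hy
  have hlt : t < 1 := h1.lt_of_ne fun h => hne (by rw [h, C.curve_one])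
  have hmem : t ∈ binaryValue '' C.properItineraries q (C.curve q t) := by
    rw [C.binaryValue_image_properItineraries]
    exact ⟨⟨h0, hlt⟩, rfl⟩
  exact one_le_encard_iff_nonempty.2 (image_nonempty.1 ⟨t, hmem⟩)

/-- The successor of a state under a choice of branch at each state. -/
def follow (θ : Q → Bool) (q : Q) : Q := C.child (θ q) q

/-- The sequence of branches chosen by `θ`, starting at `q`. -/
def path (θ : Q → Bool) (q : Q) : Stream' Bool := fun n => θ ((C.follow θ)^[n] q)

lemma state_path (θ : Q → Bool) (q : Q) (n : ℕ) :
    C.state q (C.path θ q) n = (C.follow θ)^[n] q := by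
  induction n generalizing q with
  | zero => rfl
  | succ _ ih => exact ih (C.follow θ q)

lemma path_mem_itineraries {θ : Q → Bool} (hy : y ∈ C.hull q)
    (hθ : ∀ q, y ∈ C.hull q → y ∈ C.hull (C.child (θ q) q)) : C.path θ q ∈ C.itineraries q y := by
  intro n
  rw [state_path]
  induction n with
  | zero => exact hy
  | succ n ih =>
    rw [Function.iterate_succ_apply']
    exact hθ _ ih

lemma properItineraries_subset_singleton_path {θ : Q → Bool} {X : Set Q}
    (hX : ∀ q ∈ X, y ∈ C.hull q → C.count (C.child (!θ q) q) y = 0 ∧ C.child (θ q) q ∈ X)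
    (hq : q ∈ X) : C.properItineraries q y ⊆ {C.path θ q} := by
  have hhead {q : Q} {e : Stream' Bool} (hq : q ∈ X) (he : e ∈ C.properItineraries q y) :
      e.head = θ q := by
    by_contra hne
    have hempty := encard_eq_zero.1 (hX q hq (he.1 0)).1
    rw [C.mem_properItineraries_iff_tail, Bool.eq_not_of_ne hne, hempty] at he
    exact he
  refine fun e he => Stream'.ext fun n => ?_
  induction n generalizing q e with
  | zero => exact hhead hq he
  | succ _ ih =>
    refine ih (hX q hq (he.1 0)).2 e.tail ?_
    have := C.mem_properItineraries_iff_tail.1 he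
    rwa [hhead hq he] at this

lemma count_le_one {θ : Q → Bool} {X : Set Q}
    (hX : ∀ q ∈ X, y ∈ C.hull q → C.count (C.child (!θ q) q) y = 0 ∧ C.child (θ q) q ∈ X)
    (hq : q ∈ X) : C.count q y ≤ 1 :=
  (encard_le_encard (C.properItineraries_subset_singleton_path hX hq)).trans_eq
    (encard_singleton _)

lemma count_eq_zero_of_forall_child_true {X : Set Q}
    (hX : ∀ q ∈ X, y ∈ C.hull q → y ∉ C.hull (C.child false q) ∧ C.child true q ∈ X)
    (hq : q ∈ X) : C.count q y = 0 := by
  refine encard_eq_zero.2 (eq_empty_of_forall_notMem fun e he => he.2 ⟨0, ?_⟩)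
  exact C.properItineraries_subset_singleton_path (θ := fun _ => true)
    (fun q hq hy => (hX q hq hy).imp_left C.count_eq_zero) hq he

lemma countable_setOf_itineraries_get_ne_path {θ : Q → Bool} {X : Set Q}
    (hX : ∀ q ∈ X, (C.itineraries (C.child (!θ q) q) y).Countable ∧ C.child (θ q) q ∈ X)
    (hq : q ∈ X) (n : ℕ) :
    {e | e ∈ C.itineraries q y ∧ e.get n ≠ (C.path θ q).get n}.Countable := by
  have hoff {q : Q} (hq : q ∈ X) : {e | e ∈ C.itineraries q y ∧ e.head ≠ θ q}.Countable := by
    refine ((hX q hq).1.image (Stream'.cons (!θ q))).mono ?_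
    rintro e ⟨he, hne⟩
    have htail := C.mem_itineraries_iff_tail.1 he
    rw [Bool.eq_not_of_ne hne] at htail
    exact ⟨e.tail, htail, by rw [← Bool.eq_not_of_ne hne, Stream'.eta]⟩
  induction n generalizing q with
  | zero => exact hoff hq
  | succ n ih =>
    refine ((hoff hq).union ((ih (hX q hq).2).image (Stream'.cons (θ q)))).mono ?_
    rintro e ⟨he, hne⟩
    by_cases hhead : e.head = θ q
    · have htail := C.mem_itineraries_iff_tail.1 he
      rw [hhead] at htail
      exact Or.inr ⟨e.tail, ⟨htail, hne⟩, by rw [← hhead, Stream'.eta]⟩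
    · exact Or.inl ⟨he, hhead⟩

lemma countable_itineraries {X : Set Q}
    (hX : ∀ q ∈ X, ∃ b, (C.itineraries (C.child (!b) q) y).Countable ∧ C.child b q ∈ X)
    (hq : q ∈ X) : (C.itineraries q y).Countable := by
  choose! θ hθ using hX
  have hoff := countable_iUnion fun n => C.countable_setOf_itineraries_get_ne_path hθ hq n
  refine (hoff.insert (C.path θ q)).mono fun e he => ?_
  by_cases h : e = C.path θ q
  · exact Or.inl h
  · obtain ⟨n, hn⟩ := not_forall.1 fun hall => h (Stream'.ext hall)
    exact Or.inr (mem_iUnion.2 ⟨n, he, hn⟩)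

lemma countable_itineraries_of_forall_child (h : ∀ b, (C.itineraries (C.child b q) y).Countable) :
    (C.itineraries q y).Countable := by
  refine (countable_iUnion fun b => (h b).image (Stream'.cons b)).mono fun e he => ?_
  exact mem_iUnion.2 ⟨e.head, e.tail, C.mem_itineraries_iff_tail.1 he, Stream'.eta e⟩

lemma countable_itineraries_of_countable_properItineraries
    (h : (C.properItineraries q y).Countable) : (C.itineraries q y).Countable := by
  refine (h.union countable_setOf_eventuallyTrue).mono fun e he => ?_
  by_cases htrue : EventuallyTrue e
  exacts [Or.inr htrue, Or.inl ⟨he, htrue⟩]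

lemma countable_itineraries_of_count_ne_top (h : C.count q y ≠ ⊤) :
    (C.itineraries q y).Countable :=
  C.countable_itineraries_of_countable_properItineraries (encard_ne_top_iff.1 h).countable

lemma not_countable_setOf_mem_Icc_curve_eq (h : ¬ (C.itineraries q y).Countable) :
    ¬ {t | t ∈ Icc (0 : ℝ) 1 ∧ C.curve q t = y}.Countable := by
  refine fun hfibre => h ?_
  have himage : (binaryValue '' C.properItineraries q y).Countable :=
    hfibre.mono (by
      rw [binaryValue_image_properItineraries]
      exact fun t ht => ⟨Ico_subset_Icc_self ht.1, ht.2⟩)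
  exact C.countable_itineraries_of_countable_properItineraries
    (countable_of_injective_of_countable_image (C.injOn_binaryValue_properItineraries q y) himage)

lemma countable_setOf_mem_Icc_curve_eq (h : (C.itineraries q y).Countable) :
    {t | t ∈ Icc (0 : ℝ) 1 ∧ C.curve q t = y}.Countable := by
  have himage : {t | t ∈ Ico (0 : ℝ) 1 ∧ C.curve q t = y}.Countable := by
    rw [← binaryValue_image_properItineraries]
    exact (h.mono fun _ he => he.1).image _
  refine (himage.insert 1).mono fun t ht => ?_
  rcases ht.1.2.eq_or_lt with h1 | hlt
  exacts [Or.inl h1, Or.inr ⟨⟨ht.1.1, hlt⟩, ht.2⟩]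

end CurveSystem

/-! ### Curves with strands branching over a tree of intervals -/

/-- A binary tree of subintervals `[lo s, hi s]` of `[0, 1]` with shrinking widths. A node is the
list of turns leading to it, the latest turn first; `false` turns to the part left of `mid s`. -/
structure IntervalTree where
  lo : List Bool → ℝ
  hi : List Bool → ℝ
  mid : List Bool → ℝ
  lo_nil : lo [] = 0
  hi_nil : hi [] = 1
  lo_false : ∀ s, lo (false :: s) = lo s
  hi_false : ∀ s, hi (false :: s) = mid s
  lo_true : ∀ s, lo (true :: s) = mid s
  hi_true : ∀ s, hi (true :: s) = hi s
  lo_lt_mid : ∀ s, lo s < mid s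
  mid_lt_hi : ∀ s, mid s < hi s
  exists_forall_hi_sub_lo_lt :
    ∀ ε > 0, ∃ N, ∀ s : List Bool, N ≤ s.length → hi s - lo s < ε

/-- An interval tree together with the data steering the construction of the curve. A strand rising
over a node `s` of level `k` is joined by a new strand number `k + 1` if `allowed (k + 1) s`; the
new strand then branches off the strand number `host k s`. -/
structure ExcursionTree extends IntervalTree where
  allowed : ℕ → List Bool → Prop
  host : ℕ → List Bool → ℕ
  host_le : ∀ k s, host k s ≤ k

/-- The states of the curve: strand `j` rising over the node `s`; the same once no more strand
branches off at `s`; strand `j` rising over `s` and falling back; falling over `s`. -/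
inductive CurveState where
  | rise (j : ℕ) (s : List Bool)
  | climb (j : ℕ) (s : List Bool)
  | excursion (j : ℕ) (s : List Bool)
  | fall (s : List Bool)

namespace IntervalTree

variable (T : IntervalTree) {s : List Bool} {y : ℝ}

lemma lo_lt_hi (s : List Bool) : T.lo s < T.hi s := (T.lo_lt_mid s).trans (T.mid_lt_hi s)

lemma Icc_cons_subset (b : Bool) (s : List Bool) :
    Icc (T.lo (b :: s)) (T.hi (b :: s)) ⊆ Icc (T.lo s) (T.hi s) := by
  cases b
  · rw [T.lo_false, T.hi_false]
    exact Icc_subset_Icc_right (T.mid_lt_hi s).le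
  · rw [T.lo_true, T.hi_true]
    exact Icc_subset_Icc_left (T.lo_lt_mid s).le

lemma indicator_Ico_eq_add (s : List Bool) (y : ℝ) :
    (Ico (T.lo s) (T.hi s)).indicator (1 : ℝ → ℕ∞) y
      = (Ico (T.lo (false :: s)) (T.hi (false :: s))).indicator 1 y
        + (Ico (T.lo (true :: s)) (T.hi (true :: s))).indicator 1 y := by
  rw [T.lo_false, T.hi_false, T.lo_true, T.hi_true,
    ← Ico_union_Ico_eq_Ico (T.lo_lt_mid s).le (T.mid_lt_hi s).le,
    indicator_union_of_disjoint (Ico_disjoint_Ico_same ..)]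

lemma indicator_Ioc_eq_add (s : List Bool) (y : ℝ) :
    (Ioc (T.lo s) (T.hi s)).indicator (1 : ℝ → ℕ∞) y
      = (Ioc (T.lo (false :: s)) (T.hi (false :: s))).indicator 1 y
        + (Ioc (T.lo (true :: s)) (T.hi (true :: s))).indicator 1 y := by
  rw [T.lo_false, T.hi_false, T.lo_true, T.hi_true,
    ← Ioc_union_Ioc_eq_Ioc (T.lo_lt_mid s).le (T.mid_lt_hi s).le,
    indicator_union_of_disjoint (Ioc_disjoint_Ioc_of_le le_rfl)]

end IntervalTree

namespace CurveState

/-- The node of the interval tree over which a piece of the curve runs. -/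
def node : CurveState → List Bool
  | rise _ s | climb _ s | excursion _ s | fall s => s

end CurveState

namespace ExcursionTree

open CurveState

variable (T : ExcursionTree) {s : List Bool} {y : ℝ} {j : ℕ}

open Classical in
/-- The largest number of a strand over the node `s`. -/
def level : List Bool → ℕ
  | [] => 0
  | _ :: s => level s + if T.allowed (level s + 1) s then 1 else 0

/-- At a good node a new strand branches off. -/
def IsGood (s : List Bool) : Prop := T.allowed (T.level s + 1) s

/-- The strand from which the new strand at the node `s` branches off is strand `j`. -/
def Hosts (j : ℕ) (s : List Bool) : Prop := T.IsGood s ∧ T.host (T.level s) s = j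

variable {T} in
lemma level_cons_of_isGood (hs : T.IsGood s) (b : Bool) : T.level (b :: s) = T.level s + 1 :=
  congrArg (T.level s + ·) (if_pos hs)

variable {T} in
lemma level_cons_of_not_isGood (hs : ¬ T.IsGood s) (b : Bool) : T.level (b :: s) = T.level s :=
  congrArg (T.level s + ·) (if_neg hs)

open Classical in
/-- The two halves of a piece of the curve. -/
def child : Bool → CurveState → CurveState
  | b, rise j s =>
    if T.Hosts j s then bif b then climb j s else excursion (T.level s + 1) s else rise j (b :: s)
  | b, climb j s => rise j (b :: s)
  | b, excursion j s => bif b then fall s else climb j s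
  | b, fall s => fall ((!b) :: s)

/-- The initial value of a piece of the curve. -/
def source : CurveState → ℝ
  | rise _ s | climb _ s | excursion _ s => T.lo s
  | fall s => T.hi s

/-- The final value of a piece of the curve. -/
def target : CurveState → ℝ
  | rise _ s | climb _ s => T.hi s
  | excursion _ s | fall s => T.lo s

/-- A rank of the states that increases at each subdivision, within each node of the tree too. -/
def depth : CurveState → ℕ
  | rise _ s => 3 * s.length
  | excursion _ s => 3 * s.length + 1
  | climb _ s | fall s => 3 * s.length + 2

lemma node_child (b : Bool) (q : CurveState) :
    (T.child b q).node = q.node ∨ ∃ d, (T.child b q).node = d :: q.node := by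
  cases q <;> cases b <;> simp only [child] <;> (try split_ifs) <;> simp [node]

/-- The curves in which strands rise, and branch off and fall back, as prescribed by the tree. -/
def curveSystem : CurveSystem CurveState where
  child := T.child
  source := T.source
  target := T.target
  lower q := T.lo q.node
  upper q := T.hi q.node
  depth := depth
  source_child_false q := by
    cases q <;> simp only [child] <;> (try split_ifs) <;> simp [source, T.lo_false, T.hi_true]
  target_child_true q := by
    cases q <;> simp only [child] <;> (try split_ifs) <;> simp [target, T.lo_false, T.hi_true]
  target_child_false q := by
    cases q <;> simp only [child] <;> (try split_ifs) <;>
      simp [source, target, T.hi_false, T.lo_true]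
  source_mem q := by cases q <;> simp [source, node, (T.lo_lt_hi _).le]
  target_mem q := by cases q <;> simp [target, node, (T.lo_lt_hi _).le]
  Icc_child_subset b q := by
    rcases T.node_child b q with h | ⟨d, h⟩ <;> rw [h]
    exact T.Icc_cons_subset d q.node
  depth_lt_depth_child b q := by
    cases q <;> cases b <;> simp only [child] <;> (try split_ifs) <;> simp [depth] <;> omega
  exists_forall_upper_sub_lower_lt ε hε := by
    obtain ⟨N, hN⟩ := T.exists_forall_hi_sub_lo_lt ε hε
    refine ⟨3 * N + 3, fun q hq => hN _ ?_⟩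
    cases q <;> simp only [depth, node] at * <;> omega

lemma child_rise_of_not_hosts (h : ¬ T.Hosts j s) (b : Bool) :
    T.child b (rise j s) = rise j (b :: s) :=
  if_neg h

lemma child_rise_of_hosts (h : T.Hosts j s) (b : Bool) :
    T.child b (rise j s) = bif b then climb j s else excursion (T.level s + 1) s :=
  if_pos h

/-- The number of times `t ∈ [0, 1)` at which the piece `q` of the curve takes the value `y`. -/
abbrev count (q : CurveState) (y : ℝ) : ℕ∞ := T.curveSystem.count q y

lemma count_eq_zero {q : CurveState} (hy : y ∉ Icc (T.lo q.node) (T.hi q.node)) :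
    T.count q y = 0 :=
  T.curveSystem.count_eq_zero hy

lemma count_fall (s : List Bool) (y : ℝ) :
    T.count (fall s) y = T.count (fall (false :: s)) y + T.count (fall (true :: s)) y := by
  rw [add_comm]
  exact T.curveSystem.count_eq_add _ _

lemma count_climb (j : ℕ) (s : List Bool) (y : ℝ) :
    T.count (climb j s) y = T.count (rise j (false :: s)) y + T.count (rise j (true :: s)) y :=
  T.curveSystem.count_eq_add _ _

open Classical in
lemma count_rise (j : ℕ) (s : List Bool) (y : ℝ) :
    T.count (rise j s) y = T.count (climb j s) y +
      if T.Hosts j s then T.count (climb (T.level s + 1) s) y + T.count (fall s) y else 0 := by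
  have hsplit : T.count (rise j s) y
      = T.count (T.child false (rise j s)) y + T.count (T.child true (rise j s)) y :=
    T.curveSystem.count_eq_add _ _
  split_ifs with h
  · rw [hsplit, child_rise_of_hosts T h, child_rise_of_hosts T h, add_comm]
    exact congrArg _ (T.curveSystem.count_eq_add _ _)
  · rw [hsplit, child_rise_of_not_hosts T h, child_rise_of_not_hosts T h, count_climb, add_zero]

lemma count_fall_lo (s : List Bool) : T.count (fall s) (T.lo s) = 0 := by
  refine T.curveSystem.count_eq_zero_of_forall_child_true
    (X := {q | ∃ s', q = fall s' ∧ T.lo s' = T.lo s}) ?_ ⟨s, rfl, rfl⟩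
  rintro _ ⟨s', rfl, hlo⟩ -
  refine ⟨fun hmem => ?_, false :: s', rfl, by rw [T.lo_false, hlo]⟩
  have : T.mid s' ≤ T.lo s := T.lo_true s' ▸ hmem.1
  linarith [T.lo_lt_mid s']

lemma count_fall_le_one (s : List Bool) (y : ℝ) : T.count (fall s) y ≤ 1 := by
  refine T.curveSystem.count_le_one (θ := fun q => decide (y ≤ T.mid q.node))
    (X := range fall) ?_ ⟨s, rfl⟩
  rintro _ ⟨s', rfl⟩ -
  refine ⟨?_, mem_range_self _⟩
  change T.count (fall ((!!decide (y ≤ T.mid s')) :: s')) y = 0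
  rw [Bool.not_not]
  rcases lt_trichotomy y (T.mid s') with hlt | rfl | hlt
  · rw [decide_eq_true hlt.le]
    exact T.count_eq_zero fun hmem => (T.lo_true s' ▸ hmem.1).not_gt hlt
  · rw [decide_eq_true le_rfl, ← T.lo_true s']
    exact T.count_fall_lo _
  · rw [decide_eq_false hlt.not_ge]
    exact T.count_eq_zero fun hmem => (T.hi_false s' ▸ hmem.2).not_gt hlt

lemma count_fall_eq_indicator (s : List Bool) (y : ℝ) :
    T.count (fall s) y = (Ioc (T.lo s) (T.hi s)).indicator 1 y := by
  by_cases hy : y ∈ Ioc (T.lo s) (T.hi s)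
  · rw [indicator_of_mem hy, Pi.one_apply]
    refine le_antisymm (T.count_fall_le_one s y) (T.curveSystem.one_le_count ?_ hy.1.ne')
    change y ∈ uIcc (T.hi s) (T.lo s)
    rw [uIcc_of_ge (T.lo_lt_hi s).le]
    exact Ioc_subset_Icc_self hy
  · rw [indicator_of_notMem hy]
    by_cases hlo : y = T.lo s
    · rw [hlo, T.count_fall_lo]
    · exact T.count_eq_zero fun h => hy ⟨h.1.lt_of_ne' hlo, h.2⟩

lemma indicator_Ico_le_count_rise (j : ℕ) (s : List Bool) (y : ℝ) :
    (Ico (T.lo s) (T.hi s)).indicator 1 y ≤ T.count (rise j s) y := by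
  by_cases hy : y ∈ Ico (T.lo s) (T.hi s)
  · rw [indicator_of_mem hy]
    refine T.curveSystem.one_le_count ?_ hy.2.ne
    change y ∈ uIcc (T.lo s) (T.hi s)
    rw [uIcc_of_le (T.lo_lt_hi s).le]
    exact Ico_subset_Icc_self hy
  · rw [indicator_of_notMem hy]
    exact zero_le

/-- No strand branches off over `y` at depth `n` of the tree or below. -/
def QuietFrom (n : ℕ) (y : ℝ) : Prop :=
  ∀ s, n ≤ s.length → T.IsGood s → y ∉ Icc (T.lo s) (T.hi s)

variable {T} {n : ℕ}

lemma QuietFrom.not_hosts (h : T.QuietFrom n y) (hs : n ≤ s.length)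
    (hy : y ∈ Icc (T.lo s) (T.hi s)) : ¬ T.Hosts j s :=
  fun hosts => h s hs hosts.1 hy

lemma QuietFrom.count_rise_hi (h : T.QuietFrom n (T.hi s)) (hs : n ≤ s.length) :
    T.count (rise j s) (T.hi s) = 0 := by
  refine T.curveSystem.count_eq_zero_of_forall_child_true
    (X := {q | ∃ s', q = rise j s' ∧ T.hi s' = T.hi s ∧ n ≤ s'.length}) ?_ ⟨s, rfl, rfl, hs⟩
  rintro _ ⟨s', rfl, hhi, hs'⟩ hy
  have hchild (b : Bool) : T.curveSystem.child b (rise j s') = rise j (b :: s') :=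
    T.child_rise_of_not_hosts (h.not_hosts hs' hy) b
  rw [hchild, hchild]
  refine ⟨fun hmem => ?_, true :: s', rfl, by rw [T.hi_true, hhi], Nat.le_succ_of_le hs'⟩
  have : T.hi s ≤ T.mid s' := T.hi_false s' ▸ hmem.2
  linarith [T.mid_lt_hi s']

lemma QuietFrom.count_rise_le_one (h : T.QuietFrom n y) (hs : n ≤ s.length) :
    T.count (rise j s) y ≤ 1 := by
  refine T.curveSystem.count_le_one (θ := fun q => decide (T.mid q.node ≤ y))
    (X := {q | ∃ s', q = rise j s' ∧ n ≤ s'.length}) ?_ ⟨s, rfl, hs⟩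
  rintro _ ⟨s', rfl, hs'⟩ hy
  have hchild (b : Bool) : T.curveSystem.child b (rise j s') = rise j (b :: s') :=
    T.child_rise_of_not_hosts (h.not_hosts hs' hy) b
  rw [hchild, hchild]
  refine ⟨?_, _, rfl, Nat.le_succ_of_le hs'⟩
  change T.count (rise j ((!decide (T.mid s' ≤ y)) :: s')) y = 0
  rcases lt_trichotomy y (T.mid s') with hlt | rfl | hlt
  · rw [decide_eq_false hlt.not_ge]
    exact T.count_eq_zero fun hmem => (T.lo_true s' ▸ hmem.1).not_gt hlt
  · rw [decide_eq_true le_rfl]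
    have hhi := T.hi_false s'
    rw [← hhi] at h ⊢
    exact h.count_rise_hi (Nat.le_succ_of_le hs')
  · rw [decide_eq_true hlt.le]
    exact T.count_eq_zero fun hmem => (T.hi_false s' ▸ hmem.2).not_gt hlt

lemma QuietFrom.count_rise_eq_indicator (h : T.QuietFrom n y) (hs : n ≤ s.length) :
    T.count (rise j s) y = (Ico (T.lo s) (T.hi s)).indicator 1 y := by
  refine le_antisymm ?_ (T.indicator_Ico_le_count_rise j s y)
  by_cases hy : y ∈ Ico (T.lo s) (T.hi s)
  · rw [indicator_of_mem hy]
    exact h.count_rise_le_one hs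
  · rw [indicator_of_notMem hy]
    by_cases hhi : y = T.hi s
    · rw [hhi] at h ⊢
      exact (h.count_rise_hi hs).le
    · exact (T.count_eq_zero fun hmem => hy ⟨hmem.1, hmem.2.lt_of_ne hhi⟩).le

variable (T)

/-- The number of times the part of the curve over the node `s` takes the value `y`: it consists of
the strands `0, …, level s` rising, and of `level s` falls. -/
def crossings (s : List Bool) (y : ℝ) : ℕ∞ :=
  ∑ j ∈ Finset.range (T.level s + 1), T.count (rise j s) y + T.level s * T.count (fall s) y

lemma crossings_nil (y : ℝ) : T.crossings [] y = T.count (rise 0 []) y := by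
  simp [crossings, level]

/-- Branching off turns a rising strand into two rising strands and a fall. -/
lemma crossings_eq_sum_climb (b : Bool) (s : List Bool) (y : ℝ) :
    T.crossings s y = ∑ j ∈ Finset.range (T.level (b :: s) + 1), T.count (climb j s) y
      + T.level (b :: s) * T.count (fall s) y := by
  classical
  simp only [crossings, T.count_rise, Finset.sum_add_distrib]
  by_cases hs : T.IsGood s
  · have hhost : T.host (T.level s) s ∈ Finset.range (T.level s + 1) :=
      Finset.mem_range.2 (Nat.lt_succ_of_le (T.host_le _ s))
    simp only [Hosts, hs, true_and, Finset.sum_ite_eq, if_pos hhost, level_cons_of_isGood hs,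
      Finset.sum_range_succ _ (T.level s + 1), Nat.cast_add, Nat.cast_one]
    ring
  · simp only [Hosts, hs, false_and, if_false, Finset.sum_const_zero, add_zero,
      level_cons_of_not_isGood hs]

lemma crossings_eq_add (s : List Bool) (y : ℝ) :
    T.crossings s y = T.crossings (false :: s) y + T.crossings (true :: s) y := by
  have hlevel : T.level (true :: s) = T.level (false :: s) := rfl
  rw [T.crossings_eq_sum_climb false s, T.count_fall s]
  simp only [T.count_climb, Finset.sum_add_distrib, crossings, hlevel]
  ring

variable {i : ℕ}

lemma le_crossings_of_le_level (n : ℕ) (s : List Bool)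
    (hright : ∀ s', s'.length = s.length + n → y ∈ Ico (T.lo s') (T.hi s') → i ≤ T.level s')
    (hleft : ∀ s', s'.length = s.length + n → y ∈ Ioc (T.lo s') (T.hi s') → j ≤ T.level s') :
    (i + 1) * (Ico (T.lo s) (T.hi s)).indicator 1 y + j * (Ioc (T.lo s) (T.hi s)).indicator 1 y
      ≤ T.crossings s y := by
  induction n generalizing s with
  | zero =>
    rw [crossings, T.count_fall_eq_indicator]
    have hsum := Finset.card_nsmul_le_sum (Finset.range (T.level s + 1)) _ _
      fun j _ => T.indicator_Ico_le_count_rise j s y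
    rw [Finset.card_range, nsmul_eq_mul] at hsum
    refine add_le_add (le_trans ?_ hsum) ?_
    · by_cases hy : y ∈ Ico (T.lo s) (T.hi s)
      · have := hright s rfl hy
        rw [indicator_of_mem hy]
        gcongr
        exact_mod_cast Nat.succ_le_succ this
      · simp [indicator_of_notMem hy]
    · by_cases hy : y ∈ Ioc (T.lo s) (T.hi s)
      · have := hleft s rfl hy
        gcongr
      · simp [indicator_of_notMem hy]
  | succ n ih =>
    have hlen (b : Bool) : (b :: s).length + n = s.length + (n + 1) := by
      rw [List.length_cons]; ring
    have ih (b : Bool) := ih (b :: s) (by rwa [hlen]) (by rwa [hlen])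
    rw [T.crossings_eq_add, T.indicator_Ico_eq_add, T.indicator_Ioc_eq_add]
    refine le_trans (le_of_eq ?_) (add_le_add (ih false) (ih true))
    ring

/-- Were a node over `y` at this depth good, the levels would still grow below it. -/
lemma quietFrom_of_level_eq
    (hright : ∀ s, n ≤ s.length → y ∈ Ico (T.lo s) (T.hi s) → T.level s = i)
    (hleft : ∀ s, n ≤ s.length → y ∈ Ioc (T.lo s) (T.hi s) → T.level s = j) :
    T.QuietFrom n y := by
  intro s hs hgood hy
  have hs' : n ≤ s.length + 1 := Nat.le_succ_of_le hs
  rcases hy.2.eq_or_lt with heq | hlt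
  · have hlo := T.mid_lt_hi s
    have h := hleft s hs ⟨heq ▸ T.lo_lt_hi s, heq.le⟩
    have h' := hleft (true :: s) hs' (by rw [T.lo_true, T.hi_true, heq]; exact ⟨hlo, le_rfl⟩)
    rw [level_cons_of_isGood hgood] at h'
    omega
  · have h := hright s hs ⟨hy.1, hlt⟩
    have h' : T.level s + 1 = i := by
      rcases lt_or_ge y (T.mid s) with hmid | hmid
      · rw [← level_cons_of_isGood hgood false]
        exact hright _ hs' (by rw [T.lo_false, T.hi_false]; exact ⟨hy.1, hmid⟩)
      · rw [← level_cons_of_isGood hgood true]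
        exact hright _ hs' (by rw [T.lo_true, T.hi_true]; exact ⟨hmid, hlt⟩)
    omega

lemma crossings_eq_of_level_eq (n : ℕ) (s : List Bool)
    (hright : ∀ s', s.length + n ≤ s'.length → y ∈ Ico (T.lo s') (T.hi s') → T.level s' = i)
    (hleft : ∀ s', s.length + n ≤ s'.length → y ∈ Ioc (T.lo s') (T.hi s') → T.level s' = j) :
    T.crossings s y = (i + 1) * (Ico (T.lo s) (T.hi s)).indicator 1 y
      + j * (Ioc (T.lo s) (T.hi s)).indicator 1 y := by
  induction n generalizing s with
  | zero =>
    have hquiet := T.quietFrom_of_level_eq hright hleft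
    rw [crossings, T.count_fall_eq_indicator,
      Finset.sum_congr rfl fun j _ => hquiet.count_rise_eq_indicator (j := j) le_rfl,
      Finset.sum_const, Finset.card_range, nsmul_eq_mul, Nat.cast_add, Nat.cast_one]
    congr 1
    · by_cases hy : y ∈ Ico (T.lo s) (T.hi s)
      · rw [hright s le_rfl hy]
      · simp [indicator_of_notMem hy]
    · by_cases hy : y ∈ Ioc (T.lo s) (T.hi s)
      · rw [hleft s le_rfl hy]
      · simp [indicator_of_notMem hy]
  | succ n ih =>
    have hlen (b : Bool) : (b :: s).length + n = s.length + (n + 1) := by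
      rw [List.length_cons]; ring
    rw [T.crossings_eq_add, ih (false :: s) (by rwa [hlen]) (by rwa [hlen]),
      ih (true :: s) (by rwa [hlen]) (by rwa [hlen]), T.indicator_Ico_eq_add s,
      T.indicator_Ioc_eq_add s]
    ring

end ExcursionTree

/-! ### Prescribing the one-sided numbers of strands -/

namespace IntervalTree

variable (T : IntervalTree) {s : List Bool} {y : ℝ} {U : Set ℝ}

lemma Ico_cons_subset (b : Bool) (s : List Bool) :
    Ico (T.lo (b :: s)) (T.hi (b :: s)) ⊆ Ico (T.lo s) (T.hi s) := by
  cases b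
  · rw [T.lo_false, T.hi_false]
    exact Ico_subset_Ico_right (T.mid_lt_hi s).le
  · rw [T.lo_true, T.hi_true]
    exact Ico_subset_Ico_left (T.lo_lt_mid s).le

lemma Ioc_cons_subset (b : Bool) (s : List Bool) :
    Ioc (T.lo (b :: s)) (T.hi (b :: s)) ⊆ Ioc (T.lo s) (T.hi s) := by
  cases b
  · rw [T.lo_false, T.hi_false]
    exact Ioc_subset_Ioc_right (T.mid_lt_hi s).le
  · rw [T.lo_true, T.hi_true]
    exact Ioc_subset_Ioc_left (T.lo_lt_mid s).le

lemma exists_forall_Icc_subset_of_mem_nhds (hU : U ∈ 𝓝 y) :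
    ∃ N, ∀ s : List Bool, N ≤ s.length → y ∈ Icc (T.lo s) (T.hi s) →
      Icc (T.lo s) (T.hi s) ⊆ U := by
  obtain ⟨ε, hε, hball⟩ := Metric.mem_nhds_iff.1 hU
  obtain ⟨N, hN⟩ := T.exists_forall_hi_sub_lo_lt ε hε
  refine ⟨N, fun s hs hy z hz => hball ?_⟩
  have hwidth := hN s hs
  rw [Metric.mem_ball, Real.dist_eq, abs_lt]
  constructor <;> linarith [hy.1, hy.2, hz.1, hz.2]

lemma exists_forall_Ioc_subset_of_mem_nhdsGT (hU : U ∈ 𝓝[>] y) :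
    ∃ N, ∀ s : List Bool, N ≤ s.length → T.lo s = y → Ioc (T.lo s) (T.hi s) ⊆ U := by
  obtain ⟨V, hV, hVU⟩ := mem_nhdsWithin_iff_exists_mem_nhds_inter.1 hU
  obtain ⟨N, hN⟩ := T.exists_forall_Icc_subset_of_mem_nhds hV
  refine ⟨N, fun s hs hlo z hz => hVU ⟨?_, hlo ▸ hz.1⟩⟩
  exact hN s hs (hlo ▸ left_mem_Icc.2 (T.lo_lt_hi s).le) (Ioc_subset_Icc_self hz)

lemma exists_forall_Ico_subset_of_mem_nhdsLT (hU : U ∈ 𝓝[<] y) :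
    ∃ N, ∀ s : List Bool, N ≤ s.length → T.hi s = y → Ico (T.lo s) (T.hi s) ⊆ U := by
  obtain ⟨V, hV, hVU⟩ := mem_nhdsWithin_iff_exists_mem_nhds_inter.1 hU
  obtain ⟨N, hN⟩ := T.exists_forall_Icc_subset_of_mem_nhds hV
  refine ⟨N, fun s hs hhi z hz => hVU ⟨?_, hhi ▸ hz.2⟩⟩
  exact hN s hs (hhi ▸ right_mem_Icc.2 (T.lo_lt_hi s).le) (Ico_subset_Icc_self hz)

end IntervalTree

/-- A target for the one-sided levels of a tree: over the points just right of `y`, `right y` many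
strands besides strand `0` are wanted, and `left y` many just left of `y`. The sets `region k`
witness that this is consistent: `k` many strands besides strand `0` may run there. -/
structure StrandProfile where
  left : ℝ → ℕ∞
  right : ℝ → ℕ∞
  region : ℕ → Set ℝ
  isOpen_region : ∀ k, IsOpen (region k)
  region_zero : region 0 = Set.univ
  le_left_of_mem_region : ∀ {k y}, y ∈ region k → k ≤ left y
  le_right_of_mem_region : ∀ {k y}, y ∈ region k → k ≤ right y
  region_mem_nhdsLT : ∀ {k : ℕ} {y}, k ≤ left y → region k ∈ 𝓝[<] y
  region_mem_nhdsGT : ∀ {k : ℕ} {y}, k ≤ right y → region k ∈ 𝓝[>] y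

namespace StrandProfile

variable (P : StrandProfile)

/-- The points next to which, on one side only, `k` many strands may run for some `k`. They have to
be end points of nodes. -/
def jumps : Set ℝ :=
  {y | ∃ k, y ∉ P.region k ∧ (P.region k ∈ 𝓝[<] y ∨ P.region k ∈ 𝓝[>] y)}

/-- Over the node `s`, the profile leaves room for `k` strands besides strand `0`. -/
def Allows (T : IntervalTree) (k : ℕ) (s : List Bool) : Prop :=
  Ioo (T.lo s) (T.hi s) ⊆ P.region k ∧ k ≤ P.right (T.lo s) ∧ k ≤ P.left (T.hi s)

variable {P} {T : IntervalTree} {k : ℕ} {s : List Bool} {y : ℝ}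

lemma Allows.cons (h : P.Allows T k s) (b : Bool) : P.Allows T k (b :: s) := by
  have hmid : T.mid s ∈ P.region k := h.1 ⟨T.lo_lt_mid s, T.mid_lt_hi s⟩
  cases b
  · rw [Allows, T.lo_false, T.hi_false]
    exact ⟨(Ioo_subset_Ioo_right (T.mid_lt_hi s).le).trans h.1, h.2.1,
      P.le_left_of_mem_region hmid⟩
  · rw [Allows, T.lo_true, T.hi_true]
    exact ⟨(Ioo_subset_Ioo_left (T.lo_lt_mid s).le).trans h.1, P.le_right_of_mem_region hmid,
      h.2.2⟩

lemma Allows.le_right (h : P.Allows T k s) (hy : y ∈ Ico (T.lo s) (T.hi s)) : k ≤ P.right y := by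
  rcases hy.1.eq_or_lt with rfl | hlo
  · exact h.2.1
  · exact P.le_right_of_mem_region (h.1 ⟨hlo, hy.2⟩)

lemma Allows.le_left (h : P.Allows T k s) (hy : y ∈ Ioc (T.lo s) (T.hi s)) : k ≤ P.left y := by
  rcases hy.2.eq_or_lt with rfl | hhi
  · exact h.2.2
  · exact P.le_left_of_mem_region (h.1 ⟨hy.1, hhi⟩)

lemma allows_of_Icc_subset (h : Icc (T.lo s) (T.hi s) ⊆ P.region k) : P.Allows T k s :=
  ⟨Ioo_subset_Icc_self.trans h,
    P.le_right_of_mem_region (h (left_mem_Icc.2 (T.lo_lt_hi s).le)),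
    P.le_left_of_mem_region (h (right_mem_Icc.2 (T.lo_lt_hi s).le))⟩

variable (hsep : ∀ y ∈ P.jumps, ∃ N, ∀ s : List Bool, N ≤ s.length → y ∉ Ioo (T.lo s) (T.hi s))

include hsep in
lemma exists_forall_allows_right (hk : k ≤ P.right y) :
    ∃ N, ∀ s : List Bool, N ≤ s.length → y ∈ Ico (T.lo s) (T.hi s) → P.Allows T k s := by
  by_cases hy : y ∈ P.region k
  · obtain ⟨N, hN⟩ := T.exists_forall_Icc_subset_of_mem_nhds ((P.isOpen_region k).mem_nhds hy)
    exact ⟨N, fun s hs hys => allows_of_Icc_subset (hN s hs (Ico_subset_Icc_self hys))⟩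
  · have hnhds := P.region_mem_nhdsGT hk
    obtain ⟨M, hM⟩ := hsep y ⟨k, hy, Or.inr hnhds⟩
    obtain ⟨N, hN⟩ := T.exists_forall_Ioc_subset_of_mem_nhdsGT hnhds
    refine ⟨max M N, fun s hs hys => ?_⟩
    have hlo : T.lo s = y := hys.1.antisymm
      (not_lt.1 fun hlt => hM s ((le_max_left ..).trans hs) ⟨hlt, hys.2⟩)
    have hsub := hN s ((le_max_right ..).trans hs) hlo
    exact ⟨Ioo_subset_Ioc_self.trans hsub, hlo ▸ hk,
      P.le_left_of_mem_region (hsub (right_mem_Ioc.2 (T.lo_lt_hi s)))⟩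

include hsep in
lemma exists_forall_allows_left (hk : k ≤ P.left y) :
    ∃ N, ∀ s : List Bool, N ≤ s.length → y ∈ Ioc (T.lo s) (T.hi s) → P.Allows T k s := by
  by_cases hy : y ∈ P.region k
  · obtain ⟨N, hN⟩ := T.exists_forall_Icc_subset_of_mem_nhds ((P.isOpen_region k).mem_nhds hy)
    exact ⟨N, fun s hs hys => allows_of_Icc_subset (hN s hs (Ioc_subset_Icc_self hys))⟩
  · have hnhds := P.region_mem_nhdsLT hk
    obtain ⟨M, hM⟩ := hsep y ⟨k, hy, Or.inl hnhds⟩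
    obtain ⟨N, hN⟩ := T.exists_forall_Ico_subset_of_mem_nhdsLT hnhds
    refine ⟨max M N, fun s hs hys => ?_⟩
    have hhi : T.hi s = y := (hys.2.antisymm
      (not_lt.1 fun hlt => hM s ((le_max_left ..).trans hs) ⟨hys.1, hlt⟩)).symm
    have hsub := hN s ((le_max_right ..).trans hs) hhi
    exact ⟨Ioo_subset_Ico_self.trans hsub,
      P.le_right_of_mem_region (hsub (left_mem_Ico.2 (T.lo_lt_hi s))), hhi ▸ hk⟩

end StrandProfile

namespace ExcursionTree

open CurveState

/-- The levels of the nodes shrinking to `y` from the right tend to `right y`, from below, and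
similarly on the left. -/
structure HasLevels (T : ExcursionTree) (left right : ℝ → ℕ∞) : Prop where
  level_le_right : ∀ {s y}, y ∈ Ico (T.lo s) (T.hi s) → T.level s ≤ right y
  level_le_left : ∀ {s y}, y ∈ Ioc (T.lo s) (T.hi s) → T.level s ≤ left y
  exists_forall_le_level_right : ∀ {k : ℕ} {y}, k ≤ right y →
    ∃ N, ∀ s : List Bool, N ≤ s.length → y ∈ Ico (T.lo s) (T.hi s) → k ≤ T.level s
  exists_forall_le_level_left : ∀ {k : ℕ} {y}, k ≤ left y →
    ∃ N, ∀ s : List Bool, N ≤ s.length → y ∈ Ioc (T.lo s) (T.hi s) → k ≤ T.level s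

variable {T : ExcursionTree} {P : StrandProfile} {s : List Bool} {y : ℝ} {k : ℕ}

lemma allowed_level (hzero : T.allowed 0 [])
    (hcons : ∀ k b s, T.allowed k s → T.allowed k (b :: s)) (s : List Bool) :
    T.allowed (T.level s) s := by
  induction s with
  | nil => exact hzero
  | cons b s ih =>
    by_cases hs : T.IsGood s
    · rw [level_cons_of_isGood hs]
      exact hcons _ b s hs
    · rw [level_cons_of_not_isGood hs]
      exact hcons _ b s ih

lemma exists_forall_le_level {S : Set (List Bool)} (htail : ∀ b s, b :: s ∈ S → s ∈ S)
    (hallowed : ∀ i ≤ k, ∃ N, ∀ s : List Bool, N ≤ s.length → s ∈ S → T.allowed i s) :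
    ∃ N, ∀ s : List Bool, N ≤ s.length → s ∈ S → k ≤ T.level s := by
  induction k with
  | zero => exact ⟨0, fun _ _ _ => zero_le⟩
  | succ k ih =>
    obtain ⟨M, hM⟩ := ih fun i hi => hallowed i (Nat.le_succ_of_le hi)
    obtain ⟨N, hN⟩ := hallowed (k + 1) le_rfl
    refine ⟨max M N + 1, fun s hlen hs => ?_⟩
    obtain _ | ⟨b, s⟩ := s
    · simp at hlen
    have hlen : max M N ≤ s.length := Nat.le_of_succ_le_succ hlen
    have hs := htail b s hs
    rcases (hM s ((le_max_left ..).trans hlen) hs).eq_or_lt with heq | hlt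
    · have hgood : T.IsGood s := by
        rw [IsGood, ← heq]
        exact hN s ((le_max_right ..).trans hlen) hs
      rw [level_cons_of_isGood hgood, heq]
    · exact hlt.trans_le (Nat.le_add_right _ _)

lemma hasLevels_of_allowed_iff (hallowed : ∀ k s, T.allowed k s ↔ P.Allows T.toIntervalTree k s)
    (hsep : ∀ y ∈ P.jumps, ∃ N, ∀ s : List Bool, N ≤ s.length → y ∉ Ioo (T.lo s) (T.hi s)) :
    T.HasLevels P.left P.right := by
  have hlevel (s : List Bool) : P.Allows T.toIntervalTree (T.level s) s := by
    refine (hallowed _ _).1 (allowed_level ?_ (fun k b s hs => ?_) s)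
    · exact (hallowed _ _).2
        (StrandProfile.allows_of_Icc_subset (P.region_zero ▸ subset_univ _))
    · exact (hallowed _ _).2 (((hallowed _ _).1 hs).cons b)
  refine ⟨fun hy => (hlevel _).le_right hy, fun hy => (hlevel _).le_left hy, fun hk => ?_,
    fun hk => ?_⟩
  · refine exists_forall_le_level (fun b s hy => T.Ico_cons_subset b s hy) fun i hi => ?_
    simp only [hallowed]
    exact StrandProfile.exists_forall_allows_right hsep ((Nat.cast_le.2 hi).trans hk)
  · refine exists_forall_le_level (fun b s hy => T.Ioc_cons_subset b s hy) fun i hi => ?_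
    simp only [hallowed]
    exact StrandProfile.exists_forall_allows_left hsep ((Nat.cast_le.2 hi).trans hk)

namespace HasLevels

variable {left right : ℝ → ℕ∞} (h : T.HasLevels left right)

include h in
lemma le_crossings {i j : ℕ} (hi : i ≤ right y) (hj : j ≤ left y) (s : List Bool) :
    (i + 1) * (Ico (T.lo s) (T.hi s)).indicator 1 y + j * (Ioc (T.lo s) (T.hi s)).indicator 1 y
      ≤ T.crossings s y := by
  obtain ⟨M, hM⟩ := h.exists_forall_le_level_right hi
  obtain ⟨N, hN⟩ := h.exists_forall_le_level_left hj
  exact T.le_crossings_of_le_level (max M N) s (fun s' hs' => hM s' (by omega))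
    fun s' hs' => hN s' (by omega)

include h in
lemma crossings_eq {i j : ℕ} (hi : right y = i) (hj : left y = j) (s : List Bool) :
    T.crossings s y = (i + 1) * (Ico (T.lo s) (T.hi s)).indicator 1 y
      + j * (Ioc (T.lo s) (T.hi s)).indicator 1 y := by
  obtain ⟨M, hM⟩ := h.exists_forall_le_level_right hi.ge
  obtain ⟨N, hN⟩ := h.exists_forall_le_level_left hj.ge
  refine T.crossings_eq_of_level_eq (max M N) s
    (fun s' hs' hy => le_antisymm ?_ (hM s' (by omega) hy))
    fun s' hs' hy => le_antisymm ?_ (hN s' (by omega) hy)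
  · exact_mod_cast hi ▸ h.level_le_right hy
  · exact_mod_cast hj ▸ h.level_le_left hy

variable (h₀ : left 0 = 0) (h₁ : right 1 = 0)

include h h₀ h₁ in
lemma crossings_nil_add_ite_of_ne_top (hy : y ∈ Icc 0 1) (hright : right y ≠ ⊤)
    (hleft : left y ≠ ⊤) :
    (T.crossings [] y + if y = 1 then 1 else 0) = left y + right y + 1 := by
  obtain ⟨i, hi⟩ := ENat.ne_top_iff_exists.1 hright
  obtain ⟨j, hj⟩ := ENat.ne_top_iff_exists.1 hleft
  rw [h.crossings_eq hi.symm hj.symm, T.lo_nil, T.hi_nil, hi, hj]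
  rcases hy.1.eq_or_lt with rfl | hpos
  · simp [h₀]
  rcases hy.2.eq_or_lt with rfl | hlt
  · simp [h₁]
  · rw [indicator_of_mem (s := Ico 0 1) ⟨hpos.le, hlt⟩,
      indicator_of_mem (s := Ioc 0 1) ⟨hpos, hlt.le⟩, if_neg hlt.ne]
    simp only [Pi.one_apply]
    ring

include h h₀ h₁ in
lemma crossings_nil_eq_top (hy : y ∈ Icc 0 1) (htop : right y = ⊤ ∨ left y = ⊤) :
    T.crossings [] y = ⊤ := by
  refine ENat.eq_top_iff_forall_ge.2 fun n => ?_
  rcases htop with htop | htop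
  · have hne : y ≠ 1 := by rintro rfl; simp [htop] at h₁
    have hle := h.le_crossings (i := n) (j := 0) (htop ▸ le_top) zero_le []
    rw [T.lo_nil, T.hi_nil, indicator_of_mem (s := Ico 0 1) ⟨hy.1, hy.2.lt_of_ne hne⟩] at hle
    refine le_trans ?_ hle
    simp
  · have hne : y ≠ 0 := by rintro rfl; simp [htop] at h₀
    have hle := h.le_crossings (i := 0) (j := n) zero_le (htop ▸ le_top) []
    rw [T.lo_nil, T.hi_nil, indicator_of_mem (s := Ioc 0 1) ⟨hy.1.lt_of_ne' hne, hy.2⟩] at hle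
    refine le_trans ?_ hle
    simp

include h h₀ h₁ in
lemma encard_setOf_mem_Icc_curve_eq (hy : y ∈ Icc 0 1) :
    {t | t ∈ Icc 0 1 ∧ T.curveSystem.curve (rise 0 []) t = y}.encard
      = left y + right y + 1 := by
  have htarget : T.curveSystem.target (rise 0 []) = 1 := T.hi_nil
  rw [CurveSystem.encard_setOf_mem_Icc_curve_eq, htarget]
  change (T.count (rise 0 []) y + _) = _
  rw [← crossings_nil]
  by_cases htop : right y = ⊤ ∨ left y = ⊤
  · rw [h.crossings_nil_eq_top h₀ h₁ hy htop, top_add]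
    rcases htop with htop | htop <;> simp [htop]
  · push Not at htop
    exact h.crossings_nil_add_ite_of_ne_top h₀ h₁ hy htop.1 htop.2

end HasLevels

end ExcursionTree

/-! ### Trees with prescribed cut points -/

/-- The first term of the sequence `u` that lies in `(a, b)`; it is `u 0` if there is none. -/
def firstTermIn (u : ℕ → ℝ) (a b : ℝ) : ℝ := u (sInf {n | u n ∈ Ioo a b})

/-- The end points of the node `s` of the tree in which each node is cut at the first term of `u`
it contains. -/
def cutBounds (u : ℕ → ℝ) : List Bool → ℝ × ℝ
  | [] => (0, 1)
  | false :: s => ((cutBounds u s).1, firstTermIn u (cutBounds u s).1 (cutBounds u s).2)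
  | true :: s => (firstTermIn u (cutBounds u s).1 (cutBounds u s).2, (cutBounds u s).2)

section CutTree

variable {u : ℕ → ℝ} (hu : DenseRange u)

include hu in
lemma firstTermIn_mem_Ioo {a b : ℝ} (hab : a < b) : firstTermIn u a b ∈ Ioo a b := by
  obtain ⟨n, hn⟩ := hu.exists_mem_open isOpen_Ioo (nonempty_Ioo.2 hab)
  exact Nat.sInf_mem (s := {n | u n ∈ Ioo a b}) ⟨n, hn⟩

include hu in
lemma cutBounds_fst_lt_snd (s : List Bool) : (cutBounds u s).1 < (cutBounds u s).2 := by
  induction s with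
  | nil => exact one_pos
  | cons b s ih =>
    have hmem := firstTermIn_mem_Ioo hu ih
    cases b
    · exact hmem.1
    · exact hmem.2

include hu in
lemma Ioo_cutBounds_cons_subset (b : Bool) (s : List Bool) :
    Ioo (cutBounds u (b :: s)).1 (cutBounds u (b :: s)).2
      ⊆ Ioo (cutBounds u s).1 (cutBounds u s).2 := by
  have hmem := firstTermIn_mem_Ioo hu (cutBounds_fst_lt_snd hu s)
  cases b
  · exact Ioo_subset_Ioo_right hmem.2.le
  · exact Ioo_subset_Ioo_left hmem.1.le

include hu in
lemma notMem_Ioo_cutBounds {n : ℕ} {s : List Bool} (hn : n < s.length) :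
    u n ∉ Ioo (cutBounds u s).1 (cutBounds u s).2 := by
  induction s generalizing n with
  | nil => simp at hn
  | cons b s ih =>
    intro hmem
    have hmem' := Ioo_cutBounds_cons_subset hu b s hmem
    rcases (Nat.lt_succ_iff.1 hn).lt_or_eq with hlt | rfl
    · exact ih hlt hmem'
    have hfirst : sInf {n | u n ∈ Ioo (cutBounds u s).1 (cutBounds u s).2} = s.length :=
      (Nat.sInf_le hmem').antisymm (le_csInf ⟨_, hmem'⟩ fun m hm => not_lt.1 fun hlt => ih hlt hm)
    have hcut : firstTermIn u (cutBounds u s).1 (cutBounds u s).2 = u s.length :=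
      congrArg u hfirst
    cases b
    · exact hmem.2.ne hcut.symm
    · exact hmem.1.ne hcut

include hu in
lemma cutBounds_fst_mem_Icc (s : List Bool) : (cutBounds u s).1 ∈ Icc (0 : ℝ) 1 := by
  have hsub : Ioo (cutBounds u s).1 (cutBounds u s).2 ⊆ Ioo 0 1 := by
    induction s with
    | nil => exact Subset.rfl
    | cons b s ih => exact (Ioo_cutBounds_cons_subset hu b s).trans ih
  have hlt := cutBounds_fst_lt_snd hu s
  obtain ⟨hlo, hhi⟩ := (Ioo_subset_Ioo_iff hlt).1 hsub
  exact ⟨hlo, hlt.le.trans hhi⟩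

include hu in
lemma exists_forall_cutBounds_snd_sub_fst_lt (ε : ℝ) (hε : 0 < ε) :
    ∃ N, ∀ s : List Bool, N ≤ s.length → (cutBounds u s).2 - (cutBounds u s).1 < ε := by
  have hcover : Icc (0 : ℝ) 1 ⊆ ⋃ n, Ioo (u n - ε) (u n) := by
    intro x _
    obtain ⟨n, hn⟩ := hu.exists_mem_open isOpen_Ioo (nonempty_Ioo.2 (lt_add_of_pos_right x hε))
    exact mem_iUnion.2 ⟨n, by linarith [hn.2], hn.1⟩
  obtain ⟨S, hS⟩ := isCompact_Icc.elim_finite_subcover _ (fun _ => isOpen_Ioo) hcover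
  refine ⟨S.sup id + 1, fun s hs => ?_⟩
  obtain ⟨n, hnS, hn⟩ := mem_iUnion₂.1 (hS (cutBounds_fst_mem_Icc hu s))
  have hlen : n < s.length := (Nat.lt_succ_of_le (Finset.le_sup (f := id) hnS)).trans_le hs
  have : (cutBounds u s).2 ≤ u n := not_lt.1 fun h => notMem_Ioo_cutBounds hu hlen ⟨hn.2, h⟩
  linarith [hn.1]

/-- The tree in which each node is cut at the first term of the dense sequence `u` it contains. -/
def cutTree (u : ℕ → ℝ) (hu : DenseRange u) : IntervalTree where
  lo s := (cutBounds u s).1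
  hi s := (cutBounds u s).2
  mid s := firstTermIn u (cutBounds u s).1 (cutBounds u s).2
  lo_nil := rfl
  hi_nil := rfl
  lo_false _ := rfl
  hi_false _ := rfl
  lo_true _ := rfl
  hi_true _ := rfl
  lo_lt_mid s := (firstTermIn_mem_Ioo hu (cutBounds_fst_lt_snd hu s)).1
  mid_lt_hi s := (firstTermIn_mem_Ioo hu (cutBounds_fst_lt_snd hu s)).2
  exists_forall_hi_sub_lo_lt := exists_forall_cutBounds_snd_sub_fst_lt hu

end CutTree

lemma exists_intervalTree_of_countable {S : Set ℝ} (hS : S.Countable) :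
    ∃ T : IntervalTree, ∀ y ∈ S, ∃ N, ∀ s : List Bool, N ≤ s.length →
      y ∉ Ioo (T.lo s) (T.hi s) := by
  obtain ⟨u, hrange⟩ := (hS.union (countable_range ((↑) : ℚ → ℝ))).exists_eq_range
    ((range_nonempty _).inr)
  have hu : DenseRange u :=
    Rat.denseRange_cast.mono (hrange ▸ subset_union_right)
  refine ⟨cutTree u hu, fun y hy => ?_⟩
  obtain ⟨n, rfl⟩ : y ∈ range u := hrange ▸ Or.inl hy
  exact ⟨n + 1, fun s hs => notMem_Ioo_cutBounds hu hs⟩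

/-! ### Nesting the strands along finite sequences -/

/-- The number of the initial segment of length `n` of `σ`, in the enumeration of all finite
sequences. -/
def prefixCode (σ : ℕ → ℕ) (n : ℕ) : ℕ := Encodable.encode (PiNat.res σ n)

/-- The number of the finite sequence obtained from the sequence number `k` by removing its last
term. -/
def parentCode (k : ℕ) : ℕ := Encodable.encode (Denumerable.ofNat (List ℕ) k).tail

lemma parentCode_succ_le (k : ℕ) : parentCode (k + 1) ≤ k := by
  rw [parentCode, Denumerable.list_ofNat_succ, List.tail_cons, Denumerable.encode_ofNat]
  exact Nat.unpair_right_le k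

lemma parentCode_prefixCode_succ (σ : ℕ → ℕ) (n : ℕ) :
    parentCode (prefixCode σ (n + 1)) = prefixCode σ n := by
  rw [parentCode, prefixCode, Denumerable.ofNat_encode]
  rfl

lemma strictMono_prefixCode (σ : ℕ → ℕ) : StrictMono (prefixCode σ) :=
  strictMono_nat_of_lt_succ fun _ => Nat.lt_succ_of_le (Nat.right_le_pair _ _)

lemma prefixCode_eq_prefixCode {σ τ : ℕ → ℕ} {m n : ℕ} (h : prefixCode σ m = prefixCode τ n) :
    m = n ∧ ∀ i < m, σ i = τ i := by
  have hres := Encodable.encode_injective h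
  obtain rfl : m = n := by simpa using congrArg List.length hres
  exact ⟨rfl, PiNat.res_eq_res.1 hres⟩

lemma exists_tendsto_of_parentCode_prefixCode {τ : ℕ → ℕ → ℕ} {n : ℕ → ℕ} (hpos : ∀ i, n i ≠ 0)
    (hparent : ∀ i, parentCode (prefixCode (τ (i + 1)) (n (i + 1))) = prefixCode (τ i) (n i)) :
    ∃ σ, Tendsto τ atTop (𝓝 σ) := by
  have hstep (i : ℕ) : n (i + 1) = n i + 1 ∧ ∀ m < n i, τ (i + 1) m = τ i m := by
    obtain ⟨m, hm⟩ := Nat.exists_eq_succ_of_ne_zero (hpos (i + 1))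
    have heq := hparent i
    rw [hm, parentCode_prefixCode_succ] at heq
    obtain ⟨rfl, hagree⟩ := prefixCode_eq_prefixCode heq
    exact ⟨hm, hagree⟩
  have hle : ∀ i, i ≤ n i :=
    fun _ => (strictMono_nat_of_lt_succ fun i => (hstep i).1 ▸ Nat.lt_succ_self (n i)).le_apply
  refine ⟨fun m => τ (m + 1) m, tendsto_pi_nhds.2 fun m => tendsto_atTop_of_eventually_const
    (i₀ := m + 1) fun i hi => ?_⟩
  induction i, hi using Nat.le_induction with
  | base => rfl
  | succ i hi ih => rw [(hstep i).2 m (hi.trans (hle i)), ih]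

section LastCode

open Classical in
/-- The code of the longest initial segment of `σ` with a code at most `k`. -/
def lastCode (σ : ℕ → ℕ) (k : ℕ) : ℕ := Nat.findGreatest (· ∈ range (prefixCode σ)) k

variable {σ τ : ℕ → ℕ} {k : ℕ}

lemma lastCode_mem_range (σ : ℕ → ℕ) (k : ℕ) : lastCode σ k ∈ range (prefixCode σ) := by
  classical exact
    Nat.findGreatest_spec (P := (· ∈ range (prefixCode σ))) (Nat.zero_le k) ⟨0, rfl⟩

lemma lastCode_le (σ : ℕ → ℕ) (k : ℕ) : lastCode σ k ≤ k := by
  classical exact Nat.findGreatest_le k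

lemma lastCode_zero (σ : ℕ → ℕ) : lastCode σ 0 = 0 :=
  Nat.le_zero.1 (lastCode_le σ 0)

lemma lastCode_of_mem (h : k ∈ range (prefixCode σ)) : lastCode σ k = k := by
  classical exact Nat.findGreatest_eq h

lemma lastCode_succ_of_notMem (h : k + 1 ∉ range (prefixCode σ)) :
    lastCode σ (k + 1) = lastCode σ k := by
  classical exact Nat.findGreatest_of_not h

lemma prefixCode_le_lastCode {n : ℕ} (h : prefixCode σ n ≤ k) : prefixCode σ n ≤ lastCode σ k := by
  classical exact Nat.le_findGreatest h ⟨n, rfl⟩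

lemma parentCode_succ_eq_lastCode (h : k + 1 ∈ range (prefixCode σ)) :
    parentCode (k + 1) = lastCode σ k := by
  obtain ⟨_ | n, hn⟩ := h
  · exact absurd hn (Nat.succ_ne_zero k).symm
  obtain ⟨m, hm⟩ := lastCode_mem_range σ k
  have hlt : m < n + 1 := (strictMono_prefixCode σ).lt_iff_lt.1 (by
    rw [hm, hn]
    exact Nat.lt_succ_of_le (lastCode_le σ k))
  rw [← hn, parentCode_prefixCode_succ]
  refine le_antisymm (prefixCode_le_lastCode ?_) ?_
  · exact Nat.le_of_lt_succ ((strictMono_prefixCode σ n.lt_succ_self).trans_eq hn)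
  · rw [← hm]
    exact (strictMono_prefixCode σ).monotone (Nat.le_of_lt_succ hlt)

lemma eq_of_lastCode_eq (h : ∀ K, ∃ k ≥ K, lastCode σ k = lastCode τ k) : σ = τ := by
  funext m
  obtain ⟨k, hk, heq⟩ := h (prefixCode σ (m + 1))
  obtain ⟨i, hi⟩ := lastCode_mem_range σ k
  obtain ⟨j, hj⟩ := lastCode_mem_range τ k
  have hle : m + 1 ≤ i :=
    (strictMono_prefixCode σ).le_iff_le.1 (hi ▸ prefixCode_le_lastCode hk)
  exact (prefixCode_eq_prefixCode (hi.trans (heq.trans hj.symm))).2 m hle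

end LastCode

open Classical in
/-- The strand from which strand `k + 1` branches off at the node `s`. The aim is that nested
sequences of strands over `y` correspond to the `σ` with `p σ = y`: if strand `k + 1` stands for an
initial segment of some `σ` with `p σ` in the node, it branches off the next shorter initial
segment; otherwise it branches off strand `0`, so that it does not contribute to deep nesting. -/
def nestedHost (p : (ℕ → ℕ) → ℝ) (T : IntervalTree) (k : ℕ) (s : List Bool) : ℕ :=
  if ∃ σ, k + 1 ∈ range (prefixCode σ) ∧ p σ ∈ Icc (T.lo s) (T.hi s) then parentCode (k + 1) else 0

lemma nestedHost_le (p : (ℕ → ℕ) → ℝ) (T : IntervalTree) (k : ℕ) (s : List Bool) :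
    nestedHost p T k s ≤ k := by
  rw [nestedHost]
  split_ifs
  exacts [parentCode_succ_le k, Nat.zero_le k]

lemma nestedHost_eq_lastCode {p : (ℕ → ℕ) → ℝ} {T : IntervalTree} {k : ℕ} {s : List Bool}
    {σ : ℕ → ℕ} (hcode : k + 1 ∈ range (prefixCode σ)) (hσ : p σ ∈ Icc (T.lo s) (T.hi s)) :
    nestedHost p T k s = lastCode σ k := by
  rw [nestedHost, if_pos ⟨σ, hcode, hσ⟩, parentCode_succ_eq_lastCode hcode]

lemma IntervalTree.tendsto_of_mem_Icc (T : IntervalTree) {s : ℕ → List Bool}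
    (hs : ∀ i, i ≤ (s i).length) {z : ℕ → ℝ} {y : ℝ}
    (hz : ∀ i, z i ∈ Icc (T.lo (s i)) (T.hi (s i)))
    (hy : ∀ i, y ∈ Icc (T.lo (s i)) (T.hi (s i))) : Tendsto z atTop (𝓝 y) := by
  intro U hU
  obtain ⟨N, hN⟩ := T.exists_forall_Icc_subset_of_mem_nhds hU
  exact mem_map.2 ((eventually_ge_atTop N).mono fun i hi =>
    hN (s i) (hi.trans (hs i)) (hy i) (hz i))

namespace ExcursionTree

open CurveState

variable (T : ExcursionTree) {s : List Bool} {y : ℝ} {j n : ℕ} {p : (ℕ → ℕ) → ℝ}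

/-- The binary expansions along which the piece `q` of the curve approaches the value `y`. -/
abbrev itineraries (q : CurveState) (y : ℝ) : Set (Stream' Bool) := T.curveSystem.itineraries q y

variable {T}

lemma countable_itineraries_of_notMem {q : CurveState} (hy : y ∉ Icc (T.lo q.node) (T.hi q.node)) :
    (T.itineraries q y).Countable :=
  T.curveSystem.countable_itineraries_of_count_ne_top (by
    change T.count q y ≠ ⊤
    rw [T.count_eq_zero hy]
    exact ENat.zero_ne_top)

lemma countable_itineraries_excursion (h : (T.itineraries (climb j s) y).Countable) :
    (T.itineraries (excursion j s) y).Countable := by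
  refine T.curveSystem.countable_itineraries_of_forall_child fun b => ?_
  cases b
  · exact h
  · exact T.curveSystem.countable_itineraries_of_count_ne_top
      ((T.count_fall_le_one s y).trans_lt (ENat.natCast_lt_top 1)).ne

lemma countable_itineraries_rise {S : Set (List Bool)}
    (hhosts : ∀ s ∈ S, T.Hosts j s → (T.itineraries (excursion (T.level s + 1) s) y).Countable)
    (hS : ∀ s ∈ S, ∃ b, (T.itineraries (rise j ((!b) :: s)) y).Countable ∧ b :: s ∈ S)
    (hs : s ∈ S) : (T.itineraries (rise j s) y).Countable := by
  refine T.curveSystem.countable_itineraries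
    (X := {q | ∃ s ∈ S, q = rise j s ∨ q = climb j s}) ?_ ⟨s, hs, Or.inl rfl⟩
  rintro _ ⟨s, hs, rfl | rfl⟩
  · change ∃ b, (T.itineraries (T.child (!b) (rise j s)) y).Countable ∧ T.child b (rise j s) ∈ _
    by_cases h : T.Hosts j s
    · simp only [T.child_rise_of_hosts h]
      exact ⟨true, hhosts s hs h, s, hs, Or.inr rfl⟩
    · simp only [T.child_rise_of_not_hosts h]
      obtain ⟨b, hcount, hmem⟩ := hS s hs
      exact ⟨b, hcount, _, hmem, Or.inl rfl⟩
  · obtain ⟨b, hcount, hmem⟩ := hS s hs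
    exact ⟨b, hcount, _, hmem, Or.inl rfl⟩

section Nesting

variable (hhosts : ∀ s, n ≤ s.length → T.Hosts j s →
  (T.itineraries (excursion (T.level s + 1) s) y).Countable)

include hhosts in
lemma countable_itineraries_rise_of_hi_eq (hs : n ≤ s.length) (hhi : T.hi s = y) :
    (T.itineraries (rise j s) y).Countable := by
  refine countable_itineraries_rise (S := {s | n ≤ s.length ∧ T.hi s = y})
    (fun s hs => hhosts s hs.1) (fun s hs => ⟨true, ?_, Nat.le_succ_of_le hs.1, ?_⟩) ⟨hs, hhi⟩
  · refine countable_itineraries_of_notMem fun hy => ?_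
    exact (T.mid_lt_hi s).not_ge (hs.2.trans_le (T.hi_false s ▸ hy.2))
  · rw [T.hi_true, hs.2]

include hhosts in
lemma countable_itineraries_rise_of_hosts (hs : n ≤ s.length) :
    (T.itineraries (rise j s) y).Countable := by
  refine countable_itineraries_rise (S := {s | n ≤ s.length}) hhosts (fun s hs => ?_) hs
  have hcons (b : Bool) : n ≤ (b :: s).length := Nat.le_succ_of_le hs
  rcases lt_trichotomy y (T.mid s) with hlt | heq | hlt
  · exact ⟨false, countable_itineraries_of_notMem fun hy => hlt.not_ge (T.lo_true s ▸ hy.1),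
      hcons _⟩
  · exact ⟨true, countable_itineraries_rise_of_hi_eq hhosts (hcons _) (by
      rw [Bool.not_true, T.hi_false, heq]), hcons _⟩
  · exact ⟨true, countable_itineraries_of_notMem fun hy => hlt.not_ge (T.hi_false s ▸ hy.2),
      hcons _⟩

end Nesting

lemma exists_host_of_not_countable_itineraries (h : ¬ (T.itineraries (rise j s) y).Countable) :
    ∃ s' b, s.length ≤ s'.length ∧ T.host (T.level s') s' = j ∧ y ∈ Icc (T.lo s') (T.hi s') ∧
      ¬ (T.itineraries (rise (T.level s' + 1) (b :: s')) y).Countable := by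
  by_contra! hall
  refine h (countable_itineraries_rise_of_hosts (fun s' hs' hosts => ?_) le_rfl)
  by_cases hy : y ∈ Icc (T.lo s') (T.hi s')
  · exact countable_itineraries_excursion (T.curveSystem.countable_itineraries_of_forall_child
      fun b => hall s' b hs' hosts.2 hy)
  · exact countable_itineraries_of_notMem hy

lemma exists_nested_strands_of_not_countable_itineraries
    (h : ¬ (T.itineraries (rise 0 []) y).Countable) :
    ∃ s : ℕ → List Bool, ∀ i, i ≤ (s i).length ∧ y ∈ Icc (T.lo (s i)) (T.hi (s i)) ∧
      T.host (T.level (s (i + 1))) (s (i + 1)) = T.level (s i) + 1 := by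
  have hnext (x : ℕ × List Bool) := exists_host_of_not_countable_itineraries (T := T) (y := y)
    (j := x.1) (s := x.2)
  choose! node turn hlonger hhost hmem hstep using hnext
  let next (x : ℕ × List Bool) : ℕ × List Bool := (T.level (node x) + 1, turn x :: node x)
  let x (i : ℕ) := next^[i] (0, [])
  have hx (i : ℕ) : x (i + 1) = next (x i) := Function.iterate_succ_apply' ..
  have hunc (i : ℕ) : ¬ (T.itineraries (rise (x i).1 (x i).2) y).Countable := by
    induction i with
    | zero => exact h
    | succ i ih => rw [hx]; exact hstep _ ih
  have hlen (i : ℕ) : i ≤ (x i).2.length := by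
    induction i with
    | zero => exact Nat.zero_le _
    | succ i ih => rw [hx]; exact Nat.succ_le_succ (ih.trans (hlonger _ (hunc i)))
  refine ⟨fun i => node (x i), fun i => ⟨(hlen i).trans (hlonger _ (hunc i)),
    hmem _ (hunc i), ?_⟩⟩
  rw [hhost _ (hunc (i + 1)), hx]

variable (hhost : ∀ k s, T.host k s = nestedHost p T.toIntervalTree k s)

include hhost in
lemma mem_range_of_not_countable_itineraries (hp : Continuous p)
    (h : ¬ (T.itineraries (rise 0 []) y).Countable) : y ∈ range p := by
  obtain ⟨s, hs⟩ := exists_nested_strands_of_not_countable_itineraries h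
  choose hlen hmem hnested using hs
  have hcode (i : ℕ) : (∃ σ n, prefixCode σ n = T.level (s (i + 1)) + 1 ∧
      p σ ∈ Icc (T.lo (s (i + 1))) (T.hi (s (i + 1)))) ∧
        parentCode (T.level (s (i + 1)) + 1) = T.level (s i) + 1 := by
    have heq := hnested i
    rw [hhost, nestedHost] at heq
    split_ifs at heq with halive
    obtain ⟨σ, ⟨n, hn⟩, hσ⟩ := halive
    exact ⟨⟨σ, n, hn, hσ⟩, heq⟩
  choose τ n hτ hpτ using fun i => (hcode i).1
  have hpos (i : ℕ) : n i ≠ 0 := fun h0 => by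
    have := hτ i
    rw [h0] at this
    exact (Nat.succ_ne_zero _ this.symm).elim
  obtain ⟨σ, hσ⟩ := exists_tendsto_of_parentCode_prefixCode hpos fun i => by
    rw [hτ, hτ, (hcode (i + 1)).2]
  refine ⟨σ, tendsto_nhds_unique ((hp.tendsto σ).comp hσ)
    (T.tendsto_of_mem_Icc (fun i => ?_) hpτ fun i => hmem (i + 1))⟩
  exact (Nat.le_succ i).trans (hlen (i + 1))

end ExcursionTree

/-! ### Uncountable fibres -/

/-- The nodes visited from the root by turning as prescribed by `d`. -/
def nodeSeq (d : List Bool → Bool) : ℕ → List Bool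
  | 0 => []
  | n + 1 => d (nodeSeq d n) :: nodeSeq d n

lemma nodeSeq_mem {d : List Bool → Bool} {S : Set (List Bool)} (hnil : [] ∈ S)
    (hcons : ∀ s ∈ S, d s :: s ∈ S) (n : ℕ) : nodeSeq d n ∈ S := by
  induction n with
  | zero => exact hnil
  | succ n ih => exact hcons _ ih

lemma length_nodeSeq (d : List Bool → Bool) (n : ℕ) : (nodeSeq d n).length = n := by
  induction n with
  | zero => rfl
  | succ n ih => exact congrArg Nat.succ ih

namespace IntervalTree

variable (T : IntervalTree) {s : List Bool} {y : ℝ}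

lemma mem_Ico_cons_decide_mid_le (hy : y ∈ Ico (T.lo s) (T.hi s)) :
    y ∈ Ico (T.lo (decide (T.mid s ≤ y) :: s)) (T.hi (decide (T.mid s ≤ y) :: s)) := by
  by_cases hmid : T.mid s ≤ y
  · rw [decide_eq_true hmid, T.lo_true, T.hi_true]
    exact ⟨hmid, hy.2⟩
  · rw [decide_eq_false hmid, T.lo_false, T.hi_false]
    exact ⟨hy.1, not_le.1 hmid⟩

lemma mem_Ioc_cons_decide_mid_lt (hy : y ∈ Ioc (T.lo s) (T.hi s)) :
    y ∈ Ioc (T.lo (decide (T.mid s < y) :: s)) (T.hi (decide (T.mid s < y) :: s)) := by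
  by_cases hmid : T.mid s < y
  · rw [decide_eq_true hmid, T.lo_true, T.hi_true]
    exact ⟨hmid, hy.2⟩
  · rw [decide_eq_false hmid, T.lo_false, T.hi_false]
    exact ⟨hy.1, not_lt.1 hmid⟩

lemma mem_Icc_cons_decide_mid_le (hy : y ∈ Icc (T.lo s) (T.hi s)) :
    y ∈ Icc (T.lo (decide (T.mid s ≤ y) :: s)) (T.hi (decide (T.mid s ≤ y) :: s)) := by
  by_cases hmid : T.mid s ≤ y
  · rw [decide_eq_true hmid, T.lo_true, T.hi_true]
    exact ⟨hmid, hy.2⟩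
  · rw [decide_eq_false hmid, T.lo_false, T.hi_false]
    exact ⟨hy.1, (not_le.1 hmid).le⟩

lemma mem_Icc_cons_decide_mid_lt (hy : y ∈ Icc (T.lo s) (T.hi s)) :
    y ∈ Icc (T.lo (decide (T.mid s < y) :: s)) (T.hi (decide (T.mid s < y) :: s)) := by
  by_cases hmid : T.mid s < y
  · rw [decide_eq_true hmid, T.lo_true, T.hi_true]
    exact ⟨hmid.le, hy.2⟩
  · rw [decide_eq_false hmid, T.lo_false, T.hi_false]
    exact ⟨hy.1, not_lt.1 hmid⟩

lemma mem_Icc_nil (hy : y ∈ Icc 0 1) : y ∈ Icc (T.lo []) (T.hi []) := by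
  rwa [T.lo_nil, T.hi_nil]

end IntervalTree

namespace ExcursionTree

open CurveState

variable {T : ExcursionTree} {s : List Bool} {y : ℝ} {p : (ℕ → ℕ) → ℝ}
  {d : List Bool → Bool} {σ : ℕ → ℕ}

open Classical in
/-- The choices of halves that follow the nodes prescribed by `d` on the strand of the longest
initial segment of `σ` present. -/
def strategy (T : ExcursionTree) (d : List Bool → Bool) (σ : ℕ → ℕ) : CurveState → Bool
  | rise j s => if T.Hosts j s then decide (T.level s + 1 ∉ range (prefixCode σ)) else d s
  | climb _ s => d s
  | excursion _ _ => false
  | fall s => !d s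

/-- The successor of a piece of the curve under `strategy`. -/
abbrev advance (T : ExcursionTree) (d : List Bool → Bool) (σ : ℕ → ℕ) : CurveState → CurveState :=
  T.curveSystem.follow (T.strategy d σ)

lemma mem_Icc_advance (hd : ∀ s, y ∈ Icc (T.lo s) (T.hi s) →
      y ∈ Icc (T.lo (d s :: s)) (T.hi (d s :: s))) {q : CurveState}
    (hy : y ∈ Icc (T.lo q.node) (T.hi q.node)) :
    y ∈ Icc (T.lo (T.advance d σ q).node) (T.hi (T.advance d σ q).node) := by
  have hnode : (T.advance d σ q).node = q.node ∨
      (T.advance d σ q).node = d q.node :: q.node := by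
    change (T.child (T.strategy d σ q) q).node = _ ∨ (T.child (T.strategy d σ q) q).node = _
    rcases q with ⟨j, s⟩ | ⟨j, s⟩ | ⟨j, s⟩ | s
    · by_cases h : T.Hosts j s
      · rw [T.child_rise_of_hosts h]
        cases T.strategy d σ (rise j s) <;> exact Or.inl rfl
      · rw [T.child_rise_of_not_hosts h, strategy, if_neg h]
        exact Or.inr rfl
    · exact Or.inr rfl
    · exact Or.inl rfl
    · simp [strategy, child, node]
  rcases hnode with h | h <;> rw [h]
  exacts [hy, hd _ hy]

variable (hhost : ∀ k s, T.host k s = nestedHost p T.toIntervalTree k s)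

lemma advance_rise_of_not_hosts {j : ℕ} (h : ¬ T.Hosts j s) :
    T.advance d σ (rise j s) = rise j (d s :: s) := by
  change T.child (T.strategy d σ (rise j s)) (rise j s) = _
  rw [T.child_rise_of_not_hosts h, strategy, if_neg h]

lemma advance_rise_of_mem {j : ℕ} (h : T.Hosts j s) (hcode : T.level s + 1 ∈ range (prefixCode σ)) :
    T.advance d σ (rise j s) = excursion (T.level s + 1) s := by
  change T.child (T.strategy d σ (rise j s)) (rise j s) = _
  rw [T.child_rise_of_hosts h, strategy, if_pos h]
  simp only [hcode, not_true_eq_false, decide_false, cond_false]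

lemma advance_rise_of_notMem {j : ℕ} (h : T.Hosts j s)
    (hcode : T.level s + 1 ∉ range (prefixCode σ)) : T.advance d σ (rise j s) = climb j s := by
  change T.child (T.strategy d σ (rise j s)) (rise j s) = _
  rw [T.child_rise_of_hosts h, strategy, if_pos h]
  simp only [hcode, not_false_eq_true, decide_true, cond_true]

include hhost in
lemma exists_iterate_advance_rise (hσ : p σ ∈ Icc (T.lo s) (T.hi s)) :
    ∃ m, (T.advance d σ)^[m] (rise (lastCode σ (T.level s)) s)
      = rise (lastCode σ (T.level (d s :: s))) (d s :: s) := by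
  by_cases hhosts : T.Hosts (lastCode σ (T.level s)) s
  · rw [level_cons_of_isGood hhosts.1]
    by_cases hcode : T.level s + 1 ∈ range (prefixCode σ)
    · refine ⟨3, ?_⟩
      rw [lastCode_of_mem hcode, Function.iterate_succ_apply, advance_rise_of_mem hhosts hcode]
      rfl
    · refine ⟨2, ?_⟩
      rw [lastCode_succ_of_notMem hcode, Function.iterate_succ_apply,
        advance_rise_of_notMem hhosts hcode]
      rfl
  · have hlast : lastCode σ (T.level (d s :: s)) = lastCode σ (T.level s) := by
      by_cases hgood : T.IsGood s
      · rw [level_cons_of_isGood hgood]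
        exact lastCode_succ_of_notMem fun hcode =>
          hhosts ⟨hgood, (hhost _ s).trans (nestedHost_eq_lastCode hcode hσ)⟩
      · rw [level_cons_of_not_isGood hgood]
    exact ⟨1, by rw [hlast]; exact advance_rise_of_not_hosts hhosts⟩

include hhost in
lemma exists_state_path_eq_rise (hσ : ∀ n, p σ ∈ Icc (T.lo (nodeSeq d n)) (T.hi (nodeSeq d n)))
    (n : ℕ) :
    ∃ m, T.curveSystem.state (rise 0 []) (T.curveSystem.path (T.strategy d σ) (rise 0 [])) m
      = rise (lastCode σ (T.level (nodeSeq d n))) (nodeSeq d n) := by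
  simp only [CurveSystem.state_path]
  induction n with
  | zero => exact ⟨0, congrArg (rise · []) (lastCode_zero σ).symm⟩
  | succ n ih =>
    obtain ⟨m, hm⟩ := ih
    obtain ⟨m', hm'⟩ := exists_iterate_advance_rise (d := d) hhost (hσ n)
    exact ⟨m' + m, by rw [Function.iterate_add_apply, hm]; exact hm'⟩

section Uncountable

variable (hd : ∀ s, y ∈ Icc (T.lo s) (T.hi s) → y ∈ Icc (T.lo (d s :: s)) (T.hi (d s :: s)))
  (hlevel : ∀ K, ∃ n, K ≤ T.level (nodeSeq d n)) (hy : y ∈ Icc 0 1)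

include hd hy in
lemma mem_Icc_nodeSeq (n : ℕ) : y ∈ Icc (T.lo (nodeSeq d n)) (T.hi (nodeSeq d n)) :=
  nodeSeq_mem (S := {s | y ∈ Icc (T.lo s) (T.hi s)}) (T.mem_Icc_nil hy) hd n

include hhost hd hlevel hy in
lemma injOn_path_strategy :
    InjOn (fun σ => T.curveSystem.path (T.strategy d σ) (rise 0 [])) {σ | p σ = y} := by
  intro σ hσ τ hτ heq
  have hmem := mem_Icc_nodeSeq hd hy
  refine eq_of_lastCode_eq fun K => ?_
  obtain ⟨n, hn⟩ := hlevel K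
  obtain ⟨m, hm⟩ := exists_state_path_eq_rise hhost (fun n => hσ ▸ hmem n) n
  obtain ⟨m', hm'⟩ := exists_state_path_eq_rise hhost (fun n => hτ ▸ hmem n) n
  dsimp only at heq
  rw [heq] at hm
  have htime : m = m' :=
    (T.curveSystem.strictMono_depth_state (rise 0 [])
      (T.curveSystem.path (T.strategy d τ) (rise 0 []))).injective (by simp only [hm, hm']; rfl)
  rw [htime, hm'] at hm
  exact ⟨_, hn, (CurveState.rise.inj hm).1.symm⟩

include hhost hd hlevel hy in
lemma not_countable_itineraries (hunc : ¬ {σ | p σ = y}.Countable) :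
    ¬ (T.itineraries (rise 0 []) y).Countable := by
  refine fun hcount => hunc (MapsTo.countable_of_injOn (fun σ _ => ?_)
    (injOn_path_strategy hhost hd hlevel hy) hcount)
  exact T.curveSystem.path_mem_itineraries (T.mem_Icc_nil hy) fun q hq => mem_Icc_advance hd hq

end Uncountable

namespace HasLevels

variable {left right : ℝ → ℕ∞} (h : T.HasLevels left right) (hunc : ¬ {σ | p σ = y}.Countable)

include hhost h hunc

lemma not_countable_itineraries_of_right (hy : y ∈ Ico 0 1) (htop : right y = ⊤) :
    ¬ (T.itineraries (rise 0 []) y).Countable := by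
  refine ExcursionTree.not_countable_itineraries hhost (fun s => T.mem_Icc_cons_decide_mid_le)
    (fun K => ?_) (Ico_subset_Icc_self hy) hunc
  obtain ⟨N, hN⟩ := h.exists_forall_le_level_right (k := K) (htop ▸ le_top)
  exact ⟨N, hN _ (length_nodeSeq _ N).ge (nodeSeq_mem (S := {s | y ∈ Ico (T.lo s) (T.hi s)})
    (by rwa [mem_ofPred_eq, T.lo_nil, T.hi_nil]) (fun s => T.mem_Ico_cons_decide_mid_le) N)⟩

lemma not_countable_itineraries_of_left (hy : y ∈ Ioc 0 1) (htop : left y = ⊤) :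
    ¬ (T.itineraries (rise 0 []) y).Countable := by
  refine ExcursionTree.not_countable_itineraries hhost (fun s => T.mem_Icc_cons_decide_mid_lt)
    (fun K => ?_) (Ioc_subset_Icc_self hy) hunc
  obtain ⟨N, hN⟩ := h.exists_forall_le_level_left (k := K) (htop ▸ le_top)
  exact ⟨N, hN _ (length_nodeSeq _ N).ge (nodeSeq_mem (S := {s | y ∈ Ioc (T.lo s) (T.hi s)})
    (by rwa [mem_ofPred_eq, T.lo_nil, T.hi_nil]) (fun s => T.mem_Ioc_cons_decide_mid_lt) N)⟩

lemma not_countable_itineraries (h₀ : left 0 = 0) (h₁ : right 1 = 0) (hy : y ∈ Icc 0 1)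
    (htop : left y + right y = ⊤) : ¬ (T.itineraries (rise 0 []) y).Countable := by
  rcases WithTop.add_eq_top.1 htop with htop | htop
  · refine h.not_countable_itineraries_of_left hhost hunc ⟨hy.1.lt_of_ne' fun heq => ?_, hy.2⟩ htop
    exact ENat.zero_ne_top (h₀.symm.trans (heq ▸ htop))
  · refine h.not_countable_itineraries_of_right hhost hunc ⟨hy.1, hy.2.lt_of_ne fun heq => ?_⟩ htop
    exact ENat.zero_ne_top (h₁.symm.trans (heq ▸ htop))

end HasLevels

end ExcursionTree

/-! ### Splitting a multiplicity into its two sides -/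

section SplitLevels

variable {A B : ℕ → Prop}

lemma exists_forall_natCast_le_iff (hA : Antitone A) (h₀ : A 0) :
    ∃ a : ℕ∞, ∀ k : ℕ, k ≤ a ↔ A k := by
  refine ⟨⨆ (k : ℕ) (_ : A k), (k : ℕ∞), fun k => ⟨fun hk => ?_, fun hk => ?_⟩⟩
  · rcases k with _ | k
    · exact h₀
    · have hlt : (k : ℕ∞) < ⨆ (m : ℕ) (_ : A m), (m : ℕ∞) :=
        (Nat.cast_lt.2 k.lt_succ_self).trans_le hk
      simp only [lt_iSup_iff, Nat.cast_lt] at hlt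
      obtain ⟨m, hm, hkm⟩ := hlt
      exact hA (Nat.succ_le_of_lt hkm) hm
  · exact le_iSup₂ (f := fun (m : ℕ) (_ : A m) => (m : ℕ∞)) k hk

lemma exists_add_eq_top_of_forall_split (hA : Antitone A) (hB : Antitone B)
    (hsplit : ∀ n, ∃ i j, i + j = n ∧ A i ∧ B j) :
    ∃ a b : ℕ∞, a + b = ⊤ ∧ (∀ k : ℕ, k ≤ a ↔ A k) ∧ ∀ k : ℕ, k ≤ b ↔ B k := by
  obtain ⟨i, j, -, hi, hj⟩ := hsplit 0
  obtain ⟨a, ha⟩ := exists_forall_natCast_le_iff hA (hA (Nat.zero_le i) hi)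
  obtain ⟨b, hb⟩ := exists_forall_natCast_le_iff hB (hB (Nat.zero_le j) hj)
  refine ⟨a, b, ENat.eq_top_iff_forall_ge.2 fun n => ?_, ha, hb⟩
  obtain ⟨i, j, rfl, hi, hj⟩ := hsplit n
  rw [Nat.cast_add]
  exact add_le_add ((ha i).2 hi) ((hb j).2 hj)

lemma exists_add_eq_of_split (hA : Antitone A) (hB : Antitone B) {n : ℕ}
    (hsplit : ∃ i j, i + j = n ∧ A i ∧ B j) :
    ∃ i j, i + j = n ∧ A i ∧ B j ∧ ∀ k, 2 * k ≤ n → A k → B k → k ≤ i ∧ k ≤ j := by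
  classical
  obtain ⟨i, j, hij, hi, hj⟩ := hsplit
  set m := Nat.findGreatest (fun k => 2 * k ≤ n ∧ A k ∧ B k) n
  obtain ⟨hmn, hmA, hmB⟩ : 2 * m ≤ n ∧ A m ∧ B m :=
    Nat.findGreatest_spec (P := fun k => 2 * k ≤ n ∧ A k ∧ B k) (Nat.zero_le n)
      ⟨Nat.zero_le n, hA (Nat.zero_le i) hi, hB (Nat.zero_le j) hj⟩
  have hle (k : ℕ) (hk : 2 * k ≤ n) (hkA : A k) (hkB : B k) : k ≤ m :=
    Nat.le_findGreatest (by omega) ⟨hk, hkA, hkB⟩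
  -- Shift the given splitting towards the balanced one until both parts are at least `m`.
  suffices ∃ i j, i + j = n ∧ A i ∧ B j ∧ m ≤ i ∧ m ≤ j by
    obtain ⟨i, j, hij, hi, hj, hmi, hmj⟩ := this
    exact ⟨i, j, hij, hi, hj, fun k hk hkA hkB =>
      ⟨(hle k hk hkA hkB).trans hmi, (hle k hk hkA hkB).trans hmj⟩⟩
  rcases lt_or_ge i m with him | hmi
  · exact ⟨m, n - m, by omega, hmA, hB (by omega) hj, le_rfl, by omega⟩
  rcases lt_or_ge j m with hjm | hmj
  · exact ⟨n - m, m, by omega, hA (by omega) hi, hmB, by omega, le_rfl⟩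
  · exact ⟨i, j, hij, hi, hj, hmi, hmj⟩

lemma exists_add_eq_of_forall_split (hA : Antitone A) (hB : Antitone B) (N : ℕ∞)
    (hsplit : ∀ n : ℕ, n ≤ N → ∃ i j, i + j = n ∧ A i ∧ B j) :
    ∃ a b : ℕ∞, a + b = N ∧ (∀ k : ℕ, k ≤ a → A k) ∧ (∀ k : ℕ, k ≤ b → B k) ∧
      ∀ k : ℕ, ((2 * k : ℕ) : ℕ∞) ≤ N → A k → B k → k ≤ a ∧ k ≤ b := by
  induction N using ENat.recTopCoe with
  | top =>
    obtain ⟨a, b, hab, ha, hb⟩ := exists_add_eq_top_of_forall_split hA hB fun n => hsplit n le_top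
    exact ⟨a, b, hab, fun k => (ha k).1, fun k => (hb k).1,
      fun k _ hkA hkB => ⟨(ha k).2 hkA, (hb k).2 hkB⟩⟩
  | coe n =>
    obtain ⟨i, j, rfl, hi, hj, hmax⟩ := exists_add_eq_of_split hA hB (hsplit n le_rfl)
    refine ⟨i, j, (Nat.cast_add i j).symm, fun k hk => hA (Nat.cast_le.1 hk) hi,
      fun k hk => hB (Nat.cast_le.1 hk) hj, fun k hk hkA hkB => ?_⟩
    simpa only [Nat.cast_le] using hmax k (Nat.cast_le.1 hk) hkA hkB

end SplitLevels

/-- Values `a` and `b` on two sides of a point leave room for `n` strands ending over that point,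
`i` of them on the one side and `j` on the other: a point passed by strand `0` and by `k` further
strands, each with its fall, is taken `2 * k + 1` times. -/
def HasRoom (n : ℕ) (a b : ℕ∞) : Prop :=
  ∃ i j : ℕ, i + j = n ∧ ((2 * i + 1 : ℕ) : ℕ∞) ≤ a ∧ ((2 * j + 1 : ℕ) : ℕ∞) ≤ b

section Room

variable {g : ℝ → ℕ∞} {n : ℕ}

lemma antitone_eventually_two_mul_add_one_le (g : ℝ → ℕ∞) (l : Filter ℝ) :
    Antitone fun k : ℕ => ∀ᶠ z in l, ((2 * k + 1 : ℕ) : ℕ∞) ≤ g z :=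
  fun i j hij h => h.mono fun z hz => (Nat.cast_le.2 (by omega)).trans hz

lemma exists_split_of_eventually_hasRoom (hg : ∀ z, 1 ≤ g z) {l₁ l₂ : Filter ℝ}
    (h : ∀ᶠ z in l₁ ×ˢ l₂, HasRoom n (g z.1) (g z.2)) :
    ∃ i j : ℕ, i + j = n ∧ (∀ᶠ z in l₁, ((2 * i + 1 : ℕ) : ℕ∞) ≤ g z) ∧
      ∀ᶠ z in l₂, ((2 * j + 1 : ℕ) : ℕ∞) ≤ g z := by
  classical
  have hzero (l : Filter ℝ) : ∀ᶠ z in l, ((2 * 0 + 1 : ℕ) : ℕ∞) ≤ g z :=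
    Eventually.of_forall fun z => by simpa using hg z
  set i := Nat.findGreatest (fun k => ∀ᶠ z in l₁, ((2 * k + 1 : ℕ) : ℕ∞) ≤ g z) n
  have hspec : ∀ᶠ z in l₁, ((2 * i + 1 : ℕ) : ℕ∞) ≤ g z :=
    Nat.findGreatest_spec (P := fun k => ∀ᶠ z in l₁, ((2 * k + 1 : ℕ) : ℕ∞) ≤ g z)
      (Nat.zero_le n) (hzero l₁)
  rcases (Nat.findGreatest_le n : i ≤ n).eq_or_lt with hin | hin
  · exact ⟨n, 0, rfl, hin ▸ hspec, hzero l₂⟩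
  obtain ⟨U, hU, V, hV, hUV⟩ := mem_prod_iff.1 h
  have hnext : ¬ ∀ᶠ z in l₁, ((2 * (i + 1) + 1 : ℕ) : ℕ∞) ≤ g z :=
    Nat.findGreatest_is_greatest (Nat.lt_succ_self _) hin
  obtain ⟨z₁, hz₁, hlt⟩ : ∃ z₁ ∈ U, ¬ ((2 * (i + 1) + 1 : ℕ) : ℕ∞) ≤ g z₁ := by
    by_contra! hle
    exact hnext (mem_of_superset hU hle)
  refine ⟨i, n - i, by omega, hspec, mem_of_superset hV fun z₂ hz₂ => ?_⟩
  obtain ⟨i', j', hij, hi', hj'⟩ := hUV (mk_mem_prod hz₁ hz₂)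
  have hle : i' < i + 1 := by
    by_contra! hle
    exact hlt ((Nat.cast_le.2 (by omega)).trans hi')
  exact (Nat.cast_le.2 (by omega)).trans hj'

lemma interior_mem_nhdsWithin {X : Type*} [TopologicalSpace X] {s t : Set X} {x : X}
    (ht : IsOpen t) (hs : s ∈ 𝓝[t] x) : interior s ∈ 𝓝[t] x := by
  filter_upwards [eventually_eventually_nhdsWithin.2 hs, self_mem_nhdsWithin] with z hz hzt
  rwa [mem_interior_iff_mem_nhds, ← ht.nhdsWithin_eq hzt]

lemma exists_strandProfile (hg : ∀ z, 1 ≤ g z)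
    (hroom : ∀ y (n : ℕ), n + 1 ≤ g y →
      ∀ᶠ z in 𝓝[<] y ×ˢ 𝓝[>] y, HasRoom n (g z.1) (g z.2)) :
    ∃ P : StrandProfile, ∀ y, P.left y + P.right y + 1 = g y := by
  choose N hN using fun y => exists_add_of_le (hg y)
  choose left right hadd hleft hright hboth using fun y =>
    exists_add_eq_of_forall_split (antitone_eventually_two_mul_add_one_le g (𝓝[<] y))
      (antitone_eventually_two_mul_add_one_le g (𝓝[>] y)) (N y) fun n hn =>
        exists_split_of_eventually_hasRoom hg <| hroom y n <| by
          rw [hN, add_comm]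
          exact add_le_add_right hn 1
  have hregion {k : ℕ} {y : ℝ} (hy : y ∈ interior {z | ((2 * k + 1 : ℕ) : ℕ∞) ≤ g z}) :
      k ≤ left y ∧ k ≤ right y := by
    have hnhds := mem_interior_iff_mem_nhds.1 hy
    refine hboth y k ?_ (mem_nhdsWithin_of_mem_nhds hnhds) (mem_nhdsWithin_of_mem_nhds hnhds)
    have hle := mem_of_mem_nhds hnhds
    rw [mem_ofPred_eq, hN, Nat.cast_succ, add_comm] at hle
    exact (ENat.add_le_add_iff_left ENat.one_ne_top).1 hle
  refine ⟨{ left, right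
            region := fun k => interior {z | ((2 * k + 1 : ℕ) : ℕ∞) ≤ g z}
            isOpen_region := fun k => isOpen_interior
            region_zero := by simp [hg]
            le_left_of_mem_region := fun hy => (hregion hy).1
            le_right_of_mem_region := fun hy => (hregion hy).2
            region_mem_nhdsLT := fun {k y} hk => ?_
            region_mem_nhdsGT := fun {k y} hk => ?_ }, fun y => ?_⟩
  · exact interior_mem_nhdsWithin isOpen_Iio (hleft y k hk)
  · exact interior_mem_nhdsWithin isOpen_Ioi (hright y k hk)
  · rw [hadd, hN, add_comm]

end Room

namespace StrandProfile

variable (P : StrandProfile) {y : ℝ}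

lemma countable_jumps : P.jumps.Countable := by
  have hsub : P.jumps ⊆
      ⋃ k, {y ∈ (P.region k)ᶜ | 𝓝[(P.region k)ᶜ ∩ Iio y] y = ⊥} ∪
        {y ∈ (P.region k)ᶜ | 𝓝[(P.region k)ᶜ ∩ Ioi y] y = ⊥} := by
    rintro y ⟨k, hy, hside⟩
    refine mem_iUnion_of_mem k (hside.imp (fun h => ⟨hy, ?_⟩) fun h => ⟨hy, ?_⟩)
    all_goals
      rw [inter_comm, nhdsWithin_inter']
      exact mem_iff_inf_principal_compl.1 h
  exact (countable_iUnion fun k => countable_setOfPred_isolated_left_within.union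
    countable_setOfPred_isolated_right_within).mono hsub

lemma left_eq_zero (h : ∃ᶠ z in 𝓝[<] y, P.left z = 0) : P.left y = 0 := by
  by_contra hne
  have hregion : P.region 1 ∈ 𝓝[<] y :=
    P.region_mem_nhdsLT (by simpa [Order.one_le_iff_ne_zero] using hne)
  obtain ⟨z, hz, hzero⟩ := (h.and_eventually hregion).exists
  simpa [hz] using P.le_left_of_mem_region hzero

lemma right_eq_zero (h : ∃ᶠ z in 𝓝[>] y, P.right z = 0) : P.right y = 0 := by
  by_contra hne
  have hregion : P.region 1 ∈ 𝓝[>] y :=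
    P.region_mem_nhdsGT (by simpa [Order.one_le_iff_ne_zero] using hne)
  obtain ⟨z, hz, hzero⟩ := (h.and_eventually hregion).exists
  simpa [hz] using P.le_right_of_mem_region hzero

end StrandProfile

/-! ### Conditions (1) and (**) as room for strands -/

section RoomArithmetic

variable {n : ℕ} {a b : ℕ∞}

lemma hasRoom_zero (ha : 1 ≤ a) (hb : 1 ≤ b) : HasRoom 0 a b :=
  ⟨0, 0, rfl, by simpa using ha, by simpa using hb⟩

lemma HasRoom.symm (h : HasRoom n a b) : HasRoom n b a := by
  obtain ⟨i, j, hij, hi, hj⟩ := h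
  exact ⟨j, i, by omega, hj, hi⟩

lemma hasRoom_of_two_mul_add_two_lt (ha : 1 ≤ a) (hb : 1 ≤ b)
    (h : ((2 * n + 2 : ℕ) : ℕ∞) < a + b) : HasRoom n a b := by
  induction a using ENat.recTopCoe with
  | top => exact ⟨n, 0, by simp, le_top, by simpa using hb⟩
  | coe a =>
    induction b using ENat.recTopCoe with
    | top => exact ⟨0, n, by simp, by simpa using ha, le_top⟩
    | coe b =>
      norm_cast at ha hb h
      refine ⟨min n ((a - 1) / 2), n - min n ((a - 1) / 2), by omega, ?_, ?_⟩ <;>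
        exact Nat.cast_le.2 (by omega)

lemma natCast_two_mul_add_two_le {c d : Cardinal} (hn : (n : Cardinal) + 1 ≤ c) (h : 2 * c ≤ d) :
    ((2 * n + 2 : ℕ) : Cardinal) ≤ d := by
  refine le_trans ?_ ((mul_le_mul_right hn 2).trans h)
  norm_cast

lemma hasRoom_toENat_of_two_mul_le {a b c : Cardinal} (ha : 1 ≤ a) (hb : 1 ≤ b)
    (hn : (n : Cardinal) + 1 ≤ c) (hle : 2 * c ≤ a + b)
    (hodd : a + b = 2 * c → (∃ k : ℕ, a = k ∧ Odd k) ∧ ∃ k : ℕ, b = k ∧ Odd k) :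
    HasRoom n (toENat a) (toENat b) := by
  rcases hle.eq_or_lt with heq | hlt
  · obtain ⟨⟨_, rfl, i, rfl⟩, _, rfl, j, rfl⟩ := hodd heq.symm
    have hsum := natCast_two_mul_add_two_le hn hle
    norm_cast at hsum
    refine ⟨min n i, n - min n i, by omega, ?_, ?_⟩ <;>
    · rw [toENat_nat]
      exact Nat.cast_le.2 (by omega)
  · refine hasRoom_of_two_mul_add_two_lt (by simpa using ha) (by simpa using hb) ?_
    rw [← map_add, natCast_lt_toENat]
    exact (natCast_two_mul_add_two_le hn le_rfl).trans_lt hlt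

lemma hasRoom_toENat_one_left {b c : Cardinal} (hn : (n : Cardinal) + 1 ≤ c) (h : 2 * c ≤ 1 + b) :
    HasRoom n (toENat 1) (toENat b) := by
  have hle : ((2 * n + 2 : ℕ) : ℕ∞) ≤ 1 + toENat b := by
    simpa using natCast_le_toENat.2 (natCast_two_mul_add_two_le hn h)
  refine ⟨0, n, by simp, by simp, (ENat.add_le_add_iff_left ENat.one_ne_top).1 (le_trans ?_ hle)⟩
  norm_cast
  omega

end RoomArithmetic

open Classical in
/-- The function `f` on `[0,1]`, extended by `1` to the line. This is the convention that condition
(**) uses at the end points. -/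
def extendByOne (f : ℝ → Cardinal.{0}) (y : ℝ) : Cardinal.{0} := if y ∈ Icc 0 1 then f y else 1

section Extension

variable {f : ℝ → Cardinal.{0}} {y : ℝ} {n : ℕ}

lemma extendByOne_of_mem (hy : y ∈ Icc 0 1) : extendByOne f y = f y :=
  if_pos hy

lemma extendByOne_of_notMem (hy : y ∉ Icc 0 1) : extendByOne f y = 1 :=
  if_neg hy

lemma one_le_extendByOne (hf : ∀ y ∈ Icc 0 1, 1 ≤ f y) (y : ℝ) : 1 ≤ extendByOne f y := by
  by_cases hy : y ∈ Icc 0 1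
  · rw [extendByOne_of_mem hy]
    exact hf y hy
  · rw [extendByOne_of_notMem hy]

lemma eventually_extendByOne {R : Cardinal.{0} → Cardinal.{0} → Prop} (hy : y ∈ Icc 0 1)
    {ε : ℝ} (hε : 0 < ε)
    (hmid : y ∈ Ioo 0 1 → ∀ y₁ ∈ Icc (0 : ℝ) 1, ∀ y₂ ∈ Icc (0 : ℝ) 1,
      y - ε < y₁ → y₁ < y → y < y₂ → y₂ < y + ε → R (f y₁) (f y₂))
    (hzero : y = 0 → ∀ y₂ ∈ Icc (0 : ℝ) 1, 0 < y₂ → y₂ < ε → R 1 (f y₂))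
    (hone : y = 1 → ∀ y₁ ∈ Icc (0 : ℝ) 1, 1 - ε < y₁ → y₁ < 1 → R (f y₁) 1) :
    ∀ᶠ z in 𝓝[<] y ×ˢ 𝓝[>] y, R (extendByOne f z.1) (extendByOne f z.2) := by
  have hleft : ∀ᶠ z in 𝓝[<] y, y - ε < z ∧ z < y := Ioo_mem_nhdsLT (sub_lt_self y hε)
  have hright : ∀ᶠ z in 𝓝[>] y, y < z ∧ z < y + ε := Ioo_mem_nhdsGT (lt_add_of_pos_right y hε)
  have hleft₀ (h : 0 < y) : ∀ᶠ z in 𝓝[<] y, z ∈ Icc 0 1 :=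
    mem_of_superset (Ioo_mem_nhdsLT h) fun z hz => ⟨hz.1.le, hz.2.le.trans hy.2⟩
  have hright₁ (h : y < 1) : ∀ᶠ z in 𝓝[>] y, z ∈ Icc 0 1 :=
    mem_of_superset (Ioo_mem_nhdsGT h) fun z hz => ⟨hy.1.trans hz.1.le, hz.2.le⟩
  rcases hy.1.eq_or_lt with rfl | hpos
  · filter_upwards [hleft.prod_mk (hright.and (hright₁ one_pos))] with z ⟨hz₁, hz₂, hmem₂⟩
    rw [extendByOne_of_notMem fun h => h.1.not_gt hz₁.2, extendByOne_of_mem hmem₂]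
    exact hzero rfl _ hmem₂ hz₂.1 (by simpa using hz₂.2)
  rcases hy.2.eq_or_lt with rfl | hlt
  · filter_upwards [(hleft.and (hleft₀ one_pos)).prod_mk hright] with z ⟨⟨hz₁, hmem₁⟩, hz₂⟩
    rw [extendByOne_of_mem hmem₁, extendByOne_of_notMem fun h => h.2.not_gt hz₂.1]
    exact hone rfl _ hmem₁ hz₁.1 hz₁.2
  · filter_upwards [(hleft.and (hleft₀ hpos)).prod_mk (hright.and (hright₁ hlt))]
      with z ⟨⟨hz₁, hmem₁⟩, hz₂, hmem₂⟩
    rw [extendByOne_of_mem hmem₁, extendByOne_of_mem hmem₂]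
    exact hmid ⟨hpos, hlt⟩ _ hmem₁ _ hmem₂ hz₁.1 hz₁.2 hz₂.1 hz₂.2

lemma CondStar.eventually_hasRoom (h : CondStar f y) (hf : ∀ y ∈ Icc 0 1, 1 ≤ f y)
    (hy : y ∈ Icc 0 1) (n : ℕ) :
    ∀ᶠ z in 𝓝[<] y ×ˢ 𝓝[>] y,
      HasRoom n (toENat (extendByOne f z.1)) (toENat (extendByOne f z.2)) := by
  obtain ⟨ε, hε, hmid, hzero, hone⟩ := h (2 * n + 3)
  have hlarge := eventually_extendByOne (f := f)
    (R := fun a b => ((2 * n + 3 : ℕ) : Cardinal) ≤ a + b) hy hε (fun _ => hmid) hzero hone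
  filter_upwards [hlarge] with z hz
  refine hasRoom_of_two_mul_add_two_lt (by simpa using one_le_extendByOne hf z.1)
    (by simpa using one_le_extendByOne hf z.2) ?_
  rw [← map_add]
  exact (Nat.cast_lt.2 (Nat.lt_succ_self _)).trans_le (natCast_le_toENat.2 hz)

lemma Cond1.eventually_hasRoom (h : Cond1 f) (hf : ∀ y ∈ Icc 0 1, 1 ≤ f y) (hy : y ∈ Icc 0 1)
    (hfin : f y < ℵ₀) (hn : (n : Cardinal) + 1 ≤ f y) :
    ∀ᶠ z in 𝓝[<] y ×ˢ 𝓝[>] y,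
      HasRoom n (toENat (extendByOne f z.1)) (toENat (extendByOne f z.2)) := by
  rcases hy.1.eq_or_lt with rfl | hpos
  · obtain ⟨ε, hε, hzero⟩ := h.2.1 hfin
    exact eventually_extendByOne (R := fun a b => HasRoom n (toENat a) (toENat b)) hy hε
      (fun hmem => absurd hmem.1 (lt_irrefl 0))
      (fun _ y₂ h₂ hy₂ hε₂ => hasRoom_toENat_one_left hn (hzero y₂ h₂ hy₂ hε₂))
      (fun heq => absurd heq zero_ne_one)
  rcases hy.2.eq_or_lt with rfl | hlt
  · obtain ⟨ε, hε, hone⟩ := h.2.2 hfin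
    exact eventually_extendByOne (R := fun a b => HasRoom n (toENat a) (toENat b)) hy hε
      (fun hmem => absurd hmem.2 (lt_irrefl 1)) (fun heq => absurd heq one_ne_zero)
      (fun _ y₁ h₁ hε₁ hy₁ =>
        (hasRoom_toENat_one_left hn ((hone y₁ h₁ hε₁ hy₁).trans_eq (add_comm _ _))).symm)
  · obtain ⟨ε, hε, hmid⟩ := h.1 y ⟨hpos, hlt⟩ hfin
    refine eventually_extendByOne (R := fun a b => HasRoom n (toENat a) (toENat b)) hy hε
      (fun _ y₁ h₁ y₂ h₂ hε₁ hy₁ hy₂ hε₂ => ?_) (fun heq => absurd heq hpos.ne')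
      (fun heq => absurd heq hlt.ne)
    obtain ⟨hle, hodd⟩ := hmid y₁ h₁ y₂ h₂ hε₁ hy₁ hy₂ hε₂
    exact hasRoom_toENat_of_two_mul_le (hf y₁ h₁) (hf y₂ h₂) hn hle hodd

lemma eventually_hasRoom_extendByOne (h₁ : Cond1 f) (hf : ∀ y ∈ Icc 0 1, 1 ≤ f y)
    (hstar : ∀ y ∈ Icc 0 1, ℵ₀ ≤ f y → CondStar f y) (y : ℝ) (n : ℕ)
    (hn : n + 1 ≤ toENat (extendByOne f y)) :
    ∀ᶠ z in 𝓝[<] y ×ˢ 𝓝[>] y,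
      HasRoom n (toENat (extendByOne f z.1)) (toENat (extendByOne f z.2)) := by
  by_cases hy : y ∈ Icc 0 1
  · rw [extendByOne_of_mem hy] at hn
    have hn' : (n : Cardinal) + 1 ≤ f y := by exact_mod_cast natCast_le_toENat.1 hn
    rcases lt_or_ge (f y) ℵ₀ with hfin | hinf
    exacts [h₁.eventually_hasRoom hf hy hfin hn', (hstar y hy hinf).eventually_hasRoom hf hy n]
  · rw [extendByOne_of_notMem hy, map_one] at hn
    obtain rfl : n = 0 := by
      norm_cast at hn
      omega
    exact Eventually.of_forall fun z => hasRoom_zero (by simpa using one_le_extendByOne hf z.1)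
      (by simpa using one_le_extendByOne hf z.2)

lemma exists_strandProfile_of_cond1_condStar (h₁ : Cond1 f) (hf : ∀ y ∈ Icc 0 1, 1 ≤ f y)
    (hstar : ∀ y ∈ Icc 0 1, ℵ₀ ≤ f y → CondStar f y) :
    ∃ P : StrandProfile, (∀ y ∈ Icc 0 1, P.left y + P.right y + 1 = toENat (f y)) ∧
      P.left 0 = 0 ∧ P.right 1 = 0 := by
  obtain ⟨P, hP⟩ := exists_strandProfile (g := fun y => toENat (extendByOne f y))
    (fun y => by simpa using one_le_extendByOne hf y) (eventually_hasRoom_extendByOne h₁ hf hstar)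
  have hout (y : ℝ) (hy : y ∉ Icc 0 1) : P.left y = 0 ∧ P.right y = 0 := by
    simpa [extendByOne_of_notMem hy] using hP y
  refine ⟨P, fun y hy => by rw [hP, extendByOne_of_mem hy], ?_, ?_⟩
  · have hleft : ∀ᶠ z in 𝓝[<] (0 : ℝ), P.left z = 0 :=
      eventually_nhdsWithin_of_forall fun z hz => (hout z fun hmem => hmem.1.not_gt hz).1
    exact P.left_eq_zero hleft.frequently
  · have hright : ∀ᶠ z in 𝓝[>] (1 : ℝ), P.right z = 0 :=
      eventually_nhdsWithin_of_forall fun z hz => (hout z fun hmem => hmem.2.not_gt hz).2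
    exact P.right_eq_zero hright.frequently

end Extension

/-! ### The indicatrix -/

lemma exists_continuous_range_subset_insert {X : Type*} [TopologicalSpace X] {A : Set X}
    (hA : MeasureTheory.AnalyticSet A) (c : X) :
    ∃ p : (ℕ → ℕ) → X, Continuous p ∧ range p ⊆ insert c A ∧
      ∀ y ∈ A, ¬ {σ | p σ = y}.Countable := by
  rw [MeasureTheory.AnalyticSet] at hA
  rcases hA with rfl | ⟨p, hp, rfl⟩
  · exact ⟨fun _ => c, continuous_const, by simp, by simp⟩
  refine ⟨fun σ => p fun n => (σ n).unpair.1, hp.comp ?_, ?_, ?_⟩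
  · exact continuous_pi fun n =>
      (continuous_of_discreteTopology (f := fun m : ℕ => m.unpair.1)).comp (continuous_apply n)
  · exact range_subset_iff.2 fun σ => mem_insert_of_mem c ⟨_, rfl⟩
  · rintro _ ⟨σ, rfl⟩ hcount
    have hinj : Function.Injective fun (τ : ℕ → ℕ) n => Nat.pair (σ n) (τ n) :=
      fun τ τ' h => funext fun n => (Nat.pair_eq_pair.1 (congrFun h n)).2
    have hmaps : MapsTo (fun (τ : ℕ → ℕ) n => Nat.pair (σ n) (τ n)) Set.univ
        {ρ | (p fun n => (ρ n).unpair.1) = p σ} := fun τ _ => by simp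
    have hbaire : #(ℕ → ℕ) ≤ ℵ₀ :=
      mk_univ.symm.trans_le (hmaps.countable_of_injOn hinj.injOn hcount).le_aleph0
    exact hbaire.not_gt (by simpa using aleph0_lt_continuum)

lemma mk_eq_continuum_of_isClosed {S : Set ℝ} (hS : IsClosed S) (h : ¬ S.Countable) : #S = 𝔠 := by
  obtain ⟨φ, hφ, -, hinj⟩ := hS.exists_nat_bool_injection_of_not_countable h
  refine le_antisymm ((mk_set_le S).trans_eq mk_real) ?_
  simpa using mk_le_of_injective (f := fun x => (⟨φ x, hφ ⟨x, rfl⟩⟩ : S))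
    fun x y hxy => hinj (congrArg Subtype.val hxy)

lemma StrandProfile.exists_excursionTree (P : StrandProfile) (p : (ℕ → ℕ) → ℝ) :
    ∃ T : ExcursionTree, T.HasLevels P.left P.right ∧
      ∀ k s, T.host k s = nestedHost p T.toIntervalTree k s := by
  obtain ⟨T, hT⟩ := exists_intervalTree_of_countable P.countable_jumps
  exact ⟨{ T with
    allowed := P.Allows T
    host := nestedHost p T
    host_le := nestedHost_le p T },
    ExcursionTree.hasLevels_of_allowed_iff (fun _ _ => Iff.rfl) hT, fun _ _ => rfl⟩

namespace ExcursionTree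

open CurveState

variable (T : ExcursionTree)

/-- The curve traced by strand `0` over the whole of `[0,1]`. -/
abbrev mainCurve : ℝ → ℝ := T.curveSystem.curve (rise 0 [])

lemma mapsTo_mainCurve : MapsTo T.mainCurve (Icc 0 1) (Icc 0 1) := fun t ht => by
  have hmem : T.mainCurve t ∈ Icc (T.lo []) (T.hi []) := T.curveSystem.curve_mem_hull (rise 0 []) ht
  rwa [T.lo_nil, T.hi_nil] at hmem

lemma isClosed_sec_mainCurve (y : ℝ) : IsClosed (Sec T.mainCurve y) :=
  (T.curveSystem.continuousOn_curve _).preimage_isClosed_of_isClosed isClosed_Icc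
    isClosed_singleton

end ExcursionTree

section Cardinality

variable {T : ExcursionTree} {left right : ℝ → ℕ∞} {p : (ℕ → ℕ) → ℝ} {y : ℝ}

variable (hlevels : T.HasLevels left right)
  (hhost : ∀ k s, T.host k s = nestedHost p T.toIntervalTree k s)
  (h₀ : left 0 = 0) (h₁ : right 1 = 0) (hy : y ∈ Icc 0 1)

include hlevels hhost h₀ h₁ hy

lemma mk_sec_mainCurve_eq_of_le_aleph0 (hp : Continuous p) {c : Cardinal} (hc : c ≤ ℵ₀)
    (hsum : left y + right y + 1 = toENat c)
    (hnot : y ∉ range p) : #(Sec T.mainCurve y) = c := by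
  have hcount : (Sec T.mainCurve y).Countable :=
    T.curveSystem.countable_setOf_mem_Icc_curve_eq
      (not_not.1 fun h => hnot (T.mem_range_of_not_countable_itineraries hhost hp h))
  refine (toENat_eq_iff_of_le_aleph0 (le_aleph0_iff_set_countable.2 hcount) hc).1 ?_
  rw [toENat_cardinalMk, ← hsum]
  exact hlevels.encard_setOf_mem_Icc_curve_eq h₀ h₁ hy

lemma mk_sec_mainCurve_eq_continuum (hsum : left y + right y + 1 = ⊤)
    (hunc : ¬ {σ | p σ = y}.Countable) : #(Sec T.mainCurve y) = 𝔠 := by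
  refine mk_eq_continuum_of_isClosed (T.isClosed_sec_mainCurve y)
    (T.curveSystem.not_countable_setOf_mem_Icc_curve_eq
      (hlevels.not_countable_itineraries hhost hunc h₀ h₁ hy ?_))
  simpa using hsum

end Cardinality

theorem indicatrix_sufficiency (f : ℝ → Cardinal)
    (hf : ∀ y ∈ Set.Icc (0:ℝ) 1, (1 ≤ f y ∧ f y ≤ ℵ₀) ∨ f y = Cardinal.continuum)
    (h1 : Cond1 f)
    (h2 : ∀ y ∈ Set.Icc (0:ℝ) 1, (f y = ℵ₀ ∨ f y = Cardinal.continuum) → CondStar f y)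
    (h3 : MeasureTheory.AnalyticSet {y | y ∈ Set.Icc (0:ℝ) 1 ∧ f y = Cardinal.continuum}) :
    ∃ F : ℝ → ℝ, ContinuousOn F (Set.Icc 0 1) ∧
      Set.MapsTo F (Set.Icc 0 1) (Set.Icc 0 1) ∧ F 0 = 0 ∧ F 1 = 1 ∧
      ∀ y ∈ Set.Icc (0:ℝ) 1, #(Sec F y) = f y := by
  obtain ⟨p, hp, hrange, hunc⟩ := exists_continuous_range_subset_insert h3 2
  have hpos (y : ℝ) (hy : y ∈ Icc 0 1) : 1 ≤ f y := (hf y hy).elim And.left fun h =>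
    h ▸ one_le_aleph0.trans aleph0_le_continuum
  have hstar (y : ℝ) (hy : y ∈ Icc 0 1) (hinf : ℵ₀ ≤ f y) : CondStar f y :=
    h2 y hy ((hf y hy).imp_left fun h => h.2.antisymm hinf)
  obtain ⟨P, hsum, h₀, h₁⟩ := exists_strandProfile_of_cond1_condStar h1 hpos hstar
  obtain ⟨T, hlevels, hhost⟩ := P.exists_excursionTree p
  refine ⟨T.mainCurve, T.curveSystem.continuousOn_curve _, T.mapsTo_mainCurve,
    (T.curveSystem.curve_zero _).trans T.lo_nil, (T.curveSystem.curve_one _).trans T.hi_nil,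
    fun y hy => ?_⟩
  rcases hf y hy with ⟨-, hle⟩ | hcont
  · refine mk_sec_mainCurve_eq_of_le_aleph0 hlevels hhost h₀ h₁ hy hp hle (hsum y hy) fun hmem => ?_
    rcases hrange hmem with rfl | hA
    exacts [absurd hy.2 (by norm_num), (hA.2 ▸ hle).not_gt aleph0_lt_continuum]
  · rw [hcont]
    refine mk_sec_mainCurve_eq_continuum hlevels hhost h₀ h₁ hy ?_ (hunc y ⟨hy, hcont⟩)
    rw [hsum y hy, hcont, toENat_eq_top.2 aleph0_le_continuum]
end
end

section
/- Let F : [0,1] → [0,1] be continuous with F(0) = 0 and F(1) = 1, let y ∈ (0,1), and suppose F⁻¹(y) is finite with exactly n ≥ 1 elements. Then there exists ε > 0 such that for all y₁ ∈ (y−ε, y) and y₂ ∈ (y, y+ε) one has |F⁻¹(y₁)| + |F⁻¹(y₂)| ≥ 2n (as extended natural numbers), and if |F⁻¹(y₁)| + |F⁻¹(y₂)| = 2n then F⁻¹(y₁) and F⁻¹(y₂) are both finite with an odd number of elements. -/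
open Set

noncomputable section

/-!
Let `c` and `d` be the first and the last of the `n` points where `F` takes the value `y`. On each
of the `n - 1` gaps between consecutive points `F - y` has constant sign, so by the intermediate
value theorem each gap contains at least two solutions of `F = z`, either for all `z` slightly below
`y` or for all `z` slightly above `y`. Before `c` the function climbs to `y` and after `d` it climbs
away from `y`, which yields one more solution on each side. If `m₁` gaps lie below `y` and `m₂` lie
above, then the two sections have at least the odd numbers `2 m₁ + 1` and `2 m₂ + 1` of elements,
and these add up to `2 n`; equality of the sums forces equality of the summands.
-/

open Filter Topology

section Indicatrix

variable {α β : Type*} {f : α → β} {s t u : Set α} {y : β}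

/-- The Banach indicatrix of `f` on `s`: the number of solutions of `f x = y` in `s`, as an extended
natural number. It is defined on arbitrary sets so that it can be estimated piecewise. -/
def indicatrix (f : α → β) (s : Set α) (y : β) : ℕ∞ := (s ∩ f ⁻¹' {y}).encard

theorem indicatrix_add_le (hst : Disjoint s t) (hs : s ⊆ u) (ht : t ⊆ u) :
    indicatrix f s y + indicatrix f t y ≤ indicatrix f u y := by
  unfold indicatrix
  rw [← encard_union_eq (hst.mono inter_subset_left inter_subset_left), ← union_inter_distrib_right]
  exact encard_le_encard (inter_subset_inter_left _ (union_subset hs ht))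

theorem indicatrix_mono (hst : s ⊆ t) : indicatrix f s y ≤ indicatrix f t y :=
  encard_le_encard (inter_subset_inter_left _ hst)

theorem one_le_indicatrix_iff : 1 ≤ indicatrix f s y ↔ y ∈ f '' s :=
  one_le_encard_iff_nonempty

theorem indicatrix_insert {x : α} (hxs : x ∉ s) (hx : f x = y) :
    indicatrix f (insert x s) y = indicatrix f s y + 1 := by
  unfold indicatrix
  rw [insert_inter_of_mem (show x ∈ f ⁻¹' {y} from hx), encard_insert_of_notMem fun h => hxs h.1]

variable [LinearOrder α] {a b : α} {n : ℕ}

theorem exists_next_solution (hab : a ≤ b) (ha : f a = y)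
    (hcard : indicatrix f (Icc a b) y = (n + 1 + 1 : ℕ)) :
    ∃ c ∈ Ioc a b, f c = y ∧ (∀ x ∈ Ioo a c, f x ≠ y) ∧
      indicatrix f (Icc c b) y = (n + 1 : ℕ) := by
  have hcard_Ioc : indicatrix f (Ioc a b) y = (n + 1 : ℕ) := by
    rw [← Ioc_insert_left hab, indicatrix_insert left_notMem_Ioc ha, Nat.cast_succ (n + 1)] at hcard
    exact ENat.add_left_injective_of_ne_top ENat.one_ne_top hcard
  have hne : (Ioc a b ∩ f ⁻¹' {y}).Nonempty :=
    nonempty_of_encard_ne_zero (by rw [← indicatrix, hcard_Ioc]; simp)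
  obtain ⟨c, ⟨hc, hcy⟩, hmin⟩ := exists_min_image _ id (finite_of_encard_eq_coe hcard_Ioc) hne
  refine ⟨c, hc, hcy, fun x hx hxy => ?_, ?_⟩
  · exact hx.2.not_ge (hmin x ⟨⟨hx.1, hx.2.le.trans hc.2⟩, hxy⟩)
  · rw [← hcard_Ioc]
    refine congrArg encard (Subset.antisymm ?_ ?_)
    · exact inter_subset_inter_left _ fun x hx => ⟨hc.1.trans_le hx.1, hx.2⟩
    · exact fun x hx => ⟨⟨hmin x hx, hx.1.2⟩, hx.2⟩

theorem exists_first_last_solution (hcard : indicatrix f (Icc a b) y = n) (hy : y ∈ f '' Icc a b) :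
    ∃ c ∈ Icc a b, ∃ d ∈ Icc c b, f c = y ∧ f d = y ∧ indicatrix f (Icc c d) y = n := by
  have hfin : (Icc a b ∩ f ⁻¹' {y}).Finite := finite_of_encard_eq_coe hcard
  obtain ⟨c, ⟨hc, hcy⟩, hmin⟩ := exists_min_image _ id hfin hy
  obtain ⟨d, ⟨hd, hdy⟩, hmax⟩ := exists_max_image _ id hfin hy
  refine ⟨c, hc, d, ⟨hmin d ⟨hd, hdy⟩, hd.2⟩, hcy, hdy, ?_⟩
  rw [← hcard]
  refine congrArg encard (Subset.antisymm ?_ ?_)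
  · exact inter_subset_inter_left _ (Icc_subset_Icc hc.1 hd.2)
  · exact fun x hx => ⟨⟨hmin x hx, hmax x hx⟩, hx.2⟩

end Indicatrix

theorem eq_and_eq_of_natCast_le_of_add_eq {k l : ℕ} {A B : ℕ∞} (hA : k ≤ A) (hB : l ≤ B)
    (h : A + B = k + l) : A = k ∧ B = l := by
  have hAB : A + B ≠ ⊤ := h ▸ ENat.natCast_ne_top (k + l)
  lift A to ℕ using fun hA_top => hAB (by rw [hA_top, top_add])
  lift B to ℕ using fun hB_top => hAB (by rw [hB_top, add_top])
  norm_cast at *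
  omega

section IntermediateValue

variable {α β : Type*} [ConditionallyCompleteLinearOrder α] [TopologicalSpace α] [OrderTopology α]
  [DenselyOrdered α] [LinearOrder β] [TopologicalSpace β] [OrderClosedTopology β]
  {f : α → β} {a b m : α} {y : β} {n : ℕ}

theorem eventually_nhdsLT_two_le_indicatrix_Ioo (hf : ContinuousOn f (Icc a b)) (hm : m ∈ Ioo a b)
    (ha : y ≤ f a) (hb : y ≤ f b) (hmy : f m < y) :
    ∀ᶠ z in 𝓝[<] y, 2 ≤ indicatrix f (Ioo a b) z := by
  filter_upwards [Ioo_mem_nhdsLT hmy] with z hz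
  have h_left : 1 ≤ indicatrix f (Ioo a m) z := one_le_indicatrix_iff.2 <|
    intermediate_value_Ioo' hm.1.le (hf.mono (Icc_subset_Icc_right hm.2.le))
      ⟨hz.1, hz.2.trans_le ha⟩
  have h_right : 1 ≤ indicatrix f (Ioo m b) z := one_le_indicatrix_iff.2 <|
    intermediate_value_Ioo hm.2.le (hf.mono (Icc_subset_Icc_left hm.1.le))
      ⟨hz.1, hz.2.trans_le hb⟩
  have h_disjoint : Disjoint (Ioo a m) (Ioo m b) :=
    disjoint_left.2 fun _ hx hx' => hx.2.not_gt hx'.1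
  calc (2 : ℕ∞) = 1 + 1 := one_add_one_eq_two.symm
    _ ≤ indicatrix f (Ioo a m) z + indicatrix f (Ioo m b) z := add_le_add h_left h_right
    _ ≤ indicatrix f (Ioo a b) z := indicatrix_add_le h_disjoint
      (Ioo_subset_Ioo_right hm.2.le) (Ioo_subset_Ioo_left hm.1.le)

theorem eventually_nhdsGT_two_le_indicatrix_Ioo (hf : ContinuousOn f (Icc a b)) (hm : m ∈ Ioo a b)
    (ha : f a ≤ y) (hb : f b ≤ y) (hmy : y < f m) :
    ∀ᶠ z in 𝓝[>] y, 2 ≤ indicatrix f (Ioo a b) z :=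
  eventually_nhdsLT_two_le_indicatrix_Ioo (β := βᵒᵈ) hf hm ha hb hmy

theorem eventually_two_le_indicatrix_of_gap (hab : a < b) (hf : ContinuousOn f (Icc a b))
    (ha : f a = y) (hb : f b = y) (hgap : ∀ x ∈ Ioo a b, f x ≠ y) :
    (∀ᶠ z in 𝓝[<] y, 2 ≤ indicatrix f (Ioo a b) z) ∨
      ∀ᶠ z in 𝓝[>] y, 2 ≤ indicatrix f (Ioo a b) z := by
  obtain ⟨m, hm⟩ := exists_between hab
  exact (hgap m hm).lt_or_gt.imp
    (eventually_nhdsLT_two_le_indicatrix_Ioo hf hm ha.ge hb.ge)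
    (eventually_nhdsGT_two_le_indicatrix_Ioo hf hm ha.le hb.le)

theorem exists_eventually_even_le_indicatrix (hab : a ≤ b) (hf : ContinuousOn f (Icc a b))
    (ha : f a = y) (hcard : indicatrix f (Icc a b) y = (n + 1 : ℕ)) :
    ∃ m₁ m₂ : ℕ, m₁ + m₂ = n ∧
      (∀ᶠ z in 𝓝[<] y, 2 * m₁ ≤ indicatrix f (Icc a b) z) ∧
      ∀ᶠ z in 𝓝[>] y, 2 * m₂ ≤ indicatrix f (Icc a b) z := by
  induction n generalizing a with
  | zero => exact ⟨0, 0, rfl, by simp, by simp⟩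
  | succ n ih =>
    obtain ⟨c, hc, hcy, hgap, hcard'⟩ := exists_next_solution hab ha hcard
    obtain ⟨m₁, m₂, rfl, h_below, h_above⟩ :=
      ih hc.2 (hf.mono (Icc_subset_Icc_left hc.1.le)) hcy hcard'
    have h_tail (z : β) : indicatrix f (Icc c b) z ≤ indicatrix f (Icc a b) z :=
      indicatrix_mono (Icc_subset_Icc_left hc.1.le)
    have h_gap_add_tail (k : ℕ) (z : β) (h_tail_z : 2 * k ≤ indicatrix f (Icc c b) z)
        (h_gap_z : 2 ≤ indicatrix f (Ioo a c) z) :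
        2 * (k + 1 : ℕ) ≤ indicatrix f (Icc a b) z := by
      have h_disjoint : Disjoint (Ioo a c) (Icc c b) :=
        disjoint_left.2 fun _ hx hx' => hx.2.not_ge hx'.1
      calc (2 * (k + 1 : ℕ) : ℕ∞) = 2 + 2 * k := by push_cast; ring
        _ ≤ indicatrix f (Ioo a c) z + indicatrix f (Icc c b) z := add_le_add h_gap_z h_tail_z
        _ ≤ indicatrix f (Icc a b) z := indicatrix_add_le h_disjoint
          (fun _ hx => ⟨hx.1.le, hx.2.le.trans hc.2⟩) (Icc_subset_Icc_left hc.1.le)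
    rcases eventually_two_le_indicatrix_of_gap hc.1 (hf.mono (Icc_subset_Icc_right hc.2))
      ha hcy hgap with h_gap | h_gap
    · refine ⟨m₁ + 1, m₂, by ring, ?_, h_above.mono fun z hz => hz.trans (h_tail z)⟩
      exact (h_below.and h_gap).mono fun z hz => h_gap_add_tail m₁ z hz.1 hz.2
    · refine ⟨m₁, m₂ + 1, by ring, h_below.mono fun z hz => hz.trans (h_tail z), ?_⟩
      exact (h_above.and h_gap).mono fun z hz => h_gap_add_tail m₂ z hz.1 hz.2

theorem exists_eventually_odd_le_indicatrix (hab : a ≤ b) (hf : ContinuousOn f (Icc a b))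
    (ha : f a < y) (hb : y < f b) (hcard : indicatrix f (Icc a b) y = n) :
    ∃ m₁ m₂ : ℕ, m₁ + m₂ + 1 = n ∧
      (∀ᶠ z in 𝓝[<] y, (2 * m₁ + 1 : ℕ) ≤ indicatrix f (Icc a b) z) ∧
      ∀ᶠ z in 𝓝[>] y, (2 * m₂ + 1 : ℕ) ≤ indicatrix f (Icc a b) z := by
  have hy : y ∈ f '' Icc a b := intermediate_value_Icc hab hf ⟨ha.le, hb.le⟩
  obtain ⟨n, rfl⟩ : ∃ k, n = k + 1 := Nat.exists_eq_add_one.2 <| Nat.one_le_cast.1 <|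
    hcard ▸ one_le_indicatrix_iff.2 hy
  obtain ⟨c, hc, d, hd, hcy, hdy, hcard'⟩ := exists_first_last_solution hcard hy
  have hcd_subset : Icc c d ⊆ Icc a b := Icc_subset_Icc hc.1 hd.2
  obtain ⟨m₁, m₂, rfl, h_below, h_above⟩ :=
    exists_eventually_even_le_indicatrix hd.1 (hf.mono hcd_subset) hcy hcard'
  refine ⟨m₁, m₂, rfl, ?_, ?_⟩
  · filter_upwards [h_below, Ioo_mem_nhdsLT ha] with z hz_even hz
    have h_before : 1 ≤ indicatrix f (Ioo a c) z := one_le_indicatrix_iff.2 <|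
      intermediate_value_Ioo hc.1 (hf.mono (Icc_subset_Icc_right hc.2)) (hcy.symm ▸ hz)
    have h_disjoint : Disjoint (Icc c d) (Ioo a c) :=
      disjoint_left.2 fun _ hx hx' => hx'.2.not_ge hx.1
    push_cast
    exact (add_le_add hz_even h_before).trans <| indicatrix_add_le h_disjoint hcd_subset
      fun _ hx => ⟨hx.1.le, hx.2.le.trans hc.2⟩
  · filter_upwards [h_above, Ioo_mem_nhdsGT hb] with z hz_even hz
    have h_after : 1 ≤ indicatrix f (Ioo d b) z := one_le_indicatrix_iff.2 <|
      intermediate_value_Ioo hd.2 (hf.mono (Icc_subset_Icc_left (hc.1.trans hd.1)))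
        (hdy.symm ▸ hz)
    have h_disjoint : Disjoint (Icc c d) (Ioo d b) :=
      disjoint_left.2 fun _ hx hx' => hx'.1.not_ge hx.2
    push_cast
    exact (add_le_add hz_even h_after).trans <| indicatrix_add_le h_disjoint hcd_subset
      fun _ hx => ⟨(hc.1.trans hd.1).trans hx.1.le, hx.2.le⟩

theorem finite_section_necessity_general (hab : a ≤ b) (hf : ContinuousOn f (Icc a b))
    (ha : f a < y) (hb : y < f b) (hcard : indicatrix f (Icc a b) y = n) :
    ∀ᶠ p in 𝓝[<] y ×ˢ 𝓝[>] y,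
      2 * n ≤ indicatrix f (Icc a b) p.1 + indicatrix f (Icc a b) p.2 ∧
      (indicatrix f (Icc a b) p.1 + indicatrix f (Icc a b) p.2 = 2 * n →
        (∃ k : ℕ, indicatrix f (Icc a b) p.1 = k ∧ Odd k) ∧
        ∃ k : ℕ, indicatrix f (Icc a b) p.2 = k ∧ Odd k) := by
  obtain ⟨m₁, m₂, rfl, h_below, h_above⟩ := exists_eventually_odd_le_indicatrix hab hf ha hb hcard
  have h_sum : (2 * (m₁ + m₂ + 1 : ℕ) : ℕ∞) = (2 * m₁ + 1 : ℕ) + (2 * m₂ + 1 : ℕ) := by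
    push_cast; ring
  filter_upwards [h_below.prod_mk h_above] with p ⟨h₁, h₂⟩
  rw [h_sum]
  refine ⟨add_le_add h₁ h₂, fun h => ?_⟩
  obtain ⟨h_eq₁, h_eq₂⟩ := eq_and_eq_of_natCast_le_of_add_eq h₁ h₂ h
  exact ⟨⟨_, h_eq₁, odd_two_mul_add_one m₁⟩, ⟨_, h_eq₂, odd_two_mul_add_one m₂⟩⟩

end IntermediateValue

theorem hasBasis_nhdsLT_prod_nhdsGT {G : Type*} [AddCommGroup G] [LinearOrder G]
    [IsOrderedAddMonoid G] [Nontrivial G] [TopologicalSpace G] [OrderTopology G] (y : G) :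
    (𝓝[<] y ×ˢ 𝓝[>] y).HasBasis (0 < ·) fun ε => Ioo (y - ε) y ×ˢ Ioo y (y + ε) := by
  refine ((nhdsLT_basis y).prod (nhdsGT_basis y)).to_hasBasis ?_ fun ε hε =>
    ⟨(y - ε, y + ε), ⟨sub_lt_self y hε, lt_add_of_pos_right y hε⟩, Subset.rfl⟩
  rintro ⟨l, u⟩ ⟨hl, hu⟩
  refine ⟨min (y - l) (u - y), lt_min (sub_pos.2 hl) (sub_pos.2 hu), prod_mono ?_ ?_⟩
  · exact Ioo_subset_Ioo_left (le_sub_comm.1 (min_le_left _ _))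
  · exact Ioo_subset_Ioo_right (le_sub_iff_add_le'.1 (min_le_right _ _))

theorem finite_section_necessity (F : ℝ → ℝ)
    (hF : ContinuousOn F (Set.Icc 0 1))
    (hmap : Set.MapsTo F (Set.Icc 0 1) (Set.Icc 0 1))
    (h0 : F 0 = 0) (h1 : F 1 = 1)
    (y : ℝ) (hy : y ∈ Set.Ioo (0:ℝ) 1)
    (n : ℕ) (hn : 1 ≤ n) (hsec : (Sec F y).encard = n) :
    ∃ ε > 0, ∀ y₁ ∈ Set.Ioo (y - ε) y, ∀ y₂ ∈ Set.Ioo y (y + ε),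
      (2 * n : ℕ∞) ≤ (Sec F y₁).encard + (Sec F y₂).encard ∧
      ((Sec F y₁).encard + (Sec F y₂).encard = (2 * n : ℕ∞) →
        (∃ k : ℕ, (Sec F y₁).encard = k ∧ Odd k) ∧
        (∃ k : ℕ, (Sec F y₂).encard = k ∧ Odd k)) := by
  obtain ⟨ε, hε, h⟩ := (hasBasis_nhdsLT_prod_nhdsGT y).eventually_iff.1 <|
    finite_section_necessity_general zero_le_one hF (h0.trans_lt hy.1) (hy.2.trans_eq h1.symm) hsec
  exact ⟨ε, hε, fun y₁ h₁ y₂ h₂ => h (mk_mem_prod h₁ h₂)⟩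
end
end

section
/- Let F : [0,1] → [0,1] be continuous with F(0) = 0 and F(1) = 1. If F⁻¹(0) is finite with exactly n elements, then there exists ε > 0 such that 1 + |F⁻¹(y₂)| ≥ 2n for all y₂ ∈ (0, ε); and if F⁻¹(1) is finite with exactly m elements, then there exists ε > 0 such that |F⁻¹(y₁)| + 1 ≥ 2m for all y₁ ∈ (1−ε, 1) (sums taken in ℕ∞). -/
open Set

noncomputable section

/-!
Let `c` be the minimum of `f` on `[a, b]`, attained at finitely many points only. Just to the right
of a minimum point `x ≠ b` the function exceeds `c`, so by the intermediate value theorem it takes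
every value slightly above `c` arbitrarily close to `x` on that side; the same holds to the left of
a minimum point `x ≠ a`. In filter terms, `𝓝[>] c ≤ map f (𝓝[>] x)` and `𝓝[>] c ≤ map f (𝓝[<] x)`.
All these one-sided neighbourhood filters are pairwise disjoint, so each of them contributes its own
solution of `f z = y`. Every minimum point is thus counted twice, except that an endpoint of
`[a, b]` is counted once; and if `f a ≠ f b`, at most one endpoint is a minimum point. The maximum
is handled by reversing the order on the codomain.
-/

open Filter Function Topology

theorem eventually_card_le_encard_inter_preimage {ι α β : Type*} [Finite ι] {f : α → β}
    {s : Set α} {k : ι → Filter α} {l : Filter β} (hk : Pairwise (Disjoint on k))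
    (hs : ∀ i, s ∈ k i) (hl : ∀ i, l ≤ map f (k i)) :
    ∀ᶠ y in l, ENat.card ι ≤ (s ∩ f ⁻¹' {y}).encard := by
  obtain ⟨V, hV, hVdisj⟩ := hk.exists_mem_filter_of_disjoint
  have hsol : ∀ᶠ y in l, ∀ i, ∃ z ∈ s ∩ V i, f z = y :=
    eventually_all.2 fun i => hl i (image_mem_map (inter_mem (hs i) (hV i)))
  filter_upwards [hsol] with y hy
  choose z hz hzy using hy
  have hz_inj : Injective z := fun i j hij =>
    hVdisj.eq (not_disjoint_iff.2 ⟨z i, (hz i).2, hij ▸ (hz j).2⟩)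
  calc ENat.card ι = (range z).encard := by
        rw [← image_univ, hz_inj.encard_image, encard_univ]
    _ ≤ (s ∩ f ⁻¹' {y}).encard :=
        encard_le_encard (range_subset_iff.2 fun i => ⟨(hz i).1, hzy i⟩)

theorem pairwise_disjoint_nhdsGT_nhdsLT {α : Type*} [TopologicalSpace α] [T2Space α] [Preorder α]
    (s t : Set α) :
    Pairwise (Disjoint on Sum.elim (fun x : s => 𝓝[>] (x : α)) (fun x : t => 𝓝[<] (x : α))) := by
  have disjoint_of_ne {x y : α} {u v : Set α} (h : x ≠ y) : Disjoint (𝓝[u] x) (𝓝[v] y) :=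
    (disjoint_nhds_nhds.2 h).mono inf_le_left inf_le_left
  have disjoint_sides (x y : α) : Disjoint (𝓝[>] x) (𝓝[<] y) := by
    obtain rfl | hne := eq_or_ne x y
    · exact disjoint_of_disjoint_of_mem (disjoint_left.2 fun _ => lt_asymm)
        self_mem_nhdsWithin self_mem_nhdsWithin
    · exact disjoint_of_ne hne
  rintro (x | x) (y | y) hne
  · exact disjoint_of_ne fun h => hne (congrArg Sum.inl (Subtype.ext h))
  · exact disjoint_sides x y
  · exact (disjoint_sides y x).symm
  · exact disjoint_of_ne fun h => hne (congrArg Sum.inr (Subtype.ext h))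

theorem eventually_lt_of_finite_inter_preimage {α β : Type*} [PartialOrder β] {f : α → β}
    {s : Set α} {c : β} {l : Filter α} (hl : l ≤ cofinite) (hs : s ∈ l) (hmin : ∀ x ∈ s, c ≤ f x)
    (hfin : (s ∩ f ⁻¹' {c}).Finite) : ∀ᶠ x in l, c < f x := by
  filter_upwards [hs, hl hfin.compl_mem_cofinite] with x hxs hx
  exact (hmin x hxs).lt_of_ne' fun h => hx ⟨hxs, h⟩

theorem two_mul_encard_le_encard_sdiff_add_encard_sdiff_add_one {α : Type*} {s : Set α} {a b : α}
    (h : a ∉ s ∨ b ∉ s) : 2 * s.encard ≤ (s \ {b}).encard + (s \ {a}).encard + 1 := by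
  have encard_le (x : α) : s.encard ≤ (s \ {x}).encard + 1 :=
    tsub_le_iff_right.1 (encard_tsub_one_le_encard_sdiff_singleton s x)
  rw [two_mul]
  rcases h with ha | hb
  · rw [sdiff_singleton_eq_self ha, add_right_comm]
    gcongr
    exact encard_le b
  · rw [sdiff_singleton_eq_self hb, add_assoc]
    gcongr
    exact encard_le a

section IntermediateValue

variable {α β : Type*} [ConditionallyCompleteLinearOrder α] [DenselyOrdered α]
  [TopologicalSpace α] [OrderTopology α] [LinearOrder β] [TopologicalSpace β]
  [OrderClosedTopology β] {f : α → β} {a b x : α} {c d : β}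

theorem nhdsGT_le_map_nhdsGT (hxb : x < b) (hf : ContinuousOn f (Icc x b))
    (hfreq : ∃ᶠ w in 𝓝[>] x, f x < f w) : 𝓝[>] (f x) ≤ map f (𝓝[>] x) := by
  intro t ht
  obtain ⟨u, hxu, hut⟩ := (mem_nhdsGT_iff_exists_Ioo_subset' hxb).1 ht
  obtain ⟨w, hfw, hxw, hw⟩ :=
    (hfreq.and_eventually (Ioo_mem_nhdsGT (lt_min hxu hxb))).exists
  obtain ⟨hwu, hwb⟩ := lt_min_iff.1 hw
  filter_upwards [Ioo_mem_nhdsGT hfw] with y hy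
  obtain ⟨z, hz, rfl⟩ :=
    intermediate_value_Ioo hxw.le (hf.mono (Icc_subset_Icc_right hwb.le)) hy
  exact hut ⟨hz.1, hz.2.trans hwu⟩

theorem nhdsGT_le_map_nhdsGT_of_isMinOn (hx : x ∈ Ico a b) (hf : ContinuousOn f (Icc a b))
    (hmin : IsMinOn f (Icc a b) x) (hfin : (Icc a b ∩ f ⁻¹' {f x}).Finite) :
    𝓝[>] (f x) ≤ map f (𝓝[>] x) := by
  have hlt : ∀ᶠ w in 𝓝[>] x, f x < f w :=
    eventually_lt_of_finite_inter_preimage ((nhdsGT_le_nhdsNE x).trans (nhdsNE_le_cofinite x))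
      (Icc_mem_nhdsGT_of_mem hx) hmin hfin
  have : (𝓝[>] x).NeBot := nhdsGT_neBot_of_exists_gt ⟨b, hx.2⟩
  exact nhdsGT_le_map_nhdsGT hx.2 (hf.mono (Icc_subset_Icc_left hx.1)) hlt.frequently

theorem nhdsGT_le_map_nhdsLT_of_isMinOn (hx : x ∈ Ioc a b) (hf : ContinuousOn f (Icc a b))
    (hmin : IsMinOn f (Icc a b) x) (hfin : (Icc a b ∩ f ⁻¹' {f x}).Finite) :
    𝓝[>] (f x) ≤ map f (𝓝[<] x) :=
  nhdsGT_le_map_nhdsGT_of_isMinOn (α := αᵒᵈ) (a := OrderDual.toDual b) (b := OrderDual.toDual a)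
    hx.symm (by rwa [Icc_toDual]) (by rwa [Icc_toDual]) (by rwa [Icc_toDual])

theorem eventually_encard_sdiff_add_encard_sdiff_le (hf : ContinuousOn f (Icc a b))
    (hmin : ∀ x ∈ Icc a b, c ≤ f x) (hfin : (Icc a b ∩ f ⁻¹' {c}).Finite) :
    ∀ᶠ y in 𝓝[>] c,
      ((Icc a b ∩ f ⁻¹' {c}) \ {b}).encard + ((Icc a b ∩ f ⁻¹' {c}) \ {a}).encard ≤
        (Icc a b ∩ f ⁻¹' {y}).encard := by
  set S := Icc a b ∩ f ⁻¹' {c}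
  have hright (x : ↥(S \ {b})) : Icc a b ∈ 𝓝[>] (x : α) ∧ 𝓝[>] c ≤ map f (𝓝[>] (x : α)) := by
    obtain ⟨x, ⟨hx, rfl⟩, hne⟩ := x
    have hxI : x ∈ Ico a b := ⟨hx.1, hx.2.lt_of_ne hne⟩
    exact ⟨Icc_mem_nhdsGT_of_mem hxI, nhdsGT_le_map_nhdsGT_of_isMinOn hxI hf hmin hfin⟩
  have hleft (x : ↥(S \ {a})) : Icc a b ∈ 𝓝[<] (x : α) ∧ 𝓝[>] c ≤ map f (𝓝[<] (x : α)) := by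
    obtain ⟨x, ⟨hx, rfl⟩, hne⟩ := x
    have hxI : x ∈ Ioc a b := ⟨hx.1.lt_of_ne' hne, hx.2⟩
    exact ⟨Icc_mem_nhdsLT_of_mem hxI, nhdsGT_le_map_nhdsLT_of_isMinOn hxI hf hmin hfin⟩
  have : Finite S := hfin
  simpa only [ENat.card_sum, ENat.card_coe_set_eq] using eventually_card_le_encard_inter_preimage
    (pairwise_disjoint_nhdsGT_nhdsLT (S \ {b}) (S \ {a}))
    (Sum.forall.2 ⟨fun x => (hright x).1, fun x => (hleft x).1⟩)
    (Sum.forall.2 ⟨fun x => (hright x).2, fun x => (hleft x).2⟩)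

theorem eventually_two_mul_encard_le_nhdsGT (hf : ContinuousOn f (Icc a b)) (hab : f a ≠ f b)
    (hmin : ∀ x ∈ Icc a b, c ≤ f x) (hfin : (Icc a b ∩ f ⁻¹' {c}).Finite) :
    ∀ᶠ y in 𝓝[>] c, 2 * (Icc a b ∩ f ⁻¹' {c}).encard ≤ (Icc a b ∩ f ⁻¹' {y}).encard + 1 := by
  have hendpoint : a ∉ Icc a b ∩ f ⁻¹' {c} ∨ b ∉ Icc a b ∩ f ⁻¹' {c} := by
    by_contra! ⟨ha, hb⟩
    exact hab (ha.2.trans hb.2.symm)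
  filter_upwards [eventually_encard_sdiff_add_encard_sdiff_le hf hmin hfin] with y hy
  exact (two_mul_encard_le_encard_sdiff_add_encard_sdiff_add_one hendpoint).trans (by gcongr)

theorem eventually_two_mul_encard_le_nhdsLT (hf : ContinuousOn f (Icc a b)) (hab : f a ≠ f b)
    (hmax : ∀ x ∈ Icc a b, f x ≤ d) (hfin : (Icc a b ∩ f ⁻¹' {d}).Finite) :
    ∀ᶠ y in 𝓝[<] d, 2 * (Icc a b ∩ f ⁻¹' {d}).encard ≤ (Icc a b ∩ f ⁻¹' {y}).encard + 1 :=
  eventually_two_mul_encard_le_nhdsGT (β := βᵒᵈ) hf hab hmax hfin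

theorem finite_section_necessity_endpoints_general (hf : ContinuousOn f (Icc a b))
    (hmap : MapsTo f (Icc a b) (Icc c d)) (hab : f a ≠ f b) :
    ((Icc a b ∩ f ⁻¹' {c}).Finite → ∀ᶠ y in 𝓝[>] c,
      2 * (Icc a b ∩ f ⁻¹' {c}).encard ≤ (Icc a b ∩ f ⁻¹' {y}).encard + 1) ∧
    ((Icc a b ∩ f ⁻¹' {d}).Finite → ∀ᶠ y in 𝓝[<] d,
      2 * (Icc a b ∩ f ⁻¹' {d}).encard ≤ (Icc a b ∩ f ⁻¹' {y}).encard + 1) :=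
  ⟨eventually_two_mul_encard_le_nhdsGT hf hab fun _ hx => (hmap hx).1,
    eventually_two_mul_encard_le_nhdsLT hf hab fun _ hx => (hmap hx).2⟩

end IntermediateValue

theorem sec_eq_inter_preimage (F : ℝ → ℝ) (y : ℝ) : Sec F y = Icc 0 1 ∩ F ⁻¹' {y} := rfl

theorem finite_section_necessity_endpoints (F : ℝ → ℝ)
    (hF : ContinuousOn F (Set.Icc 0 1))
    (hmap : Set.MapsTo F (Set.Icc 0 1) (Set.Icc 0 1))
    (h0 : F 0 = 0) (h1 : F 1 = 1) :
    (∀ n : ℕ, (Sec F 0).encard = n →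
      ∃ ε > 0, ∀ y₂ ∈ Set.Ioo (0:ℝ) ε, (2 * n : ℕ∞) ≤ 1 + (Sec F y₂).encard) ∧
    (∀ m : ℕ, (Sec F 1).encard = m →
      ∃ ε > 0, ∀ y₁ ∈ Set.Ioo (1 - ε) (1:ℝ), (2 * m : ℕ∞) ≤ (Sec F y₁).encard + 1) := by
  obtain ⟨hbottom, htop⟩ :=
    finite_section_necessity_endpoints_general hF hmap (by simp [h0, h1])
  simp only [← sec_eq_inter_preimage] at hbottom htop
  refine ⟨fun n hn => ?_, fun m hm => ?_⟩
  · obtain ⟨ε, hε, h⟩ :=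
      mem_nhdsGT_iff_exists_Ioo_subset.1 (hbottom (finite_of_encard_eq_coe hn))
    exact ⟨ε, hε, fun y hy => by simpa only [hn, add_comm, mem_ofPred_eq] using h hy⟩
  · obtain ⟨u, hu, h⟩ :=
      mem_nhdsLT_iff_exists_Ioo_subset.1 (htop (finite_of_encard_eq_coe hm))
    refine ⟨1 - u, sub_pos.2 hu, fun y hy => ?_⟩
    rw [sub_sub_cancel] at hy
    simpa only [hm, mem_ofPred_eq] using h hy
end
end

section
/- Let F : [0,1] → [0,1] be continuous, let y ∈ (0,1), suppose F⁻¹(y) is infinite, and suppose there is no nondegenerate interval [a,b] ⊆ [0,1] with a < b on which F is constantly equal to y. Then for every n ∈ ℕ there exists ε > 0 such that |F⁻¹(y₁)| + |F⁻¹(y₂)| ≥ n for all y₁ ∈ (y−ε, y) and y₂ ∈ (y, y+ε) (sums taken in ℕ∞). -/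
open Set

noncomputable section

/-!
Choose `n + 1` points of the fibre over `y`. On each of the `n` gaps between consecutive ones, `F`
takes some value other than `y`, hence, by the intermediate value theorem, every value close enough
to `y` on one of the two sides of `y`. So if `y₁ < y < y₂` are close enough to `y`, each gap
contains a point of the fibre over `y₁` or over `y₂`, and the gaps are disjoint.
-/

open Filter Topology

theorem natCast_le_encard_of_forall_nonempty_inter_Ioo {α : Type*} [Preorder α] {n : ℕ}
    {x : Fin (n + 1) → α} (hx : Monotone x) {A : Set α}
    (hA : ∀ i : Fin n, (A ∩ Ioo (x i.castSucc) (x i.succ)).Nonempty) :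
    (n : ℕ∞) ≤ A.encard := by
  choose w hwA hw using hA
  have hw_mono : StrictMono w := fun i j hij ↦
    calc w i < x i.succ := (hw i).2
      _ ≤ x j.castSucc := hx (Fin.succ_le_castSucc_iff.2 hij)
      _ < w j := (hw j).1
  calc (n : ℕ∞) = ENat.card (Fin n) := by simp
    _ ≤ (range w).encard := hw_mono.injective.encard_range
    _ ≤ A.encard := encard_le_encard (range_subset_iff.2 hwA)

section OrderedGroup

variable {α : Type*} [AddCommGroup α] [LinearOrder α] [IsOrderedAddMonoid α] [Nontrivial α]
  [TopologicalSpace α] [OrderTopology α]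

theorem nhdsLT_basis_Ioo_sub (y : α) : (𝓝[<] y).HasBasis (0 < ·) fun ε ↦ Ioo (y - ε) y := by
  simpa [Function.comp_def] using (nhdsLT_basis y).comp_equiv (Equiv.subLeft y)

theorem nhdsGT_basis_Ioo_add (y : α) : (𝓝[>] y).HasBasis (0 < ·) fun ε ↦ Ioo y (y + ε) := by
  simpa [Function.comp_def] using (nhdsGT_basis y).comp_equiv (Equiv.addLeft y)

theorem nhdsLT_prod_nhdsGT_basis_Ioo (y : α) :
    (𝓝[<] y ×ˢ 𝓝[>] y).HasBasis (0 < ·) fun ε ↦ Ioo (y - ε) y ×ˢ Ioo y (y + ε) :=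
  (nhdsLT_basis_Ioo_sub y).prod_same_index_mono (nhdsGT_basis_Ioo_add y)
    (fun _ _ _ _ h ↦ Ioo_subset_Ioo_left (sub_le_sub_left h y))
    (fun _ _ _ _ h ↦ Ioo_subset_Ioo_right (by gcongr))

theorem eventually_nhdsLT_prod_nhdsGT_iff {y : α} {P : α × α → Prop} :
    (∀ᶠ p in 𝓝[<] y ×ˢ 𝓝[>] y, P p) ↔
      ∃ ε > 0, ∀ y₁ ∈ Ioo (y - ε) y, ∀ y₂ ∈ Ioo y (y + ε), P (y₁, y₂) := by
  simp only [(nhdsLT_prod_nhdsGT_basis_Ioo y).eventually_iff, forall_prod_set, gt_iff_lt]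

end OrderedGroup

section Fibers

variable {α β : Type*} [ConditionallyCompleteLinearOrder α] [DenselyOrdered α]
  [TopologicalSpace α] [OrderTopology α] [LinearOrder β] [TopologicalSpace β]
  [OrderClosedTopology β] {f : α → β}

theorem eventually_nonempty_preimage_pair_inter_Ioo {a b c : α} (hf : ContinuousOn f (Icc a b))
    (hc : c ∈ Icc a b) (hne : f c ≠ f a) :
    ∀ᶠ p in 𝓝[<] (f a) ×ˢ 𝓝[>] (f a), (f ⁻¹' {p.1, p.2} ∩ Ioo a b).Nonempty := by
  have hfc : ContinuousOn f (Icc a c) := hf.mono (Icc_subset_Icc_right hc.2)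
  have hsub : Ioo a c ⊆ Ioo a b := Ioo_subset_Ioo_right hc.2
  rcases hne.lt_or_gt with hlt | hgt
  · filter_upwards [tendsto_fst (Ioo_mem_nhdsLT hlt)] with p hp
    obtain ⟨w, hw, hwp⟩ := intermediate_value_Ioo' hc.1 hfc hp
    exact ⟨w, .inl hwp, hsub hw⟩
  · filter_upwards [tendsto_snd (Ioo_mem_nhdsGT hgt)] with p hp
    obtain ⟨w, hw, hwp⟩ := intermediate_value_Ioo hc.1 hfc hp
    exact ⟨w, .inr hwp, hsub hw⟩

theorem infinite_section_necessity_general {s : Set α} (hs : s.OrdConnected)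
    (hf : ContinuousOn f s) {y : β} (hinf : (s ∩ f ⁻¹' {y}).Infinite)
    (hne : ∀ a ∈ s, ∀ b ∈ s, a < b → ∃ c ∈ Icc a b, f c ≠ y) (n : ℕ) :
    ∀ᶠ p in 𝓝[<] y ×ˢ 𝓝[>] y,
      (n : ℕ∞) ≤ (s ∩ f ⁻¹' {p.1}).encard + (s ∩ f ⁻¹' {p.2}).encard := by
  obtain ⟨t, hts, htn⟩ := hinf.exists_subset_card_eq (n + 1)
  let x := t.orderEmbOfFin htn
  have hx (i) : x i ∈ s ∩ f ⁻¹' {y} := hts (t.orderEmbOfFin_mem htn i)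
  have hsub (i : Fin n) : Icc (x i.castSucc) (x i.succ) ⊆ s := hs.out (hx _).1 (hx _).1
  have hgap (i : Fin n) : ∀ᶠ p in 𝓝[<] y ×ˢ 𝓝[>] y,
      (f ⁻¹' {p.1, p.2} ∩ Ioo (x i.castSucc) (x i.succ)).Nonempty := by
    obtain ⟨c, hc, hcy⟩ := hne _ (hx _).1 _ (hx _).1 (x.strictMono i.castSucc_lt_succ)
    have hxy : f (x i.castSucc) = y := (hx _).2
    rw [← hxy] at hcy ⊢
    exact eventually_nonempty_preimage_pair_inter_Ioo (hf.mono (hsub i)) hc hcy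
  filter_upwards [eventually_all.2 hgap] with p hp
  calc (n : ℕ∞) ≤ (s ∩ f ⁻¹' {p.1, p.2}).encard :=
        natCast_le_encard_of_forall_nonempty_inter_Ioo x.monotone fun i ↦
          (hp i).mono fun _ hw ↦ ⟨⟨hsub i (Ioo_subset_Icc_self hw.2), hw.1⟩, hw.2⟩
    _ = (s ∩ f ⁻¹' {p.1} ∪ s ∩ f ⁻¹' {p.2}).encard := by
        rw [← inter_union_distrib_left, ← preimage_union, singleton_union]
    _ ≤ (s ∩ f ⁻¹' {p.1}).encard + (s ∩ f ⁻¹' {p.2}).encard := encard_union_le _ _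

end Fibers

theorem infinite_section_necessity (F : ℝ → ℝ)
    (hF : ContinuousOn F (Set.Icc 0 1))
    (hmap : Set.MapsTo F (Set.Icc 0 1) (Set.Icc 0 1))
    (y : ℝ) (hy : y ∈ Set.Ioo (0:ℝ) 1)
    (hsec : (Sec F y).Infinite)
    (hnc : ¬ ∃ a b : ℝ, 0 ≤ a ∧ a < b ∧ b ≤ 1 ∧ ∀ x ∈ Set.Icc a b, F x = y) :
    ∀ n : ℕ, ∃ ε > 0, ∀ y₁ ∈ Set.Ioo (y - ε) y, ∀ y₂ ∈ Set.Ioo y (y + ε),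
      (n : ℕ∞) ≤ (Sec F y₁).encard + (Sec F y₂).encard := by
  push Not at hnc
  exact fun n ↦ eventually_nhdsLT_prod_nhdsGT_iff.1 <| infinite_section_necessity_general
    ordConnected_Icc hF hsec (fun a ha b hb hab ↦ hnc a b ha.1 hab hb.2) n
end
end

section
/- Let F : [0,1] → [0,1] be continuous. If F⁻¹(0) is infinite and there is no nondegenerate interval [a,b] ⊆ [0,1] with a < b on which F is constantly 0, then for every n ∈ ℕ there exists ε > 0 such that 1 + |F⁻¹(y₂)| ≥ n for all y₂ ∈ (0, ε). Dually, if F⁻¹(1) is infinite and there is no nondegenerate interval on which F is constantly 1, then for every n ∈ ℕ there exists ε > 0 such that |F⁻¹(y₁)| + 1 ≥ n for all y₁ ∈ (1−ε, 1) (sums taken in ℕ∞). -/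
open Set

noncomputable section

/-!
Choose `n + 1` points `e₀ < ⋯ < eₙ` at which `F` attains its minimum `c` on `s`. Since `F` is not
constantly `c` on `[eᵢ, eᵢ₊₁]`, it exceeds `c` somewhere there, so by the intermediate value theorem
it takes every value slightly above `c` inside `(eᵢ, eᵢ₊₁)`. These `n` intervals are disjoint. The
case of a maximum is the same statement for the order dual of the codomain.
-/

open Filter Topology

theorem le_encard_of_forall_exists_mem_Ioo {α : Type*} [Preorder α] {n : ℕ} {e : Fin (n + 1) → α}
    (he : Monotone e) {S : Set α} (hS : ∀ i : Fin n, ∃ x ∈ Ioo (e i.castSucc) (e i.succ), x ∈ S) :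
    (n : ℕ∞) ≤ S.encard := by
  choose x hxe hxS using hS
  have hx : StrictMono x := fun i j hij ↦
    calc x i < e i.succ := (hxe i).2
      _ ≤ e j.castSucc := he (Fin.succ_le_castSucc_iff.2 hij)
      _ < x j := (hxe j).1
  calc (n : ℕ∞) = ENat.card (Fin n) := by simp
    _ ≤ (range x).encard := hx.injective.encard_range
    _ ≤ S.encard := encard_le_encard (range_subset_iff.2 hxS)

section IntermediateValue

variable {α β : Type*} [ConditionallyCompleteLinearOrder α] [TopologicalSpace α] [OrderTopology α]
  [DenselyOrdered α] [LinearOrder β] [TopologicalSpace β] [OrderClosedTopology β]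
  {F : α → β} {s : Set α} {c : β}

theorem eventually_nhdsGT_exists_mem_Ioo_eq {a b m : α} (hF : ContinuousOn F (Icc a b))
    (hm : m ∈ Icc a b) (ham : F a < F m) : ∀ᶠ y in 𝓝[>] F a, ∃ x ∈ Ioo a b, F x = y := by
  filter_upwards [Ioo_mem_nhdsGT ham] with y hy
  obtain ⟨x, hx, hxy⟩ :=
    intermediate_value_Ioo hm.1 (hF.mono (Icc_subset_Icc_right hm.2)) hy
  exact ⟨x, Ioo_subset_Ioo_right hm.2 hx, hxy⟩

theorem eventually_nhdsGT_le_encard_inter_preimage (hs : s.OrdConnected) (hF : ContinuousOn F s)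
    (hmin : ∀ x ∈ s, c ≤ F x) (hinf : (s ∩ F ⁻¹' {c}).Infinite)
    (hno : ¬∃ a b, a < b ∧ Icc a b ⊆ s ∩ F ⁻¹' {c}) (n : ℕ) :
    ∀ᶠ y in 𝓝[>] c, (n : ℕ∞) ≤ (s ∩ F ⁻¹' {y}).encard := by
  obtain ⟨t, ht, htcard⟩ := hinf.exists_subset_card_eq (n + 1)
  let e := t.orderEmbOfFin htcard
  have he (i) : e i ∈ s ∩ F ⁻¹' {c} := ht (t.orderEmbOfFin_mem htcard i)
  have hsub (i : Fin n) : Icc (e i.castSucc) (e i.succ) ⊆ s := hs.out (he _).1 (he _).1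
  have hgap (i : Fin n) : ∀ᶠ y in 𝓝[>] c, ∃ x ∈ Ioo (e i.castSucc) (e i.succ), F x = y := by
    obtain ⟨m, hm, hmc⟩ : ∃ m ∈ Icc (e i.castSucc) (e i.succ), m ∉ s ∩ F ⁻¹' {c} :=
      not_subset.1 fun h ↦ hno ⟨_, _, e.strictMono i.castSucc_lt_succ, h⟩
    have hlt : c < F m := (hmin m (hsub i hm)).lt_of_ne' fun h ↦ hmc ⟨hsub i hm, h⟩
    have hec : F (e i.castSucc) = c := (he _).2
    rw [← hec] at hlt ⊢
    exact eventually_nhdsGT_exists_mem_Ioo_eq (hF.mono (hsub i)) hm hlt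
  filter_upwards [eventually_all.2 hgap] with y hy
  refine le_encard_of_forall_exists_mem_Ioo e.monotone fun i ↦ ?_
  obtain ⟨x, hx, hxy⟩ := hy i
  exact ⟨x, hx, hsub i (Ioo_subset_Icc_self hx), hxy⟩

theorem infinite_section_necessity_endpoints_general (hs : s.OrdConnected) (hF : ContinuousOn F s)
    (hinf : (s ∩ F ⁻¹' {c}).Infinite) (hno : ¬∃ a b, a < b ∧ Icc a b ⊆ s ∩ F ⁻¹' {c}) (n : ℕ) :
    ((∀ x ∈ s, c ≤ F x) → ∀ᶠ y in 𝓝[>] c, (n : ℕ∞) ≤ (s ∩ F ⁻¹' {y}).encard) ∧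
    ((∀ x ∈ s, F x ≤ c) → ∀ᶠ y in 𝓝[<] c, (n : ℕ∞) ≤ (s ∩ F ⁻¹' {y}).encard) :=
  ⟨fun hmin ↦ eventually_nhdsGT_le_encard_inter_preimage hs hF hmin hinf hno n,
    fun hmax ↦ eventually_nhdsGT_le_encard_inter_preimage (β := βᵒᵈ) hs hF hmax hinf hno n⟩

end IntermediateValue

theorem eventually_nhdsLT_iff_exists_forall_mem_Ioo_sub {α : Type*} [AddCommGroup α]
    [LinearOrder α] [IsOrderedAddMonoid α] [NoMinOrder α] [TopologicalSpace α] [OrderTopology α]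
    {a : α} {p : α → Prop} :
    (∀ᶠ y in 𝓝[<] a, p y) ↔ ∃ ε > 0, ∀ y ∈ Ioo (a - ε) a, p y := by
  refine mem_nhdsLT_iff_exists_Ioo_subset.trans ⟨fun ⟨l, hl, h⟩ ↦ ?_, fun ⟨ε, hε, h⟩ ↦ ?_⟩
  · exact ⟨a - l, sub_pos.2 hl, by rwa [sub_sub_cancel]⟩
  · exact ⟨a - ε, sub_lt_self a hε, h⟩

theorem exists_Icc_subset_sec_iff {F : ℝ → ℝ} {c : ℝ} :
    (∃ a b, a < b ∧ Icc a b ⊆ Sec F c) ↔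
      ∃ a b : ℝ, 0 ≤ a ∧ a < b ∧ b ≤ 1 ∧ ∀ x ∈ Icc a b, F x = c := by
  refine exists₂_congr fun a b ↦ ⟨fun ⟨hab, h⟩ ↦ ?_, fun ⟨ha, hab, hb, h⟩ ↦ ?_⟩
  · exact ⟨(h (left_mem_Icc.2 hab.le)).1.1, hab, (h (right_mem_Icc.2 hab.le)).1.2,
      fun x hx ↦ (h hx).2⟩
  · exact ⟨hab, fun x hx ↦ ⟨Icc_subset_Icc ha hb hx, h x hx⟩⟩

theorem infinite_section_necessity_endpoints (F : ℝ → ℝ)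
    (hF : ContinuousOn F (Set.Icc 0 1))
    (hmap : Set.MapsTo F (Set.Icc 0 1) (Set.Icc 0 1)) :
    ((Sec F 0).Infinite →
      (¬ ∃ a b : ℝ, 0 ≤ a ∧ a < b ∧ b ≤ 1 ∧ ∀ x ∈ Set.Icc a b, F x = 0) →
      ∀ n : ℕ, ∃ ε > 0, ∀ y₂ ∈ Set.Ioo (0:ℝ) ε,
        (n : ℕ∞) ≤ 1 + (Sec F y₂).encard) ∧
    ((Sec F 1).Infinite →
      (¬ ∃ a b : ℝ, 0 ≤ a ∧ a < b ∧ b ≤ 1 ∧ ∀ x ∈ Set.Icc a b, F x = 1) →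
      ∀ n : ℕ, ∃ ε > 0, ∀ y₁ ∈ Set.Ioo (1 - ε) (1:ℝ),
        (n : ℕ∞) ≤ (Sec F y₁).encard + 1) := by
  simp only [← exists_Icc_subset_sec_iff, ← eventually_nhdsLT_iff_exists_forall_mem_Ioo_sub]
  have hgeneral {c : ℝ} := infinite_section_necessity_endpoints_general (c := c) ordConnected_Icc hF
  exact ⟨fun hinf hno n ↦ mem_nhdsGT_iff_exists_Ioo_subset.1 <|
      ((hgeneral hinf hno n).1 fun x hx ↦ (hmap hx).1).mono fun y hy ↦ hy.trans le_add_self,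
    fun hinf hno n ↦
      ((hgeneral hinf hno n).2 fun x hx ↦ (hmap hx).2).mono fun y hy ↦ hy.trans le_self_add⟩
end
end

section
/- Let F : [0,1] → ℝ be continuous. Then the set {y ∈ ℝ : F⁻¹(y) is uncountable} is an analytic subset of ℝ. -/
open Set

noncomputable section

/-!
By the Cantor–Bendixson theorem, an uncountable closed subset of a Polish space contains a nonempty
perfect set, hence a sequence, dense in that set, whose range has no isolated points. Conversely,
the closure of such a range is a nonempty perfect set, so it is uncountable. Having a range without
isolated points is a Borel condition on a sequence, and for continuous `f` lying in a single fiber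
of `f` is a closed one. Hence the set of points with uncountable fiber is the image of a Borel set
of sequences under the continuous map `x ↦ f (x 0)`.
-/

section Preperfect

variable {X : Type*} [TopologicalSpace X]

theorem preperfect_range_iff_of_isTopologicalBasis {ι : Type*} {B : Set (Set X)}
    (hB : TopologicalSpace.IsTopologicalBasis B) {x : ι → X} :
    Preperfect (range x) ↔ ∀ i, ∀ U ∈ B, x i ∈ U → ∃ j, x j ∈ U ∧ x j ≠ x i := by
  simp only [Preperfect, forall_mem_range, accPt_iff_frequently,
    hB.nhds_hasBasis.frequently_iff, and_imp]
  refine forall₄_congr fun i U _ _ => ?_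
  constructor
  · rintro ⟨_, hjU, hne, j, rfl⟩
    exact ⟨j, hjU, hne⟩
  · rintro ⟨j, hjU, hne⟩
    exact ⟨x j, hjU, hne, mem_range_self j⟩

theorem measurableSet_setOf_preperfect_range [MeasurableSpace X] [OpensMeasurableSpace X]
    [SecondCountableTopology X] [T2Space X] {ι : Type*} [Countable ι] :
    MeasurableSet {x : ι → X | Preperfect (range x)} := by
  simp only [preperfect_range_iff_of_isTopologicalBasis
    (TopologicalSpace.isBasis_countableBasis X)]
  have measurableSet_mem (i : ι) {U : Set X} (hU : U ∈ TopologicalSpace.countableBasis X) :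
      MeasurableSet {x : ι → X | x i ∈ U} :=
    measurable_pi_apply i (TopologicalSpace.isOpen_of_mem_countableBasis hU).measurableSet
  have measurableSet_ne (i j : ι) : MeasurableSet {x : ι → X | x j ≠ x i} :=
    (measurableSet_eq_fun (measurable_pi_apply j) (measurable_pi_apply i)).compl
  simp only [ofPred_forall]
  refine .iInter fun i => .biInter (TopologicalSpace.countable_countableBasis X) fun U hU =>
    (measurableSet_mem i hU).imp ?_
  rw [ofPred_exists]
  exact .iUnion fun j => (measurableSet_mem j hU).inter (measurableSet_ne i j)

theorem exists_seq_closure_range_eq {C : Set X} [TopologicalSpace.SeparableSpace C]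
    (hC : IsClosed C) (hne : C.Nonempty) : ∃ x : ℕ → X, closure (range x) = C := by
  have := hne.to_subtype
  obtain ⟨u, hu⟩ := TopologicalSpace.exists_dense_seq C
  refine ⟨Subtype.val ∘ u, ?_⟩
  rw [range_comp, hC.isClosedEmbedding_subtypeVal.closure_image_eq, hu.closure_range, image_univ,
    Subtype.range_coe]

theorem not_countable_of_perfect [TopologicalSpace.IsCompletelyMetrizableSpace X] {C : Set X}
    (hC : Perfect C) (hne : C.Nonempty) : ¬ C.Countable := by
  let := TopologicalSpace.upgradeIsCompletelyMetrizable X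
  obtain ⟨f, hfC, -, hf⟩ := hC.exists_nat_bool_injection hne
  have : Uncountable (ℕ → Bool) := by
    rw [← Cardinal.aleph0_lt_mk_iff]
    simpa using Cardinal.aleph0_lt_continuum
  intro hcount
  have : Countable (range f) := (hcount.mono hfC).to_subtype
  exact not_countable (rangeFactorization_injective.2 hf).countable

theorem not_countable_iff_exists_preperfect_range_subset [PolishSpace X] {C : Set X}
    (hC : IsClosed C) :
    ¬ C.Countable ↔ ∃ x : ℕ → X, Preperfect (range x) ∧ range x ⊆ C := by
  constructor
  · intro hunc
    obtain ⟨D, hD, hne, hDC⟩ := exists_perfect_nonempty_of_isClosed_of_not_countable hC hunc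
    obtain ⟨x, rfl⟩ := exists_seq_closure_range_eq hD.closed hne
    exact ⟨x, preperfect_iff_perfect_closure.2 hD, subset_closure.trans hDC⟩
  · rintro ⟨x, hx, hxC⟩ hcount
    exact not_countable_of_perfect hx.perfect_closure (range_nonempty x).closure
      (hcount.mono (closure_minimal hxC hC))

end Preperfect

theorem countable_sec_iff {F : ℝ → ℝ} {y : ℝ} :
    (Sec F y).Countable ↔ ((Icc (0 : ℝ) 1).domRestrict F ⁻¹' {y}).Countable := by
  have sec_eq_image : Sec F y = Subtype.val '' ((Icc (0 : ℝ) 1).domRestrict F ⁻¹' {y}) := by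
    ext x
    simp [Sec, and_comm]
  rw [sec_eq_image]
  exact ⟨countable_of_injective_of_countable_image Subtype.val_injective.injOn, fun h => h.image _⟩

theorem uncountable_sections_analytic_general {X Y : Type*} [TopologicalSpace X] [PolishSpace X]
    [TopologicalSpace Y] [T2Space Y] {f : X → Y} (hf : Continuous f) :
    MeasureTheory.AnalyticSet {y : Y | ¬ (f ⁻¹' {y}).Countable} := by
  borelize X
  let S : Set (ℕ → X) := {x | Preperfect (range x)} ∩ {x | ∀ n, f (x n) = f (x 0)}
  have isClosed_single_fiber : IsClosed {x : ℕ → X | ∀ n, f (x n) = f (x 0)} := by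
    simp only [ofPred_forall]
    exact isClosed_iInter fun n => isClosed_eq (by fun_prop) (by fun_prop)
  have measurableSet_S : MeasurableSet S :=
    measurableSet_setOf_preperfect_range.inter isClosed_single_fiber.measurableSet
  have image_S : (fun x : ℕ → X => f (x 0)) '' S = {y : Y | ¬ (f ⁻¹' {y}).Countable} := by
    ext y
    rw [mem_ofPred_eq,
      not_countable_iff_exists_preperfect_range_subset (isClosed_singleton.preimage hf)]
    constructor
    · rintro ⟨x, ⟨hx, hfx⟩, rfl⟩
      exact ⟨x, hx, range_subset_iff.2 hfx⟩
    · rintro ⟨x, hx, hxy⟩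
      rw [range_subset_iff] at hxy
      exact ⟨x, ⟨hx, fun n => (hxy n).trans (hxy 0).symm⟩, hxy 0⟩
  exact image_S ▸ measurableSet_S.analyticSet.image_of_continuous (by fun_prop)

/-- Sierpiński–Mazurkiewicz: the set of values with uncountable section is analytic. -/
theorem uncountable_sections_analytic (F : ℝ → ℝ)
    (hF : ContinuousOn F (Set.Icc 0 1)) :
    MeasureTheory.AnalyticSet {y : ℝ | ¬ (Sec F y).Countable} := by
  simpa only [countable_sec_iff] using uncountable_sections_analytic_general hF.domRestrict
end
end
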